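/- Let k ≥ 3 be an integer, A ≥ 1, and ε > 0. There is a constant C = C(A,k,ε) such that: if 1 ≤ a < b ≤ 2a, f : [a,b] → ℝ has continuous derivatives up to order k, and λ_k > 0 satisfies λ_k ≤ |f^{(k)}(x)| ≤ A λ_k for all x ∈ [a,b], then |Σ_{a < n ≤ b} e(f(n))| ≤ C · a^{1+ε} ( λ_k^{1/(k(k−1))} + a^{−1/(k(k−1))} + a^{−2/(k(k−1))} λ_k^{−2/(k²(k−1))} ), where n runs over integers. -/

import Mathlib

/-- `e(x) = exp(2πix)`. -/
noncomputable def eexp (x : ℝ) : ℂ := Complex.exp (2 * Real.pi * Complex.I * x)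

section
namespace HB
open Finset

/-- the residue class of `x` modulo `m` inside `T` -/
def cls (m : ℕ) (T : Finset ℤ) (x : ℤ) : Finset ℤ := T.filter (fun y => (m : ℤ) ∣ y - x)

/-- the partition of `T` into residue classes modulo `m` -/
def parts (m : ℕ) (T : Finset ℤ) : Finset (Finset ℤ) := T.image (cls m T)

lemma mem_cls {m : ℕ} {T : Finset ℤ} {x y : ℤ} : y ∈ cls m T x ↔ y ∈ T ∧ (m : ℤ) ∣ y - x := by
  simp [cls]

lemma mem_parts {m : ℕ} {T U : Finset ℤ} : U ∈ parts m T ↔ ∃ x ∈ T, cls m T x = U := by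
  simp [parts]

lemma parts_subset {m : ℕ} {T U : Finset ℤ} (h : U ∈ parts m T) : U ⊆ T := by
  obtain ⟨x, _, rfl⟩ := mem_parts.1 h
  exact Finset.filter_subset _ _

lemma parts_cong {m : ℕ} {T U : Finset ℤ} (h : U ∈ parts m T) {x y : ℤ} (hx : x ∈ U) (hy : y ∈ U) :
    (m : ℤ) ∣ y - x := by
  obtain ⟨z, _, rfl⟩ := mem_parts.1 h
  have h1 := (mem_cls.1 hx).2
  have h2 := (mem_cls.1 hy).2
  have := dvd_sub h2 h1
  simpa using this

lemma cls_eq {m : ℕ} {T : Finset ℤ} {x y : ℤ} (h : (m : ℤ) ∣ y - x) : cls m T x = cls m T y := by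
  ext z
  rw [mem_cls, mem_cls]
  refine and_congr_right fun _ => ?_
  constructor
  · intro hz
    have := dvd_sub hz h
    simpa using this
  · intro hz
    have := dvd_add hz h
    simpa using this

lemma mem_cls_self {m : ℕ} {T : Finset ℤ} {x : ℤ} (hx : x ∈ T) : x ∈ cls m T x := by
  simp [mem_cls, hx]

lemma cls_mem_parts {m : ℕ} {T : Finset ℤ} {x : ℤ} (hx : x ∈ T) : cls m T x ∈ parts m T :=
  mem_parts.2 ⟨x, hx, rfl⟩

lemma eq_cls_of_mem {m : ℕ} {T U : Finset ℤ} (h : U ∈ parts m T) {x : ℤ} (hx : x ∈ U) :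
    U = cls m T x := by
  obtain ⟨z, _, rfl⟩ := mem_parts.1 h
  exact cls_eq (mem_cls.1 hx).2

lemma parts_disj (m : ℕ) (T : Finset ℤ) :
    (parts m T : Set (Finset ℤ)).PairwiseDisjoint id := by
  intro U hU V hV hne
  rw [Function.onFun, Finset.disjoint_left]
  intro x hx hx'
  exact hne ((eq_cls_of_mem hU hx).trans (eq_cls_of_mem hV hx').symm)

lemma parts_biUnion (m : ℕ) (T : Finset ℤ) : (parts m T).biUnion id = T := by
  ext x
  simp only [Finset.mem_biUnion, id]
  constructor
  · rintro ⟨U, hU, hx⟩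
    exact parts_subset hU hx
  · intro hx
    exact ⟨_, cls_mem_parts hx, mem_cls_self hx⟩

lemma sum_parts {β : Type*} [AddCommMonoid β] (m : ℕ) (T : Finset ℤ) (f : ℤ → β) :
    ∑ U ∈ parts m T, ∑ x ∈ U, f x = ∑ x ∈ T, f x := by
  conv_rhs => rw [← parts_biUnion m T]
  rw [Finset.sum_biUnion (parts_disj m T)]
  rfl

lemma cls_cls {m m' : ℕ} (h : m ∣ m') {T : Finset ℤ} {x z : ℤ} (hx : (m : ℤ) ∣ x - z) :
    cls m' (cls m T z) x = cls m' T x := by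
  ext y
  simp only [mem_cls]
  constructor
  · rintro ⟨⟨h1, _⟩, h3⟩
    exact ⟨h1, h3⟩
  · rintro ⟨h1, h3⟩
    refine ⟨⟨h1, ?_⟩, h3⟩
    have h4 : (m : ℤ) ∣ y - x := (Int.natCast_dvd_natCast.2 h).trans h3
    have := dvd_add h4 hx
    simpa using this

lemma parts_nest_biUnion {m m' : ℕ} (h : m ∣ m') (T : Finset ℤ) :
    (parts m T).biUnion (parts m') = parts m' T := by
  ext V
  simp only [Finset.mem_biUnion]
  constructor
  · rintro ⟨U, hU, hV⟩
    obtain ⟨z, hz, rfl⟩ := mem_parts.1 hU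
    obtain ⟨x, hx, rfl⟩ := mem_parts.1 hV
    rw [cls_cls h (mem_cls.1 hx).2]
    exact cls_mem_parts (mem_cls.1 hx).1
  · intro hV
    obtain ⟨x, hx, rfl⟩ := mem_parts.1 hV
    refine ⟨cls m T x, cls_mem_parts hx, ?_⟩
    rw [← cls_cls h (by simp : (m : ℤ) ∣ x - x)]
    exact cls_mem_parts (mem_cls_self hx)

lemma parts_nonempty {m : ℕ} {T U : Finset ℤ} (h : U ∈ parts m T) : U.Nonempty := by
  obtain ⟨x, hx, rfl⟩ := mem_parts.1 h
  exact ⟨x, mem_cls_self hx⟩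

lemma sum_parts_nest {β : Type*} [AddCommMonoid β] {m m' : ℕ} (h : m ∣ m') (T : Finset ℤ)
    (g : Finset ℤ → β) :
    ∑ U ∈ parts m T, ∑ V ∈ parts m' U, g V = ∑ V ∈ parts m' T, g V := by
  rw [← parts_nest_biUnion h T, Finset.sum_biUnion]
  intro U hU U' hU' hne
  rw [Function.onFun, Finset.disjoint_left]
  intro V hV hV'
  obtain ⟨x, hx⟩ := parts_nonempty hV
  exact Finset.disjoint_left.1 (parts_disj m T hU hU' hne) (parts_subset hV hx) (parts_subset hV' hx)

lemma card_parts_le {m : ℕ} (hm : 0 < m) (T : Finset ℤ) : (parts m T).card ≤ m := by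
  have : (parts m T).card ≤ (Finset.range m).card := by
    refine Finset.card_le_card_of_surjOn
      (fun i => cls m T (i : ℤ)) ?_
    intro U hU
    obtain ⟨x, hx, rfl⟩ := mem_parts.1 hU
    refine ⟨(x % m).toNat, ?_, ?_⟩
    · simp only [Finset.coe_range, Set.mem_Iio]
      have := Int.emod_lt_of_pos x (by exact_mod_cast hm : (0 : ℤ) < m)
      omega
    · have h0 := Int.emod_nonneg x (by positivity : (m : ℤ) ≠ 0)
      have h1 : (((x % m).toNat : ℕ) : ℤ) = x % m := Int.toNat_of_nonneg h0
      simp only [h1]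
      apply cls_eq
      exact Int.dvd_self_sub_emod
  simpa using this

lemma parts_image (P m : ℕ) (hP : 0 < P) (x0 : ℤ) (Y : Finset ℤ) :
    parts (P * m) (Y.image (fun y => x0 + P * y)) =
      (parts m Y).image (fun U => U.image (fun y => x0 + P * y)) := by
  have key : ∀ y : ℤ, cls (P * m) (Y.image (fun y => x0 + P * y)) (x0 + P * y) =
      (cls m Y y).image (fun y => x0 + P * y) := by
    intro y
    have hP' : (P : ℤ) ≠ 0 := by positivity
    have e : ∀ z : ℤ, ((P * m : ℕ) : ℤ) ∣ (x0 + P * z) - (x0 + P * y) ↔ (m : ℤ) ∣ z - y := by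
      intro z
      have : (x0 + P * z) - (x0 + P * y) = P * (z - y) := by ring
      rw [this]
      push_cast
      exact mul_dvd_mul_iff_left hP'
    ext w
    simp only [mem_cls, Finset.mem_image]
    constructor
    · rintro ⟨⟨z, hz, rfl⟩, hd⟩
      exact ⟨z, ⟨hz, (e z).1 hd⟩, rfl⟩
    · rintro ⟨z, ⟨hz, hd⟩, rfl⟩
      exact ⟨⟨z, hz, rfl⟩, (e z).2 hd⟩
  unfold parts
  rw [Finset.image_image, Finset.image_image]
  apply Finset.image_congr
  intro y _
  exact key y

lemma aff_inj (P : ℕ) (hP : 0 < P) (x0 : ℤ) : Function.Injective (fun y : ℤ => x0 + P * y) := by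
  intro y z h
  have hP' : (P : ℤ) ≠ 0 := by positivity
  have : (P : ℤ) * y = P * z := by simpa using h
  exact mul_left_cancel₀ hP' this

lemma sum_parts_image {β : Type*} [AddCommMonoid β] (P m : ℕ) (hP : 0 < P) (x0 : ℤ) (Y : Finset ℤ)
    (g : Finset ℤ → β) :
    ∑ U ∈ parts (P * m) (Y.image (fun y => x0 + P * y)), g U =
      ∑ U ∈ parts m Y, g (U.image (fun y => x0 + P * y)) := by
  rw [parts_image P m hP, Finset.sum_image]
  intro U _ V _ h
  exact Finset.image_injective (aff_inj P hP x0) h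

lemma exists_preimage (P : ℕ) (x0 : ℤ) (T : Finset ℤ)
    (hT : ∀ x ∈ T, (P : ℤ) ∣ x - x0) : ∃ Y : Finset ℤ, T = Y.image (fun y => x0 + P * y) := by
  refine ⟨T.image (fun x => (x - x0) / P), ?_⟩
  rw [Finset.image_image]
  ext x
  simp only [Finset.mem_image, Function.comp]
  constructor
  · intro hx
    refine ⟨x, hx, ?_⟩
    rw [Int.mul_ediv_cancel' (hT x hx)]; ring
  · rintro ⟨z, hz, rfl⟩
    rw [Int.mul_ediv_cancel' (hT z hz)]
    simpa using hz

/-! elementary inequalities -/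

lemma sum_pow_le_pow_sum' {ι : Type*} (s : Finset ι) (x : ι → ℝ) (hx : ∀ i ∈ s, 0 ≤ x i) {q : ℕ} (hq : 1 ≤ q) :
    ∑ i ∈ s, x i ^ q ≤ (∑ i ∈ s, x i) ^ q := by
  obtain ⟨t, rfl⟩ : ∃ t, q = t + 1 := ⟨q - 1, by omega⟩
  rw [pow_succ, Finset.mul_sum]
  refine Finset.sum_le_sum fun i hi => ?_
  rw [pow_succ]
  exact mul_le_mul_of_nonneg_right
    (pow_le_pow_left₀ (hx i hi) (Finset.single_le_sum hx hi) _) (hx i hi)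

/-- `|∑ z|^q ≤ N^q ∑ |z|^q` -/
lemma norm_sum_pow_le {ι : Type*} (s : Finset ι) (z : ι → ℂ) {q : ℕ} (hq : 1 ≤ q) :
    ‖∑ i ∈ s, z i‖ ^ q ≤ (s.card : ℝ) ^ q * ∑ i ∈ s, ‖z i‖ ^ q := by
  rcases s.eq_empty_or_nonempty with rfl | hs
  · simp [show q ≠ 0 by omega]
  obtain ⟨j, hj, hmax⟩ := Finset.exists_max_image s (fun i => ‖z i‖) hs
  have h1 : ‖∑ i ∈ s, z i‖ ≤ s.card * ‖z j‖ := by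
    refine (norm_sum_le _ _).trans ?_
    rw [← nsmul_eq_mul]
    exact Finset.sum_le_card_nsmul _ _ _ hmax
  calc ‖∑ i ∈ s, z i‖ ^ q ≤ (s.card * ‖z j‖) ^ q := pow_le_pow_left₀ (norm_nonneg _) h1 _
    _ = (s.card : ℝ) ^ q * ‖z j‖ ^ q := mul_pow _ _ _
    _ ≤ _ := by
      gcongr
      exact Finset.single_le_sum (f := fun i => ‖z i‖ ^ q) (fun i _ => by positivity) hj

/-- Hölder with natural exponents. -/
lemma holder_nat {ι : Type*} (s : Finset ι) (A B W : ι → ℝ) (t : ℕ)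
    (hA : ∀ i, 0 ≤ A i) (hB : ∀ i, 0 ≤ B i) (hW : ∀ i, 0 ≤ W i)
    (h : ∀ i, W i ^ (t + 1) = A i ^ t * B i) :
    (∑ i ∈ s, W i) ^ (t + 1) ≤ (∑ i ∈ s, A i) ^ t * ∑ i ∈ s, B i := by
  rcases Nat.eq_zero_or_pos t with rfl | ht
  · simp only [pow_zero, zero_add, pow_one, one_mul] at h ⊢
    exact le_of_eq (Finset.sum_congr rfl fun i _ => h i)
  have ht' : (0 : ℝ) < t := by exact_mod_cast ht
  have hpq : ((t + 1 : ℝ) / t).HolderConjugate (t + 1 : ℝ) := by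
    rw [Real.holderConjugate_iff]
    constructor
    · rw [lt_div_iff₀ ht']; linarith
    · field_simp
  have e : ∀ i, W i = (A i) ^ ((t : ℝ) / (t + 1)) * (B i) ^ ((1 : ℝ) / (t + 1)) := by
    intro i
    have h1 : W i = (W i ^ (t + 1)) ^ ((1 : ℝ) / (t + 1)) := by
      rw [← Real.rpow_natCast, ← Real.rpow_mul (hW i)]
      push_cast
      rw [mul_one_div_cancel (by positivity), Real.rpow_one]
    rw [h1, h i, Real.mul_rpow (by have := hA i; positivity) (hB i), ← Real.rpow_natCast,
      ← Real.rpow_mul (hA i)]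
    congr 2
    ring
  have key := Real.inner_le_Lp_mul_Lq_of_nonneg s hpq
    (f := fun i => (A i) ^ ((t : ℝ) / (t + 1))) (g := fun i => (B i) ^ ((1 : ℝ) / (t + 1)))
    (fun i _ => Real.rpow_nonneg (hA i) _) (fun i _ => Real.rpow_nonneg (hB i) _)
  have eA : ∀ i, ((A i) ^ ((t : ℝ) / (t + 1))) ^ ((t + 1 : ℝ) / t) = A i := by
    intro i
    rw [← Real.rpow_mul (hA i)]
    rw [div_mul_div_cancel₀ (by positivity), div_self (by positivity), Real.rpow_one]
  have eB : ∀ i, ((B i) ^ ((1 : ℝ) / (t + 1))) ^ ((t + 1 : ℝ)) = B i := by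
    intro i
    rw [← Real.rpow_mul (hB i), one_div_mul_cancel (by positivity), Real.rpow_one]
  simp only [eA, eB] at key
  rw [Finset.sum_congr rfl fun i _ => e i]
  have hSA : 0 ≤ ∑ i ∈ s, A i := Finset.sum_nonneg fun i _ => hA i
  have hSB : 0 ≤ ∑ i ∈ s, B i := Finset.sum_nonneg fun i _ => hB i
  calc _ ≤ ((∑ i ∈ s, A i) ^ (1 / ((t + 1 : ℝ) / t)) * (∑ i ∈ s, B i) ^ (1 / (t + 1 : ℝ))) ^ (t + 1) := by
        refine pow_le_pow_left₀ (Finset.sum_nonneg fun i _ => ?_) key _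
        exact mul_nonneg (Real.rpow_nonneg (hA i) _) (Real.rpow_nonneg (hB i) _)
    _ = _ := by
        rw [mul_pow, ← Real.rpow_natCast, ← Real.rpow_natCast, ← Real.rpow_mul hSA, ← Real.rpow_mul hSB]
        push_cast
        rw [one_div_mul_cancel (by positivity), Real.rpow_one]
        congr 1
        rw [show (1 / ((t + 1 : ℝ) / t) * (t + 1 : ℝ)) = (t : ℝ) by field_simp, Real.rpow_natCast]

/-- Minkowski in the form used for fibres. -/
lemma mink {Ω ι : Type*} [Fintype Ω] (s : Finset ι) (G : Ω → ℝ) (hG : ∀ w, 0 ≤ G w)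
    (h : ι → Ω → ℝ) (hh : ∀ i w, 0 ≤ h i w) {r : ℕ} (hr : 1 ≤ r) :
    ∑ w, G w * (∑ i ∈ s, (h i w) ^ (1 / (r : ℝ))) ^ r ≤
      (∑ i ∈ s, (∑ w, G w * h i w) ^ (1 / (r : ℝ))) ^ r := by
  have hr' : (1 : ℝ) ≤ r := by exact_mod_cast hr
  have hr0 : (r : ℝ) ≠ 0 := by positivity
  have hrn : r ≠ 0 := by omega
  -- functions u i w = (G w * h i w)^(1/r)
  set u : ι → Ω → ℝ := fun i w => (G w * h i w) ^ (1 / (r : ℝ)) with hu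
  have hu0 : ∀ i w, 0 ≤ u i w := fun i w => Real.rpow_nonneg (mul_nonneg (hG w) (hh i w)) _
  have hur : ∀ i w, u i w ^ r = G w * h i w := by
    intro i w
    simp only [hu, one_div]
    exact Real.rpow_inv_natCast_pow (mul_nonneg (hG w) (hh i w)) hrn
  have e1 : ∀ w, G w * (∑ i ∈ s, (h i w) ^ (1 / (r : ℝ))) ^ r = (∑ i ∈ s, u i w) ^ r := by
    intro w
    have : ∑ i ∈ s, u i w = (G w) ^ (1 / (r : ℝ)) * ∑ i ∈ s, (h i w) ^ (1 / (r : ℝ)) := by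
      rw [Finset.mul_sum]
      exact Finset.sum_congr rfl fun i _ => Real.mul_rpow (hG w) (hh i w)
    rw [this, mul_pow]
    congr 1
    rw [one_div]
    exact (Real.rpow_inv_natCast_pow (hG w) hrn).symm
  simp only [e1, ← hur]
  have key : (∑ w, (∑ i ∈ s, u i w) ^ r) ^ (1 / (r : ℝ)) ≤ ∑ i ∈ s, (∑ w, u i w ^ r) ^ (1 / (r : ℝ)) := by
    classical
    clear e1
    induction s using Finset.induction_on with
    | empty =>
      simp only [Finset.sum_empty, zero_pow hrn, Finset.sum_const_zero]
      rw [Real.zero_rpow (by positivity)]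
    | insert i s hi ih =>
      rw [Finset.sum_insert hi]
      refine le_trans ?_ (add_le_add_right ih _)
      have := Real.Lp_add_le_of_nonneg (s := Finset.univ) (f := fun w => u i w)
        (g := fun w => ∑ i ∈ s, u i w) hr' (fun w _ => hu0 i w)
        (fun w _ => Finset.sum_nonneg fun i _ => hu0 i w)
      simp only [Real.rpow_natCast] at this
      simpa only [Finset.sum_insert hi] using this
  have h0 : 0 ≤ ∑ w, (∑ i ∈ s, u i w) ^ r :=
    Finset.sum_nonneg fun w _ => pow_nonneg (Finset.sum_nonneg fun i _ => hu0 i w) _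
  calc ∑ w, (∑ i ∈ s, u i w) ^ r = ((∑ w, (∑ i ∈ s, u i w) ^ r) ^ (1 / (r : ℝ))) ^ r := by
        rw [one_div]; exact (Real.rpow_inv_natCast_pow h0 hrn).symm
    _ ≤ _ := pow_le_pow_left₀ (Real.rpow_nonneg h0 _) key _

end HB
end

section
namespace HB
open Finset Polynomial

/-- phase on the finite dual group -/
noncomputable def ph {M : ℕ} [NeZero M] {k : ℕ} (w : Fin k → ZMod M) (m : Fin k → ℤ) : ℂ :=
  ZMod.stdAddChar (∑ j, w j * (m j : ZMod M))

lemma ph_add {M : ℕ} [NeZero M] {k : ℕ} (w v : Fin k → ZMod M) (m : Fin k → ℤ) :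
    ph (w + v) m = ph w m * ph v m := by
  unfold ph
  rw [← AddChar.map_add_eq_mul, ← Finset.sum_add_distrib]
  simp [add_mul]

lemma norm_std {M : ℕ} [NeZero M] (z : ZMod M) : ‖(ZMod.stdAddChar z : ℂ)‖ = 1 :=
  AddChar.norm_apply _ _

lemma norm_ph {M : ℕ} [NeZero M] {k : ℕ} (w : Fin k → ZMod M) (m : Fin k → ℤ) : ‖ph w m‖ = 1 :=
  norm_std _

lemma std_scale {M P M' : ℕ} [NeZero M] [NeZero M'] (h : M = P * M') (N : ℤ) :
    (ZMod.stdAddChar (((P : ℤ) * N : ℤ) : ZMod M) : ℂ) = ZMod.stdAddChar ((N : ℤ) : ZMod M') := by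
  rw [ZMod.stdAddChar_coe, ZMod.stdAddChar_coe]
  congr 1
  have hM : (M : ℂ) ≠ 0 := by exact_mod_cast NeZero.ne M
  have hM' : (M' : ℂ) ≠ 0 := by exact_mod_cast NeZero.ne M'
  have hP : (P : ℂ) ≠ 0 := by
    intro h0
    apply hM
    rw [h]; push_cast; rw [h0, zero_mul]
  rw [h]
  push_cast
  field_simp

/-- exponential sum along a polynomial curve -/
noncomputable def ex {M : ℕ} [NeZero M] {k : ℕ} (ψ : Fin k → ℤ[X]) (a : ℤ → ℂ) (T : Finset ℤ)
    (w : Fin k → ZMod M) : ℂ := ∑ x ∈ T, a x * ph w (fun j => (ψ j).eval x)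

/-- curves congruent to a multiple of the moment curve modulo `p` -/
def Cls (p k : ℕ) (ψ : Fin k → ℤ[X]) : Prop :=
  ∃ u : ℤ, ¬ (p : ℤ) ∣ u ∧ ∀ j : Fin k, ∃ q : ℤ[X], ψ j = C u * X ^ ((j : ℕ) + 1) + C (p : ℤ) * q

/-- half the critical exponent -/
def rr (l : ℕ) : ℕ := l * (l + 1) / 2

lemma two_rr (l : ℕ) : 2 * rr l = l * (l + 1) := by
  unfold rr
  exact Nat.mul_div_cancel' (Nat.even_mul_succ_self l).two_dvd

lemma rr_succ (l : ℕ) : rr (l + 1) = rr l + (l + 1) := by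
  have h1 := two_rr l
  have h2 := two_rr (l + 1)
  nlinarith

lemma rr_pos {l : ℕ} (hl : 1 ≤ l) : 1 ≤ rr l := by
  have h1 := two_rr l
  nlinarith

lemma rr_mono {l k : ℕ} (h : l ≤ k) : rr l ≤ rr k := by
  have h1 := two_rr l
  have h2 := two_rr k
  nlinarith

/-- the decoupling inequality with constant `K` -/
def Dec (p : ℕ) [NeZero p] (k n : ℕ) (K : ℝ) : Prop :=
  ∀ ψ : Fin k → ℤ[X], Cls p k ψ → ∀ (a : ℤ → ℂ) (T : Finset ℤ),
    ∑ w : Fin k → ZMod (p ^ (k * n)), ‖ex ψ a T w‖ ^ (2 * rr k) ≤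
      K * (∑ U ∈ parts (p ^ n) T,
        (∑ w : Fin k → ZMod (p ^ (k * n)), ‖ex ψ a U w‖ ^ (2 * rr k)) ^ (1 / (rr k : ℝ))) ^ (rr k)

lemma fibre {p : ℕ} [NeZero p] {l m : ℕ} {K : ℝ} (hD : Dec p l m K) (hK : 0 ≤ K) (hl : 1 ≤ l)
    (ψ : Fin l → ℤ[X]) (hψ : Cls p l ψ) {Ω : Type*} [Fintype Ω] [AddCommGroup Ω]
    (G : Ω → ℝ) (hG0 : ∀ w, 0 ≤ G w) (v : (Fin l → ZMod (p ^ (l * m))) → Ω)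
    (hG : ∀ w c, G (w + v c) = G w) (F : ℤ → Ω → ℂ) (u : (Fin l → ZMod (p ^ (l * m))) → ℂ)
    (hu : ∀ c, ‖u c‖ = 1)
    (hF : ∀ y w c, F y (w + v c) = F y w * (u c * ph c (fun j => (ψ j).eval y))) (Y : Finset ℤ) :
    ∑ w, G w * ‖∑ y ∈ Y, F y w‖ ^ (2 * rr l) ≤
      K * (∑ U ∈ parts (p ^ m) Y, (∑ w, G w * ‖∑ y ∈ U, F y w‖ ^ (2 * rr l)) ^ (1 / (rr l : ℝ))) ^ (rr l) := by
  classical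
  have hcard : (0 : ℝ) < Fintype.card (Fin l → ZMod (p ^ (l * m))) := by
    exact_mod_cast Fintype.card_pos
  have hr := rr_pos hl
  -- averaging identity
  have avg : ∀ U : Finset ℤ, (Fintype.card (Fin l → ZMod (p ^ (l * m))) : ℝ) * ∑ w, G w * ‖∑ y ∈ U, F y w‖ ^ (2 * rr l) =
      ∑ w, G w * ∑ c : Fin l → ZMod (p ^ (l * m)), ‖ex ψ (fun y => F y w) U c‖ ^ (2 * rr l) := by
    intro U
    have h1 : ∀ c : Fin l → ZMod (p ^ (l * m)), ∑ w, G w * ‖∑ y ∈ U, F y w‖ ^ (2 * rr l) =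
        ∑ w, G w * ‖ex ψ (fun y => F y w) U c‖ ^ (2 * rr l) := by
      intro c
      rw [← Equiv.sum_comp (Equiv.addRight (v c))]
      refine Finset.sum_congr rfl fun w _ => ?_
      simp only [Equiv.coe_addRight]
      rw [hG]
      congr 2
      have : ∑ y ∈ U, F y (w + v c) = u c * ex ψ (fun y => F y w) U c := by
        unfold ex
        rw [Finset.mul_sum]
        refine Finset.sum_congr rfl fun y _ => ?_
        rw [hF]; ring
      rw [this, norm_mul, hu, one_mul]
    rw [← nsmul_eq_mul, ← Finset.card_univ, ← Finset.sum_const]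
    rw [Finset.sum_congr rfl fun c _ => h1 c, Finset.sum_comm]
    simp only [Finset.mul_sum]
  have nn : ∀ U : Finset ℤ, 0 ≤ ∑ w, G w * ‖∑ y ∈ U, F y w‖ ^ (2 * rr l) := fun U =>
    Finset.sum_nonneg fun w _ => mul_nonneg (hG0 w) (by positivity)
  have step : (Fintype.card (Fin l → ZMod (p ^ (l * m))) : ℝ) * ∑ w, G w * ‖∑ y ∈ Y, F y w‖ ^ (2 * rr l) ≤
      K * (∑ U ∈ parts (p ^ m) Y, ((Fintype.card (Fin l → ZMod (p ^ (l * m))) : ℝ) *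
        ∑ w, G w * ‖∑ y ∈ U, F y w‖ ^ (2 * rr l)) ^ (1 / (rr l : ℝ))) ^ (rr l) := by
    simp only [avg]
    calc _ ≤ ∑ w, G w * (K * (∑ U ∈ parts (p ^ m) Y,
        (∑ c : Fin l → ZMod (p ^ (l * m)), ‖ex ψ (fun y => F y w) U c‖ ^ (2 * rr l)) ^ (1 / (rr l : ℝ))) ^ (rr l)) := by
          refine Finset.sum_le_sum fun w _ => mul_le_mul_of_nonneg_left ?_ (hG0 w)
          exact hD ψ hψ _ _
      _ = K * ∑ w, G w * (∑ U ∈ parts (p ^ m) Y,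
        (∑ c : Fin l → ZMod (p ^ (l * m)), ‖ex ψ (fun y => F y w) U c‖ ^ (2 * rr l)) ^ (1 / (rr l : ℝ))) ^ (rr l) := by
          rw [Finset.mul_sum]
          exact Finset.sum_congr rfl fun w _ => by ring
      _ ≤ _ := by
          refine mul_le_mul_of_nonneg_left ?_ hK
          exact mink _ G hG0 (fun U w => ∑ c : Fin l → ZMod (p ^ (l * m)), ‖ex ψ (fun y => F y w) U c‖ ^ (2 * rr l))
            (fun U w => Finset.sum_nonneg fun c _ => by positivity) hr
  have e : (∑ U ∈ parts (p ^ m) Y, ((Fintype.card (Fin l → ZMod (p ^ (l * m))) : ℝ) *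
        ∑ w, G w * ‖∑ y ∈ U, F y w‖ ^ (2 * rr l)) ^ (1 / (rr l : ℝ))) ^ (rr l) =
      (Fintype.card (Fin l → ZMod (p ^ (l * m))) : ℝ) * (∑ U ∈ parts (p ^ m) Y,
        (∑ w, G w * ‖∑ y ∈ U, F y w‖ ^ (2 * rr l)) ^ (1 / (rr l : ℝ))) ^ (rr l) := by
    rw [Finset.sum_congr rfl fun U _ => Real.mul_rpow hcard.le (nn U), ← Finset.mul_sum, mul_pow]
    congr 1
    rw [one_div]
    exact Real.rpow_inv_natCast_pow hcard.le (by omega)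
  rw [e] at step
  have : (Fintype.card (Fin l → ZMod (p ^ (l * m))) : ℝ) * ∑ w, G w * ‖∑ y ∈ Y, F y w‖ ^ (2 * rr l) ≤
    (Fintype.card (Fin l → ZMod (p ^ (l * m))) : ℝ) * (K * (∑ U ∈ parts (p ^ m) Y,
        (∑ w, G w * ‖∑ y ∈ U, F y w‖ ^ (2 * rr l)) ^ (1 / (rr l : ℝ))) ^ (rr l)) := by
    linarith
  exact le_of_mul_le_mul_left this hcard

/-- the shift attached to a matrix `B` -/
def vv (p k n l m A : ℕ) (B : Fin l → Fin k → ℤ) (c : Fin l → ZMod (p ^ (l * m))) :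
    Fin k → ZMod (p ^ (k * n)) := fun i =>
  ((∑ j : Fin l, (p : ℤ) ^ (k * n - l * m - A * ((j : ℕ) + 1)) * B j i * ((c j).val : ℤ) : ℤ) : ZMod (p ^ (k * n)))

lemma ph_vv {p : ℕ} [NeZero p] (k n l m A : ℕ) (B : Fin l → Fin k → ℤ)
    (c : Fin l → ZMod (p ^ (l * m))) (z : Fin k → ℤ) :
    ph (vv p k n l m A B c) z = ZMod.stdAddChar ((∑ j : Fin l,
      (p : ℤ) ^ (k * n - l * m - A * ((j : ℕ) + 1)) * ((c j).val : ℤ) * ∑ i, B j i * z i : ℤ) :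
        ZMod (p ^ (k * n))) := by
  unfold ph vv
  congr 1
  push_cast
  simp only [Finset.sum_mul, Finset.mul_sum]
  rw [Finset.sum_comm]
  refine Finset.sum_congr rfl fun j _ => Finset.sum_congr rfl fun i _ => ?_
  ring

lemma ph_vv_const {p : ℕ} [NeZero p] (k n l m A : ℕ) (B : Fin l → Fin k → ℤ) (cst : Fin l → ℤ)
    (c : Fin l → ZMod (p ^ (l * m))) (z : Fin k → ℤ) (s : ℕ) (hs : l * m + A * l ≤ s) (hn : s ≤ k * n)
    (hz : ∀ j, (p : ℤ) ^ s ∣ ∑ i, B j i * z i - cst j) :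
    ph (vv p k n l m A B c) z = ZMod.stdAddChar ((∑ j : Fin l,
      (p : ℤ) ^ (k * n - l * m - A * ((j : ℕ) + 1)) * ((c j).val : ℤ) * cst j : ℤ) :
        ZMod (p ^ (k * n))) := by
  rw [ph_vv]
  congr 1
  rw [ZMod.intCast_eq_intCast_iff_dvd_sub]
  rw [← Finset.sum_sub_distrib]
  apply Finset.dvd_sum
  intro j _
  rw [← mul_sub]
  have h1 : ((p ^ (k * n) : ℕ) : ℤ) ∣ (p : ℤ) ^ (k * n - l * m - A * ((j : ℕ) + 1)) * (p : ℤ) ^ s := by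
    push_cast
    rw [← pow_add]
    apply pow_dvd_pow
    have : A * ((j : ℕ) + 1) ≤ A * l := Nat.mul_le_mul_left _ j.2
    omega
  refine h1.trans ?_
  rw [mul_assoc]
  refine mul_dvd_mul_left _ ?_
  apply Dvd.dvd.mul_left
  have := hz j
  rw [← dvd_neg]
  simpa using this

lemma ph_vv_curve {p : ℕ} [NeZero p] (k n l m A : ℕ) (B : Fin l → Fin k → ℤ) (cst : Fin l → ℤ)
    (c : Fin l → ZMod (p ^ (l * m))) (z : Fin k → ℤ) (y : Fin l → ℤ) (hs : l * m + A * l ≤ k * n)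
    (hz : ∀ j, ∑ i, B j i * z i = cst j + (p : ℤ) ^ (A * ((j : ℕ) + 1)) * y j) :
    ph (vv p k n l m A B c) z = ZMod.stdAddChar ((∑ j : Fin l,
      (p : ℤ) ^ (k * n - l * m - A * ((j : ℕ) + 1)) * ((c j).val : ℤ) * cst j : ℤ) :
        ZMod (p ^ (k * n))) * ph c y := by
  rw [ph_vv]
  have e : (∑ j : Fin l,
      (p : ℤ) ^ (k * n - l * m - A * ((j : ℕ) + 1)) * ((c j).val : ℤ) * ∑ i, B j i * z i : ℤ) =
      (∑ j : Fin l,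
      (p : ℤ) ^ (k * n - l * m - A * ((j : ℕ) + 1)) * ((c j).val : ℤ) * cst j) +
      ((p ^ (k * n - l * m) : ℕ) : ℤ) * ∑ j : Fin l, ((c j).val : ℤ) * y j := by
    rw [Finset.mul_sum, ← Finset.sum_add_distrib]
    refine Finset.sum_congr rfl fun j _ => ?_
    rw [hz j]
    have h2 : A * ((j : ℕ) + 1) ≤ A * l := Nat.mul_le_mul_left _ j.2
    have h3 : (p : ℤ) ^ (k * n - l * m) = (p : ℤ) ^ (k * n - l * m - A * ((j : ℕ) + 1)) *
        (p : ℤ) ^ (A * ((j : ℕ) + 1)) := by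
      rw [← pow_add]; congr 1; omega
    push_cast
    rw [h3]
    ring
  rw [e, Int.cast_add, AddChar.map_add_eq_mul]
  congr 1
  rw [std_scale (M := p ^ (k * n)) (P := p ^ (k * n - l * m)) (M' := p ^ (l * m))
    (by rw [← pow_add]; congr 1; omega)]
  unfold ph
  congr 1
  push_cast
  refine Finset.sum_congr rfl fun j _ => ?_
  rw [ZMod.natCast_zmod_val]

lemma block {p : ℕ} [NeZero p] {l m : ℕ} {K : ℝ} (hD : Dec p l m K) (hK : 0 ≤ K) (hl : 1 ≤ l)
    {k n : ℕ} (ψ : Fin k → ℤ[X]) (a : ℤ → ℂ) (B : Fin l → Fin k → ℤ) (ψ' : Fin l → ℤ[X])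
    (hψ' : Cls p l ψ') (cst : Fin l → ℤ) (A : ℕ) (x1 : ℤ)
    (hB : ∀ j (y : ℤ), ∑ i, B j i * (ψ i).eval (x1 + ((p ^ A : ℕ) : ℤ) * y) =
      cst j + (p : ℤ) ^ (A * ((j : ℕ) + 1)) * (ψ' j).eval y)
    (hexp : l * m + A * l ≤ k * n)
    (G : (Fin k → ZMod (p ^ (k * n))) → ℝ) (hG0 : ∀ w, 0 ≤ G w)
    (hG : ∀ w c, G (w + vv p k n l m A B c) = G w) (T : Finset ℤ)
    (hT : ∀ x ∈ T, ((p ^ A : ℕ) : ℤ) ∣ x - x1) :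
    ∑ w, G w * ‖ex ψ a T w‖ ^ (2 * rr l) ≤
      K * (∑ U ∈ parts (p ^ (A + m)) T, (∑ w, G w * ‖ex ψ a U w‖ ^ (2 * rr l)) ^ (1 / (rr l : ℝ))) ^ (rr l) := by
  have hp : 0 < p ^ A := pow_pos (NeZero.pos p) _
  obtain ⟨Y, rfl⟩ := exists_preimage (p ^ A) x1 T hT
  rw [pow_add, sum_parts_image (p ^ A) (p ^ m) hp]
  have hex : ∀ (U : Finset ℤ) (w : Fin k → ZMod (p ^ (k * n))),
      ex ψ a (U.image (fun y => x1 + ((p ^ A : ℕ) : ℤ) * y)) w =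
      ∑ y ∈ U, a (x1 + ((p ^ A : ℕ) : ℤ) * y) * ph w (fun j => (ψ j).eval (x1 + ((p ^ A : ℕ) : ℤ) * y)) := by
    intro U w
    unfold ex
    rw [Finset.sum_image]
    intro y _ z _ h
    exact aff_inj _ hp x1 h
  simp only [hex]
  refine fibre hD hK hl ψ' hψ' G hG0 (vv p k n l m A B) hG
    (fun y w => a (x1 + ((p ^ A : ℕ) : ℤ) * y) * ph w (fun j => (ψ j).eval (x1 + ((p ^ A : ℕ) : ℤ) * y)))
    (fun c => ZMod.stdAddChar ((∑ j : Fin l,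
      (p : ℤ) ^ (k * n - l * m - A * ((j : ℕ) + 1)) * ((c j).val : ℤ) * cst j : ℤ) :
        ZMod (p ^ (k * n)))) (fun c => norm_std _) ?_ Y
  intro y w c
  rw [ph_add, ph_vv_curve k n l m A B cst c _ (fun j => (ψ' j).eval y) hexp (fun j => hB j y)]
  ring

end HB
end

section
namespace HB
open Finset Polynomial

lemma map_taylor' {R S : Type*} [CommRing R] [CommRing S] (f : R →+* S) (r : R) (q : R[X]) :
    (taylor r q).map f = taylor (f r) (q.map f) := by
  simp [taylor_apply, Polynomial.map_comp]

lemma eval_decomp (Q : ℤ[X]) (l j : ℕ) (d : ℤ) (hj : j < l)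
    (h : ∀ i < l, Q.coeff (i + 1) = if i = j then d else 0) :
    ∃ R : ℤ[X], Q = C (Q.coeff 0) + C d * X ^ (j + 1) + X ^ (l + 1) * R := by
  have : X ^ (l + 1) ∣ Q - (C (Q.coeff 0) + C d * X ^ (j + 1)) := by
    rw [X_pow_dvd_iff]
    intro t ht
    rcases t with _ | i
    · simp
    · simp only [coeff_sub, coeff_add, coeff_C_mul, coeff_X_pow]
      rw [h i (by omega), coeff_C]
      simp
  obtain ⟨R, hR⟩ := this
  exact ⟨R, by rw [← hR]; ring⟩

lemma adj_coeff {k : ℕ} (Φ : Fin k → ℤ[X]) (x1 : ℤ) (E : Matrix (Fin k) (Fin k) ℤ)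
    (hE : ∀ j i, E j i = (taylor x1 (Φ j)).coeff ((i : ℕ) + 1)) (j : Fin k) (i : ℕ) (hi : i < k) :
    (∑ t, C (E.adjugate j t) * taylor x1 (Φ t)).coeff (i + 1) = if i = (j : ℕ) then E.det else 0 := by
  rw [finset_sum_coeff]
  simp only [coeff_C_mul]
  have h1 : ∑ t, E.adjugate j t * (taylor x1 (Φ t)).coeff (i + 1) = (E.adjugate * E) j ⟨i, hi⟩ := by
    rw [Matrix.mul_apply]
    exact Finset.sum_congr rfl fun t _ => by rw [hE]
  rw [h1, Matrix.adjugate_mul, Matrix.smul_apply, Matrix.one_apply]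
  by_cases h : i = (j : ℕ)
  · have : j = ⟨i, hi⟩ := Fin.ext h.symm
    simp [h]
  · have : j ≠ ⟨i, hi⟩ := fun h' => h (by rw [h'])
    simp [h, this]

lemma alg_rescale (p l A : ℕ) (hA : 1 ≤ A) (Φ : Fin l → ℤ[X]) (x1 : ℤ) (E : Matrix (Fin l) (Fin l) ℤ)
    (hE : ∀ j i, E j i = (taylor x1 (Φ j)).coeff ((i : ℕ) + 1)) (hdet : ¬ (p : ℤ) ∣ E.det) :
    ∃ (ψ' : Fin l → ℤ[X]) (cst : Fin l → ℤ), Cls p l ψ' ∧ ∀ j (y : ℤ),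
      ∑ i, E.adjugate j i * (Φ i).eval (x1 + ((p ^ A : ℕ) : ℤ) * y) =
        cst j + (p : ℤ) ^ (A * ((j : ℕ) + 1)) * (ψ' j).eval y := by
  have h1 : ∀ j : Fin l, ∃ R : ℤ[X], ∑ t, C (E.adjugate j t) * taylor x1 (Φ t) =
      C ((∑ t, C (E.adjugate j t) * taylor x1 (Φ t)).coeff 0) + C E.det * X ^ ((j : ℕ) + 1)
        + X ^ (l + 1) * R := fun j =>
    eval_decomp _ l j E.det j.2 (fun i hi => adj_coeff Φ x1 E hE j i hi)
  choose R hR using h1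
  refine ⟨fun j => C E.det * X ^ ((j : ℕ) + 1) + C (p : ℤ) *
    (C ((p : ℤ) ^ (A * (l - j) - 1)) * X ^ (l + 1) * (R j).comp (C ((p : ℤ) ^ A) * X)),
    fun j => (∑ t, C (E.adjugate j t) * taylor x1 (Φ t)).coeff 0, ⟨E.det, hdet, fun j => ⟨_, rfl⟩⟩, ?_⟩
  intro j y
  have h2 : ∑ i, E.adjugate j i * (Φ i).eval (x1 + ((p ^ A : ℕ) : ℤ) * y) =
      (∑ t, C (E.adjugate j t) * taylor x1 (Φ t)).eval (((p ^ A : ℕ) : ℤ) * y) := by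
    rw [eval_finset_sum]
    refine Finset.sum_congr rfl fun i _ => ?_
    rw [eval_mul, eval_C, taylor_eval, add_comm]
  rw [h2]
  conv_lhs => rw [hR j]
  simp only [eval_add, eval_mul, eval_C, eval_pow, eval_X, eval_comp]
  push_cast
  have hj := j.2
  have h3 : (p : ℤ) ^ (A * (l + 1)) = (p : ℤ) ^ (A * ((j : ℕ) + 1)) * ((p : ℤ) * (p : ℤ) ^ (A * (l - j) - 1)) := by
    rw [← pow_succ', ← pow_add]
    congr 1
    have h4 : 1 ≤ A * (l - j) := Nat.mul_pos hA (by omega)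
    rw [Nat.sub_add_cancel h4, ← Nat.mul_add]
    congr 1
    omega
  rw [mul_pow, mul_pow, ← pow_mul, ← pow_mul, h3]
  ring

lemma det_ne_zero_of {F : Type*} [Field F] {l : ℕ} (Q : Fin l → F[X]) (x : F)
    (E : Matrix (Fin l) (Fin l) F) (hE : ∀ j i, E j i = (taylor x (Q j)).coeff ((i : ℕ) + 1))
    (h : ∀ w : Fin l → F, (∀ i < l, (taylor x (∑ j, C (w j) * Q j)).coeff (i + 1) = 0) → w = 0) :
    E.det ≠ 0 := by
  intro h0
  obtain ⟨w, hw, hw0⟩ := Matrix.exists_vecMul_eq_zero_iff.2 h0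
  apply hw
  apply h
  intro i hi
  have := congrFun hw0 ⟨i, hi⟩
  simp only [Matrix.vecMul, dotProduct, Pi.zero_apply] at this
  rw [← this]
  simp only [map_sum, finset_sum_coeff, taylor_mul, taylor_C, coeff_C_mul, hE]

lemma not_dvd_det {p l : ℕ} [Fact p.Prime] (Φ : Fin l → ℤ[X]) (x1 : ℤ) (E : Matrix (Fin l) (Fin l) ℤ)
    (hE : ∀ j i, E j i = (taylor x1 (Φ j)).coeff ((i : ℕ) + 1))
    (h : ∀ w : Fin l → ZMod p, (∀ i < l, (taylor (x1 : ZMod p)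
      (∑ j, C (w j) * (Φ j).map (Int.castRingHom (ZMod p)))).coeff (i + 1) = 0) → w = 0) :
    ¬ (p : ℤ) ∣ E.det := by
  rw [← ZMod.intCast_zmod_eq_zero_iff_dvd]
  have h1 : ((E.det : ℤ) : ZMod p) = (E.map (Int.castRingHom (ZMod p))).det := by
    have := RingHom.map_det (Int.castRingHom (ZMod p)) E
    simpa using this
  rw [h1]
  refine det_ne_zero_of (fun j => (Φ j).map (Int.castRingHom (ZMod p))) (x1 : ZMod p) _ ?_ h
  intro j i
  have := map_taylor' (Int.castRingHom (ZMod p)) x1 (Φ j)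
  simp only [eq_intCast] at this
  rw [← this, coeff_map, Matrix.map_apply, hE]

lemma cls_map {p k : ℕ} {ψ : Fin k → ℤ[X]} {u : ℤ} {j : Fin k}
    (h : ∃ q : ℤ[X], ψ j = C u * X ^ ((j : ℕ) + 1) + C (p : ℤ) * q) :
    (ψ j).map (Int.castRingHom (ZMod p)) = C (u : ZMod p) * X ^ ((j : ℕ) + 1) := by
  obtain ⟨q, hq⟩ := h
  rw [hq]
  simp

lemma alg2 {p k : ℕ} [Fact p.Prime] {ψ : Fin k → ℤ[X]} (hψ : Cls p k ψ) (x0 : ℤ)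
    (E : Matrix (Fin k) (Fin k) ℤ) (hE : ∀ j i, E j i = (taylor x0 (ψ j)).coeff ((i : ℕ) + 1)) :
    ¬ (p : ℤ) ∣ E.det := by
  obtain ⟨u, hu, hq⟩ := hψ
  apply not_dvd_det ψ x0 E hE
  intro w hw
  simp only [fun j => cls_map (hq j)] at hw
  have hu' : (u : ZMod p) ≠ 0 := by
    rwa [Ne, ZMod.intCast_zmod_eq_zero_iff_dvd]
  set Q : (ZMod p)[X] := ∑ j, C (w j) * (C (u : ZMod p) * X ^ ((j : ℕ) + 1)) with hQ
  have hdeg : Q.natDegree ≤ k := by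
    apply natDegree_sum_le_of_forall_le
    intro j _
    rw [← mul_assoc, ← C_mul]
    exact (natDegree_C_mul_X_pow_le _ _).trans j.2
  have h0 : taylor (x0 : ZMod p) Q = C ((taylor (x0 : ZMod p) Q).coeff 0) := by
    ext t
    rcases t with _ | i
    · simp
    · rw [coeff_C]
      simp only [Nat.add_eq_zero_iff, one_ne_zero, and_false, if_false]
      by_cases hi : i < k
      · exact hw i hi
      · apply coeff_eq_zero_of_natDegree_lt
        rw [natDegree_taylor]; omega
  have h1 : Q = C ((taylor (x0 : ZMod p) Q).coeff 0) := by
    apply taylor_injective (x0 : ZMod p)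
    rw [taylor_C]; exact h0
  funext j
  have h2 : Q.coeff ((j : ℕ) + 1) = 0 := by
    rw [h1, coeff_C]; simp
  rw [hQ, finset_sum_coeff, Finset.sum_eq_single j] at h2
  · simp only [coeff_C_mul, coeff_X_pow, if_true, mul_one] at h2
    simpa [hu'] using h2
  · intro i _ hij
    simp only [coeff_C_mul, coeff_X_pow]
    rw [if_neg]
    · simp
    · intro h'
      exact hij (Fin.ext (by omega))
  · simp

lemma vander_aux {F : Type*} [Field F] (p k l : ℕ) [CharP F p] (hkp : k < p) (hlk : l ≤ k)
    (z : F) (hz : z ≠ 0) (w : Fin l → F) (c : Fin l → F) (d : F) (hd : d ≠ 0)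
    (h : ∀ i < l, (taylor z (∑ j : Fin l, C (w j) * (C (c j) + C d * X ^ (k - l + (j : ℕ) + 1)))).coeff (i + 1) = 0) :
    w = 0 := by
  set Q : F[X] := ∑ j : Fin l, C (w j) * (C (c j) + C d * X ^ (k - l + (j : ℕ) + 1)) with hQ
  set S : F[X] := ∑ j : Fin l, C (w j * d * (k - l + (j : ℕ) + 1 : ℕ)) * X ^ (j : ℕ) with hS
  have hder : derivative Q = X ^ (k - l) * S := by
    rw [hQ, hS, derivative_sum, Finset.mul_sum]
    refine Finset.sum_congr rfl fun j _ => ?_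
    rw [derivative_C_mul, derivative_add, derivative_C, derivative_C_mul, derivative_X_pow, zero_add]
    simp only [Nat.add_sub_cancel, pow_add, C_mul]
    ring
  have hdvd : X ^ l ∣ taylor z (derivative Q) := by
    have e : taylor z (derivative Q) = derivative (taylor z Q) := by
      simp [taylor_apply, derivative_comp]
    rw [e, X_pow_dvd_iff]
    intro i hi
    rw [coeff_derivative, h i hi, zero_mul]
  have hdvd2 : (X - C z) ^ l ∣ derivative Q := by
    obtain ⟨R, hR⟩ := hdvd
    refine ⟨taylor (-z) R, ?_⟩
    apply taylor_injective z
    rw [hR, taylor_mul, taylor_pow, taylor_taylor]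
    simp [taylor_X]
  rw [hder] at hdvd2
  have hcop : IsCoprime ((X - C z) ^ l) ((X : F[X]) ^ (k - l)) := by
    apply IsCoprime.pow
    have := isCoprime_X_sub_C_of_isUnit_sub (R := F) (a := z) (b := 0) (by simpa using hz)
    simpa using this
  have hdvd3 := hcop.dvd_of_dvd_mul_left hdvd2
  have hS0 : S = 0 := by
    apply eq_zero_of_dvd_of_degree_lt hdvd3
    rw [degree_pow, degree_X_sub_C, nsmul_one]
    rw [hS]
    refine (degree_sum_le _ _).trans_lt ?_
    rw [Finset.sup_lt_iff (WithBot.bot_lt_coe _)]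
    intro j _
    refine (degree_C_mul_X_pow_le _ _).trans_lt ?_
    exact_mod_cast j.2
  funext j
  have h2 : S.coeff (j : ℕ) = 0 := by rw [hS0]; simp
  rw [hS, finset_sum_coeff, Finset.sum_eq_single j] at h2
  · simp only [coeff_C_mul, coeff_X_pow, if_true, mul_one] at h2
    have h3 : ((k - l + (j : ℕ) + 1 : ℕ) : F) ≠ 0 := by
      rw [Ne, CharP.cast_eq_zero_iff F p]
      intro h4
      have := Nat.le_of_dvd (by omega) h4
      have := j.2
      omega
    show w j = 0
    rcases mul_eq_zero.1 h2 with h5 | h5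
    · rcases mul_eq_zero.1 h5 with h6 | h6
      · exact h6
      · exact absurd h6 hd
    · exact absurd h5 h3
  · intro i _ hij
    simp only [coeff_C_mul, coeff_X_pow]
    rw [if_neg]
    · simp
    · intro h'
      exact hij (Fin.ext h'.symm)
  · simp

lemma alg_bil {p k l : ℕ} [Fact p.Prime] (hkp : k < p) (hlk : l ≤ k) {ψ : Fin k → ℤ[X]}
    (hψ : Cls p k ψ) (A : ℕ) (hA : 1 ≤ A) (x0 x1 : ℤ) (hx : ¬ (p : ℤ) ∣ x1 - x0) :
    ∃ (B : Fin l → Fin k → ℤ) (ψ' : Fin l → ℤ[X]) (cst cst' : Fin l → ℤ), Cls p l ψ' ∧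
      (∀ j (y : ℤ), ∑ i, B j i * (ψ i).eval (x1 + ((p ^ A : ℕ) : ℤ) * y) =
        cst j + (p : ℤ) ^ (A * ((j : ℕ) + 1)) * (ψ' j).eval y) ∧
      ∀ (b : ℕ) j (x : ℤ), (p : ℤ) ^ b ∣ x - x0 →
        (p : ℤ) ^ (b * (k - l + 1)) ∣ ∑ i, B j i * (ψ i).eval x - cst' j := by
  set Cm : Matrix (Fin k) (Fin k) ℤ := Matrix.of fun j i => (taylor x0 (ψ j)).coeff ((i : ℕ) + 1) with hCm
  have hCm' : ∀ j i, Cm j i = (taylor x0 (ψ j)).coeff ((i : ℕ) + 1) := fun j i => rfl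
  have hdC := alg2 hψ x0 Cm hCm'
  set Φ0 : Fin k → ℤ[X] := fun j => ∑ t, C (Cm.adjugate j t) * taylor x0 (ψ t) with hΦ0
  have hcoef : ∀ (j : Fin k) (i : ℕ), i < k → (Φ0 j).coeff (i + 1) = if i = (j : ℕ) then Cm.det else 0 :=
    fun j i hi => adj_coeff ψ x0 Cm hCm' j i hi
  have hmapΦ : ∀ j : Fin k, (Φ0 j).map (Int.castRingHom (ZMod p)) =
      C (((Φ0 j).coeff 0 : ℤ) : ZMod p) + C ((Cm.det : ℤ) : ZMod p) * X ^ ((j : ℕ) + 1) := by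
    intro j
    obtain ⟨u, hu, hq⟩ := hψ
    ext t
    rcases t with _ | i
    · simp
    · rw [coeff_add, coeff_C, coeff_C_mul, coeff_X_pow]
      simp only [Nat.add_eq_zero_iff, one_ne_zero, and_false, if_false, zero_add, add_left_inj]
      by_cases hi : i < k
      · rw [coeff_map, hcoef j i hi]
        split_ifs <;> simp
      · rw [if_neg (by have := j.2; omega), mul_zero]
        apply coeff_eq_zero_of_natDegree_lt
        have : ((Φ0 j).map (Int.castRingHom (ZMod p))).natDegree ≤ k := by
          simp only [hΦ0, Polynomial.map_sum, Polynomial.map_mul, map_C]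
          apply natDegree_sum_le_of_forall_le
          intro t _
          refine (natDegree_C_mul_le _ _).trans ?_
          rw [map_taylor', natDegree_taylor, cls_map (hq t)]
          exact (natDegree_C_mul_X_pow_le _ _).trans t.2
        omega
  set Φ : Fin l → ℤ[X] := fun j => Φ0 ⟨k - l + (j : ℕ), by have := j.2; omega⟩ with hΦ
  set E : Matrix (Fin l) (Fin l) ℤ := Matrix.of fun j i => (taylor (x1 - x0) (Φ j)).coeff ((i : ℕ) + 1) with hE
  have hE' : ∀ j i, E j i = (taylor (x1 - x0) (Φ j)).coeff ((i : ℕ) + 1) := fun j i => rfl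
  have hdE : ¬ (p : ℤ) ∣ E.det := by
    apply not_dvd_det Φ (x1 - x0) E hE'
    intro w hw
    refine vander_aux (F := ZMod p) p k l hkp hlk (((x1 - x0 : ℤ)) : ZMod p) ?_ w
      (fun j => (((Φ j).coeff 0 : ℤ) : ZMod p)) ((Cm.det : ℤ) : ZMod p) ?_ ?_
    · rwa [Ne, ZMod.intCast_zmod_eq_zero_iff_dvd]
    · rwa [Ne, ZMod.intCast_zmod_eq_zero_iff_dvd]
    · intro i hi
      rw [← hw i hi]
      congr 2
      refine Finset.sum_congr rfl fun j _ => ?_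
      rw [hΦ]
      simp only [hmapΦ]
  obtain ⟨ψ', cst, hψ', hres⟩ := alg_rescale p l A hA Φ (x1 - x0) E hE' hdE
  have hev : ∀ (j : Fin l) (x : ℤ), ∑ i, (∑ t : Fin l, E.adjugate j t *
      Cm.adjugate ⟨k - l + (t : ℕ), by have := t.2; omega⟩ i) * (ψ i).eval x =
      ∑ t, E.adjugate j t * (Φ t).eval (x - x0) := by
    intro j x
    simp only [Finset.sum_mul]
    rw [Finset.sum_comm]
    refine Finset.sum_congr rfl fun t _ => ?_
    simp only [hΦ, hΦ0, eval_finset_sum, eval_mul, eval_C, taylor_eval, sub_add_cancel, Finset.mul_sum]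
    exact Finset.sum_congr rfl fun i _ => by ring
  refine ⟨fun j i => ∑ t : Fin l, E.adjugate j t *
      Cm.adjugate ⟨k - l + (t : ℕ), by have := t.2; omega⟩ i, ψ', cst,
      fun j => ∑ t, E.adjugate j t * (Φ t).coeff 0, hψ', ?_, ?_⟩
  · intro j y
    rw [hev, ← hres j y]
    refine Finset.sum_congr rfl fun i _ => ?_
    congr 2
    ring
  · intro b j x hb
    rw [hev, ← Finset.sum_sub_distrib]
    apply Finset.dvd_sum
    intro t _
    rw [← mul_sub]
    apply Dvd.dvd.mul_left
    have h1 : X ^ (k - l + 1) ∣ Φ t - C ((Φ t).coeff 0) := by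
      rw [X_pow_dvd_iff]
      intro s hs
      rcases s with _ | i
      · simp
      · rw [coeff_sub, coeff_C]
        simp only [hΦ]
        rw [hcoef _ i (by omega), if_neg (by simp only; omega)]
        simp
    obtain ⟨R, hR⟩ := h1
    have h2 : (Φ t).eval (x - x0) - (Φ t).coeff 0 = (x - x0) ^ (k - l + 1) * R.eval (x - x0) := by
      have := congrArg (eval (x - x0)) hR
      simpa using this
    rw [h2, pow_mul]
    exact Dvd.dvd.mul_right (pow_dvd_pow_of_dvd hb _) _

end HB
end

section
namespace HB
open Finset Polynomial

/-- norm squared -/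
noncomputable def nm (p : ℕ) [NeZero p] (k n : ℕ) (ψ : Fin k → ℤ[X]) (a : ℤ → ℂ) (T : Finset ℤ) : ℝ :=
  (∑ w : Fin k → ZMod (p ^ (k * n)), ‖ex ψ a T w‖ ^ (2 * rr k)) ^ (1 / (rr k : ℝ))

/-- square function norm -/
noncomputable def Sq (p : ℕ) [NeZero p] (k n : ℕ) (ψ : Fin k → ℤ[X]) (a : ℤ → ℂ) (T : Finset ℤ) : ℝ :=
  ∑ U ∈ parts (p ^ n) T, nm p k n ψ a U

lemma nm_nonneg (p : ℕ) [NeZero p] (k n : ℕ) (ψ : Fin k → ℤ[X]) (a : ℤ → ℂ) (T : Finset ℤ) :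
    0 ≤ nm p k n ψ a T := Real.rpow_nonneg (Finset.sum_nonneg fun w _ => by positivity) _

lemma Sq_nonneg (p : ℕ) [NeZero p] (k n : ℕ) (ψ : Fin k → ℤ[X]) (a : ℤ → ℂ) (T : Finset ℤ) :
    0 ≤ Sq p k n ψ a T := Finset.sum_nonneg fun U _ => nm_nonneg p k n ψ a U

/-- bilinear estimate -/
def Bil (p : ℕ) [NeZero p] (k n l A b : ℕ) (M : ℝ) : Prop :=
  ∀ ψ : Fin k → ℤ[X], Cls p k ψ → ∀ (a : ℤ → ℂ) (x0 x1 : ℤ), ¬ (p : ℤ) ∣ x1 - x0 →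
    ∀ T T' : Finset ℤ, (∀ x ∈ T, ((p ^ A : ℕ) : ℤ) ∣ x - x1) → (∀ x ∈ T', ((p ^ b : ℕ) : ℤ) ∣ x - x0) →
    ∑ w : Fin k → ZMod (p ^ (k * n)), ‖ex ψ a T w‖ ^ (2 * rr l) * ‖ex ψ a T' w‖ ^ (2 * (rr k - rr l)) ≤
      M * (Sq p k n ψ a T ^ (rr l) * Sq p k n ψ a T' ^ (rr k - rr l))

lemma Bil.mono {p : ℕ} [NeZero p] {k n l A b : ℕ} {M M' : ℝ} (h : Bil p k n l A b M) (hM : M ≤ M') :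
    Bil p k n l A b M' := by
  intro ψ hψ a x0 x1 hx T T' hT hT'
  refine (h ψ hψ a x0 x1 hx T T' hT hT').trans ?_
  have := Sq_nonneg p k n ψ a T
  have := Sq_nonneg p k n ψ a T'
  gcongr

lemma S0aux {p : ℕ} [Fact p.Prime] {k n b : ℕ} (hk : 1 ≤ k) {K : ℝ} (hK : 0 ≤ K) (hb : 1 ≤ b) (hbn : b ≤ n)
    (hD : Dec p k (n - b) K) {ψ : Fin k → ℤ[X]} (hψ : Cls p k ψ) (a : ℤ → ℂ) (x0 : ℤ) (T : Finset ℤ)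
    (hT : ∀ x ∈ T, ((p ^ b : ℕ) : ℤ) ∣ x - x0) :
    ∑ w : Fin k → ZMod (p ^ (k * n)), ‖ex ψ a T w‖ ^ (2 * rr k) ≤ K * Sq p k n ψ a T ^ (rr k) := by
  set E : Matrix (Fin k) (Fin k) ℤ := Matrix.of fun j i => (taylor x0 (ψ j)).coeff ((i : ℕ) + 1) with hE
  have hE' : ∀ j i, E j i = (taylor x0 (ψ j)).coeff ((i : ℕ) + 1) := fun j i => rfl
  obtain ⟨ψ', cst, hψ', h⟩ := alg_rescale p k b hb ψ x0 E hE' (alg2 hψ x0 E hE')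
  have := block hD hK hk ψ a (fun j i => E.adjugate j i) ψ' hψ' cst b x0 h (n := n)
    (by rw [mul_comm b k, ← mul_add]; exact Nat.mul_le_mul_left _ (by omega))
    (fun _ => 1) (fun _ => zero_le_one) (fun _ _ => rfl) T hT
  simp only [one_mul] at this
  rw [show b + (n - b) = n by omega] at this
  exact this

lemma S0 {p : ℕ} [Fact p.Prime] {k n b : ℕ} (hk : 1 ≤ k) {K : ℝ} (hK : 0 ≤ K) (hb : 1 ≤ b) (hbn : b ≤ n)
    (hD : Dec p k (n - b) K) (A : ℕ) : Bil p k n 0 A b K := by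
  intro ψ hψ a x0 x1 hx T T' hT hT'
  have := S0aux hk hK hb hbn hD hψ a x0 T' hT'
  simpa [show rr 0 = 0 by rfl] using this

lemma ex_shift {p : ℕ} [NeZero p] (k n l m A : ℕ) (B : Fin l → Fin k → ℤ) (cst : Fin l → ℤ)
    (ψ : Fin k → ℤ[X]) (a : ℤ → ℂ) (T : Finset ℤ)
    (s : ℕ) (hs : l * m + A * l ≤ s) (hn : s ≤ k * n)
    (hz : ∀ x ∈ T, ∀ j, (p : ℤ) ^ s ∣ ∑ i, B j i * (ψ i).eval x - cst j)
    (w : Fin k → ZMod (p ^ (k * n))) (c : Fin l → ZMod (p ^ (l * m))) :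
    ‖ex ψ a T (w + vv p k n l m A B c)‖ = ‖ex ψ a T w‖ := by
  have : ex ψ a T (w + vv p k n l m A B c) = ex ψ a T w * ZMod.stdAddChar ((∑ j : Fin l,
      (p : ℤ) ^ (k * n - l * m - A * ((j : ℕ) + 1)) * ((c j).val : ℤ) * cst j : ℤ) :
        ZMod (p ^ (k * n))) := by
    unfold ex
    rw [Finset.sum_mul]
    refine Finset.sum_congr rfl fun x hx => ?_
    rw [ph_add, ph_vv_const k n l m A B cst c _ s hs hn (hz x hx)]
    ring
  rw [this, norm_mul, norm_std, mul_one]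

lemma S1 {p : ℕ} [Fact p.Prime] {k n l A A' b : ℕ} (hkp : k < p) (hl : 1 ≤ l) (hlk : l ≤ k)
    {K M : ℝ} (hK : 0 ≤ K) (hM : 0 ≤ M) (hA : 1 ≤ A) (hAA : A ≤ A') (hAn : A' ≤ n) (hb : 1 ≤ b)
    (hbn : (k - l + 1) * b ≤ k * n)
    (hl' : l * A' ≤ (k - l + 1) * b)
    (hD : Dec p l (A' - A) K) (hB : Bil p k n l A' b M) : Bil p k n l A b (K * M) := by
  intro ψ hψ a x0 x1 hx T T' hT hT'
  obtain ⟨B, ψ', cst, cst', hψ', h1, h2⟩ := alg_bil hkp hlk hψ A hA x0 x1 hx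
  have hs : l * (A' - A) + A * l ≤ b * (k - l + 1) := by
    rw [mul_comm A l, ← mul_add, mul_comm b]
    rwa [show A' - A + A = A' by omega]
  have hs2 : b * (k - l + 1) ≤ k * n := by rwa [mul_comm b]
  have hr : (rr l : ℝ) ≠ 0 := by have := rr_pos hl; positivity
  have hrn : rr l ≠ 0 := by have := rr_pos hl; omega
  have := block hD hK hl ψ a B ψ' hψ' cst A x1 h1 (n := n) (hs.trans hs2)
    (fun w => ‖ex ψ a T' w‖ ^ (2 * (rr k - rr l))) (fun _ => by positivity)
    (fun w c => by
      show ‖_‖ ^ _ = ‖_‖ ^ _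
      rw [ex_shift k n l (A' - A) A B cst' ψ a T' (b * (k - l + 1)) hs hs2]
      intro x hx j
      refine h2 b j x ?_
      have := hT' x hx
      push_cast at this
      exact this) T hT
  rw [show A + (A' - A) = A' by omega] at this
  calc _ = ∑ w : Fin k → ZMod (p ^ (k * n)), ‖ex ψ a T' w‖ ^ (2 * (rr k - rr l)) * ‖ex ψ a T w‖ ^ (2 * rr l) :=
        Finset.sum_congr rfl fun w _ => mul_comm _ _
    _ ≤ _ := this
    _ ≤ K * (∑ U ∈ parts (p ^ A') T, (M * Sq p k n ψ a T' ^ (rr k - rr l)) ^ (1 / (rr l : ℝ)) *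
          Sq p k n ψ a U) ^ (rr l) := by
        refine mul_le_mul_of_nonneg_left ?_ hK
        refine pow_le_pow_left₀ (Finset.sum_nonneg fun U _ => Real.rpow_nonneg
          (Finset.sum_nonneg fun w _ => by positivity) _) ?_ _
        refine Finset.sum_le_sum fun U hU => ?_
        have hS := Sq_nonneg p k n ψ a U
        have hS' := Sq_nonneg p k n ψ a T'
        have e : Sq p k n ψ a U = (Sq p k n ψ a U ^ (rr l)) ^ (1 / (rr l : ℝ)) := by
          rw [one_div, Real.pow_rpow_inv_natCast hS hrn]
        rw [e, ← Real.mul_rpow (by positivity) (by positivity)]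
        refine Real.rpow_le_rpow (Finset.sum_nonneg fun w _ => by positivity) ?_ (by positivity)
        obtain ⟨x2, hx2⟩ := parts_nonempty hU
        have hx2T := hT x2 (parts_subset hU hx2)
        have h3 := hB ψ hψ a x0 x2 (by
          intro hd
          apply hx
          have h4 : (p : ℤ) ∣ x2 - x1 := by
            refine dvd_trans ?_ hx2T
            push_cast
            exact dvd_pow_self _ (by omega)
          have := dvd_sub hd h4
          simpa using this) U T' (fun x hxU => parts_cong hU hx2 hxU) hT'
        calc _ = _ := Finset.sum_congr rfl fun w _ => mul_comm _ _
          _ ≤ _ := h3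
          _ = _ := by ring
    _ = _ := by
        rw [← Finset.mul_sum]
        have e1 : ∑ U ∈ parts (p ^ A') T, Sq p k n ψ a U = Sq p k n ψ a T :=
          sum_parts_nest (pow_dvd_pow p hAn) T _
        rw [e1, mul_pow]
        have hS' := Sq_nonneg p k n ψ a T'
        rw [one_div, Real.rpow_inv_natCast_pow (by positivity) hrn]
        ring

lemma rr_id {k l : ℕ} (hl : 1 ≤ l) (hlk : l ≤ k) :
    (k - l) * rr (l - 1) + (rr k - rr (k - l)) = (k - l + 1) * rr l := by
  obtain ⟨t, rfl⟩ : ∃ t, k = l + t := ⟨k - l, by omega⟩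
  obtain ⟨s, rfl⟩ : ∃ s, l = s + 1 := ⟨l - 1, by omega⟩
  have h1 := two_rr (s + 1 + t)
  have h2 := two_rr t
  have h3 := two_rr s
  have h4 := two_rr (s + 1)
  have h5 : rr t ≤ rr (s + 1 + t) := rr_mono (by omega)
  simp only [Nat.add_sub_cancel_left, Nat.add_sub_cancel]
  zify [h5] at *
  nlinarith

lemma S2 {p : ℕ} [NeZero p] {k n l A b : ℕ} (hl : 1 ≤ l) (hlk : l ≤ k) {M1 M2 M : ℝ}
    (h1 : 0 ≤ M1) (hM0 : 0 ≤ M) (hM : M1 ^ (k - l) * M2 ≤ M ^ (k - l + 1))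
    (hB1 : Bil p k n (l - 1) A b M1) (hB2 : Bil p k n (k - l) b A M2) : Bil p k n l A b M := by
  intro ψ hψ a x0 x1 hx T T' hT hT'
  have hB1 := hB1 ψ hψ a x0 x1 hx T T' hT hT'
  have hB2 := hB2 ψ hψ a x1 x0 (by rw [← dvd_neg]; simpa using hx) T' T hT' hT
  have hS := Sq_nonneg p k n ψ a T
  have hS' := Sq_nonneg p k n ψ a T'
  have e1 := rr_id hl hlk
  have e2 : (k - l) * (rr k - rr (l - 1)) + rr (k - l) = (k - l + 1) * (rr k - rr l) := by
    have h3 : rr (l - 1) ≤ rr k := rr_mono (by omega)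
    have h4 : rr (k - l) ≤ rr k := rr_mono (by omega)
    have h5 : rr l ≤ rr k := rr_mono (by omega)
    zify [h3, h4, h5] at *
    linarith
  have H := holder_nat Finset.univ
    (fun w : Fin k → ZMod (p ^ (k * n)) => ‖ex ψ a T w‖ ^ (2 * rr (l - 1)) * ‖ex ψ a T' w‖ ^ (2 * (rr k - rr (l - 1))))
    (fun w => ‖ex ψ a T' w‖ ^ (2 * rr (k - l)) * ‖ex ψ a T w‖ ^ (2 * (rr k - rr (k - l))))
    (fun w => ‖ex ψ a T w‖ ^ (2 * rr l) * ‖ex ψ a T' w‖ ^ (2 * (rr k - rr l))) (k - l)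
    (fun w => by positivity) (fun w => by positivity) (fun w => by positivity)
    (fun w => by
      have : ∀ x y : ℝ, (x ^ (2 * rr l) * y ^ (2 * (rr k - rr l))) ^ (k - l + 1) =
          (x ^ (2 * rr (l - 1)) * y ^ (2 * (rr k - rr (l - 1)))) ^ (k - l) *
            (y ^ (2 * rr (k - l)) * x ^ (2 * (rr k - rr (k - l)))) := by
        intro x y
        have ex : 2 * rr l * (k - l + 1) = 2 * rr (l - 1) * (k - l) + 2 * (rr k - rr (k - l)) := by
          linarith
        have ey : 2 * (rr k - rr l) * (k - l + 1) = 2 * (rr k - rr (l - 1)) * (k - l) + 2 * rr (k - l) := by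
          linarith
        rw [mul_pow, mul_pow, ← pow_mul, ← pow_mul, ex, ey, ← pow_mul, ← pow_mul, pow_add, pow_add]
        ring
      exact this _ _)
  have hn : k - l + 1 ≠ 0 := by omega
  refine le_of_pow_le_pow_left₀ hn (by positivity) (H.trans ?_)
  calc _ ≤ (M1 * (Sq p k n ψ a T ^ rr (l - 1) * Sq p k n ψ a T' ^ (rr k - rr (l - 1)))) ^ (k - l) *
        (M2 * (Sq p k n ψ a T' ^ rr (k - l) * Sq p k n ψ a T ^ (rr k - rr (k - l)))) := by
        gcongr
    _ = M1 ^ (k - l) * M2 * (Sq p k n ψ a T ^ rr l * Sq p k n ψ a T' ^ (rr k - rr l)) ^ (k - l + 1) := by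
        have : ∀ x y : ℝ, (M1 * (x ^ rr (l - 1) * y ^ (rr k - rr (l - 1)))) ^ (k - l) *
            (M2 * (y ^ rr (k - l) * x ^ (rr k - rr (k - l)))) =
            M1 ^ (k - l) * M2 * (x ^ rr l * y ^ (rr k - rr l)) ^ (k - l + 1) := by
          intro x y
          have ex : rr l * (k - l + 1) = rr (l - 1) * (k - l) + (rr k - rr (k - l)) := by
            linarith
          have ey : (rr k - rr l) * (k - l + 1) = (rr k - rr (l - 1)) * (k - l) + rr (k - l) := by
            linarith
          rw [mul_pow _ _ (k - l + 1), ← pow_mul x, ← pow_mul y, ex, ey, pow_add, pow_add, mul_pow, mul_pow,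
            pow_mul, pow_mul]
          ring
        exact this _ _
    _ ≤ M ^ (k - l + 1) * (Sq p k n ψ a T ^ rr l * Sq p k n ψ a T' ^ (rr k - rr l)) ^ (k - l + 1) := by
        gcongr
    _ = _ := by rw [← mul_pow]

end HB
end

section
namespace HB
open Finset Polynomial

lemma ex_parts {M : ℕ} [NeZero M] {k : ℕ} (ψ : Fin k → ℤ[X]) (a : ℤ → ℂ) (T : Finset ℤ) (m : ℕ)
    (w : Fin k → ZMod M) : ex ψ a T w = ∑ U ∈ parts m T, ex ψ a U w := by
  unfold ex
  rw [sum_parts]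

lemma Sq_parts {p : ℕ} [NeZero p] {k n m : ℕ} (h : m ≤ n) (ψ : Fin k → ℤ[X]) (a : ℤ → ℂ) (T : Finset ℤ) :
    ∑ U ∈ parts (p ^ m) T, Sq p k n ψ a U = Sq p k n ψ a T :=
  sum_parts_nest (pow_dvd_pow p h) T _

lemma sum_Sq_pow {p : ℕ} [NeZero p] {k n m : ℕ} (h : m ≤ n) (ψ : Fin k → ℤ[X]) (a : ℤ → ℂ) (T : Finset ℤ)
    {q : ℕ} (hq : 1 ≤ q) :
    ∑ U ∈ parts (p ^ m) T, Sq p k n ψ a U ^ q ≤ Sq p k n ψ a T ^ q := by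
  rw [← Sq_parts h ψ a T]
  exact sum_pow_le_pow_sum' _ _ (fun U _ => Sq_nonneg p k n ψ a U) hq

lemma ex_crude {p : ℕ} [NeZero p] {M : ℕ} [NeZero M] {k : ℕ} (ψ : Fin k → ℤ[X]) (a : ℤ → ℂ) (T : Finset ℤ) (m : ℕ)
    (w : Fin k → ZMod M) {q : ℕ} (hq : 1 ≤ q) :
    ‖ex ψ a T w‖ ^ q ≤ (p : ℝ) ^ (m * q) * ∑ U ∈ parts (p ^ m) T, ‖ex ψ a U w‖ ^ q := by
  rw [ex_parts ψ a T (p ^ m)]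
  refine (norm_sum_pow_le _ _ hq).trans ?_
  have h1 : ((parts (p ^ m) T).card : ℝ) ≤ (p : ℝ) ^ m := by
    exact_mod_cast card_parts_le (pow_pos (NeZero.pos p) m) T
  rw [pow_mul]
  have : 0 ≤ ∑ U ∈ parts (p ^ m) T, ‖ex ψ a U w‖ ^ q := Finset.sum_nonneg fun _ _ => by positivity
  gcongr

lemma crude {p : ℕ} [Fact p.Prime] {k n l A b : ℕ} (hl : 1 ≤ rr l) (hlk : rr l + 1 ≤ rr k) (hA : 1 ≤ A) (hb : 1 ≤ b)
    (hAn : A ≤ n) (hbn : b ≤ n) {M : ℝ} (hM : 0 ≤ M) (hB : Bil p k n l A b M) :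
    Bil p k n l 1 1 ((p : ℝ) ^ ((A + b) * (2 * rr k)) * M) := by
  intro ψ hψ a x0 x1 hx T T' hT hT'
  have hp : (1 : ℝ) ≤ p := by exact_mod_cast (Fact.out : p.Prime).one_le
  have key : ∀ U ∈ parts (p ^ A) T, ∀ U' ∈ parts (p ^ b) T',
      ∑ w : Fin k → ZMod (p ^ (k * n)), ‖ex ψ a U w‖ ^ (2 * rr l) * ‖ex ψ a U' w‖ ^ (2 * (rr k - rr l)) ≤
      M * (Sq p k n ψ a U ^ (rr l) * Sq p k n ψ a U' ^ (rr k - rr l)) := by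
    intro U hU U' hU'
    obtain ⟨x2, hx2⟩ := parts_nonempty hU
    obtain ⟨x3, hx3⟩ := parts_nonempty hU'
    refine hB ψ hψ a x3 x2 ?_ U U' (fun x h => parts_cong hU hx2 h) (fun x h => parts_cong hU' hx3 h)
    intro hd
    have h1 := hT x2 (parts_subset hU hx2)
    have h2 := hT' x3 (parts_subset hU' hx3)
    rw [pow_one] at h1 h2
    apply hx
    rw [show x1 - x0 = x2 - x3 - (x2 - x1) + (x3 - x0) by ring]
    exact dvd_add (dvd_sub hd h1) h2
  calc _ ≤ ∑ w : Fin k → ZMod (p ^ (k * n)),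
        ((p : ℝ) ^ (A * (2 * rr l)) * ∑ U ∈ parts (p ^ A) T, ‖ex ψ a U w‖ ^ (2 * rr l)) *
        ((p : ℝ) ^ (b * (2 * (rr k - rr l))) * ∑ U' ∈ parts (p ^ b) T', ‖ex ψ a U' w‖ ^ (2 * (rr k - rr l))) := by
        refine Finset.sum_le_sum fun w _ => ?_
        have h1 := ex_crude (p := p) ψ a T A w (q := 2 * rr l) (by omega)
        have h2 := ex_crude (p := p) ψ a T' b w (q := 2 * (rr k - rr l)) (by omega)
        exact mul_le_mul h1 h2 (by positivity) (le_trans (by positivity) h1)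
    _ = (p : ℝ) ^ (A * (2 * rr l)) * (p : ℝ) ^ (b * (2 * (rr k - rr l))) *
        ∑ U ∈ parts (p ^ A) T, ∑ U' ∈ parts (p ^ b) T', ∑ w : Fin k → ZMod (p ^ (k * n)),
          ‖ex ψ a U w‖ ^ (2 * rr l) * ‖ex ψ a U' w‖ ^ (2 * (rr k - rr l)) := by
        simp_rw [Finset.sum_comm (s := parts (p ^ b) T') (t := Finset.univ)]
        rw [Finset.sum_comm (s := parts (p ^ A) T) (t := Finset.univ), Finset.mul_sum]
        refine Finset.sum_congr rfl fun w _ => ?_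
        rw [mul_mul_mul_comm, Finset.sum_mul_sum]
    _ ≤ (p : ℝ) ^ (A * (2 * rr l)) * (p : ℝ) ^ (b * (2 * (rr k - rr l))) *
        ∑ U ∈ parts (p ^ A) T, ∑ U' ∈ parts (p ^ b) T',
          M * (Sq p k n ψ a U ^ (rr l) * Sq p k n ψ a U' ^ (rr k - rr l)) := by
        refine mul_le_mul_of_nonneg_left ?_ (by positivity)
        exact Finset.sum_le_sum fun U hU => Finset.sum_le_sum fun U' hU' => key U hU U' hU'
    _ = (p : ℝ) ^ (A * (2 * rr l)) * (p : ℝ) ^ (b * (2 * (rr k - rr l))) * (M *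
        ((∑ U ∈ parts (p ^ A) T, Sq p k n ψ a U ^ (rr l)) * ∑ U' ∈ parts (p ^ b) T', Sq p k n ψ a U' ^ (rr k - rr l))) := by
        rw [Finset.sum_mul_sum, Finset.mul_sum]
        simp_rw [Finset.mul_sum]
    _ ≤ (p : ℝ) ^ ((A + b) * (2 * rr k)) * (M *
        (Sq p k n ψ a T ^ (rr l) * Sq p k n ψ a T' ^ (rr k - rr l))) := by
        have h1 := sum_Sq_pow hAn ψ a T hl (p := p)
        have h2 := sum_Sq_pow hbn ψ a T' (q := rr k - rr l) (by omega) (p := p)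
        have h3 : 0 ≤ Sq p k n ψ a T ^ (rr l) := pow_nonneg (Sq_nonneg _ _ _ _ _ _) _
        have h4 : 0 ≤ ∑ U' ∈ parts (p ^ b) T', Sq p k n ψ a U' ^ (rr k - rr l) :=
          Finset.sum_nonneg fun _ _ => pow_nonneg (Sq_nonneg _ _ _ _ _ _) _
        have h5 : 0 ≤ ∑ U' ∈ parts (p ^ A) T, Sq p k n ψ a U' ^ (rr l) :=
          Finset.sum_nonneg fun _ _ => pow_nonneg (Sq_nonneg _ _ _ _ _ _) _
        rw [← pow_add]
        have h6 : A * (2 * rr l) + b * (2 * (rr k - rr l)) ≤ (A + b) * (2 * rr k) := by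
          rw [add_mul]
          refine Nat.add_le_add (Nat.mul_le_mul_left _ (by omega)) (Nat.mul_le_mul_left _ (by omega))
        have h7 : (p : ℝ) ^ (A * (2 * rr l) + b * (2 * (rr k - rr l))) ≤ (p : ℝ) ^ ((A + b) * (2 * rr k)) :=
          pow_le_pow_right₀ hp h6
        refine mul_le_mul h7 (mul_le_mul_of_nonneg_left (mul_le_mul h1 h2 h4 h3) hM)
          (mul_nonneg hM (mul_nonneg h5 h4)) (by positivity)
    _ = _ := by ring

lemma broad_narrow {ι : Type*} [DecidableEq ι] (s : Finset ι) (z : ι → ℂ) (p : ℕ) (hp : 0 < p) (hs : s.card ≤ p)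
    (i j : ℕ) (hij : 1 ≤ i + j) :
    ‖∑ c ∈ s, z c‖ ^ (i + j) ≤ 2 ^ (i + j) * ∑ c ∈ s, ‖z c‖ ^ (i + j) +
      (p : ℝ) ^ (2 * (i + j)) * ∑ c ∈ s, ∑ c' ∈ s.erase c, ‖z c‖ ^ i * ‖z c'‖ ^ j := by
  rcases s.eq_empty_or_nonempty with rfl | hne
  · simp [zero_pow (show i + j ≠ 0 by omega)]
  obtain ⟨c, hc, hmax⟩ := Finset.exists_max_image s (fun i => ‖z i‖) hne
  have hp' : (0 : ℝ) < p := by exact_mod_cast hp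
  have hp1 : (1 : ℝ) ≤ p := by exact_mod_cast hp
  have n1 : 0 ≤ ∑ c ∈ s, ‖z c‖ ^ (i + j) := Finset.sum_nonneg fun _ _ => by positivity
  have n2 : 0 ≤ ∑ c ∈ s, ∑ c' ∈ s.erase c, ‖z c‖ ^ i * ‖z c'‖ ^ j :=
    Finset.sum_nonneg fun _ _ => Finset.sum_nonneg fun _ _ => by positivity
  by_cases h : ∃ c' ∈ s.erase c, ‖z c‖ ≤ p * ‖z c'‖
  · obtain ⟨c', hc', h1⟩ := h
    have h2 : ‖∑ c ∈ s, z c‖ ≤ p * ‖z c‖ := by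
      refine (norm_sum_le _ _).trans ((Finset.sum_le_card_nsmul _ _ _ hmax).trans ?_)
      rw [nsmul_eq_mul]
      have : (s.card : ℝ) ≤ p := by exact_mod_cast hs
      gcongr
    have h3 : ‖z c‖ ^ i * ‖z c'‖ ^ j ≤ ∑ c ∈ s, ∑ c' ∈ s.erase c, ‖z c‖ ^ i * ‖z c'‖ ^ j := by
      refine le_trans ?_ (Finset.single_le_sum (f := fun c => ∑ c' ∈ s.erase c, ‖z c‖ ^ i * ‖z c'‖ ^ j)
        (fun _ _ => Finset.sum_nonneg fun _ _ => by positivity) hc)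
      exact (Finset.single_le_sum (f := fun c' => ‖z c‖ ^ i * ‖z c'‖ ^ j) (fun _ _ => by positivity) hc')
    calc ‖∑ c ∈ s, z c‖ ^ (i + j) ≤ (p * ‖z c‖) ^ (i + j) := by gcongr
      _ = (p : ℝ) ^ (i + j) * (‖z c‖ ^ i * ‖z c‖ ^ j) := by rw [mul_pow, pow_add ‖z c‖]
      _ ≤ (p : ℝ) ^ (i + j) * (‖z c‖ ^ i * (p * ‖z c'‖) ^ j) := by gcongr
      _ = (p : ℝ) ^ (i + j + j) * (‖z c‖ ^ i * ‖z c'‖ ^ j) := by rw [pow_add _ (i + j) j, mul_pow]; ring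
      _ ≤ (p : ℝ) ^ (2 * (i + j)) * (‖z c‖ ^ i * ‖z c'‖ ^ j) := by
          gcongr
          omega
      _ ≤ (p : ℝ) ^ (2 * (i + j)) * _ := by gcongr
      _ ≤ _ := le_add_of_nonneg_left (by positivity)
  · push Not at h
    have h2 : ‖∑ c ∈ s, z c‖ ≤ 2 * ‖z c‖ := by
      rw [← Finset.add_sum_erase s z hc]
      refine (norm_add_le _ _).trans ?_
      have h4 : ‖∑ x ∈ s.erase c, z x‖ ≤ ‖z c‖ := by
        refine (norm_sum_le _ _).trans ?_
        have : ∑ x ∈ s.erase c, ‖z x‖ ≤ (s.erase c).card • (‖z c‖ / p) :=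
          Finset.sum_le_card_nsmul _ _ _ (fun x hx => by
            rw [le_div_iff₀ hp', mul_comm]; exact (h x hx).le)
        refine this.trans ?_
        rw [nsmul_eq_mul]
        have h5 : ((s.erase c).card : ℝ) ≤ p := by
          exact_mod_cast (Finset.card_le_card (Finset.erase_subset _ _)).trans hs
        calc _ ≤ (p : ℝ) * (‖z c‖ / p) := by gcongr
          _ = _ := by field_simp
      linarith
    calc ‖∑ c ∈ s, z c‖ ^ (i + j) ≤ (2 * ‖z c‖) ^ (i + j) := by gcongr
      _ = 2 ^ (i + j) * ‖z c‖ ^ (i + j) := by rw [mul_pow]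
      _ ≤ 2 ^ (i + j) * ∑ c ∈ s, ‖z c‖ ^ (i + j) := by
          gcongr
          exact Finset.single_le_sum (f := fun c => ‖z c‖ ^ (i + j)) (fun _ _ => by positivity) hc
      _ ≤ _ := le_add_of_nonneg_right (by positivity)

lemma S3 {p : ℕ} [Fact p.Prime] {k n l : ℕ} (hk : 1 ≤ k) (hl : 1 ≤ rr l) (hlk : rr l + 1 ≤ rr k) (hn : 1 ≤ n)
    {K M : ℝ} (hK : 0 ≤ K) (hM : 0 ≤ M) (hD : Dec p k (n - 1) K) (hB : Bil p k n l 1 1 M) :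
    Dec p k n (2 ^ (2 * rr k) * K + (p : ℝ) ^ (4 * rr k) * M) := by
  intro ψ hψ a T
  show _ ≤ _ * (Sq p k n ψ a T) ^ (rr k)
  have hS := Sq_nonneg p k n ψ a T
  have hp := (Fact.out : p.Prime).pos
  calc _ ≤ ∑ w : Fin k → ZMod (p ^ (k * n)), ((2 : ℝ) ^ (2 * rr k) * ∑ c ∈ parts (p ^ 1) T, ‖ex ψ a c w‖ ^ (2 * rr k) +
        (p : ℝ) ^ (4 * rr k) * ∑ c ∈ parts (p ^ 1) T, ∑ c' ∈ (parts (p ^ 1) T).erase c,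
          ‖ex ψ a c w‖ ^ (2 * rr l) * ‖ex ψ a c' w‖ ^ (2 * (rr k - rr l))) := by
        refine Finset.sum_le_sum fun w _ => ?_
        have := broad_narrow (parts (p ^ 1) T) (fun c => ex ψ a c w) p hp
          (by have := card_parts_le (m := p ^ 1) (by simpa using hp) T; simpa using this) (2 * rr l) (2 * (rr k - rr l)) (by omega)
        rw [show 2 * rr l + 2 * (rr k - rr l) = 2 * rr k by omega, ← ex_parts] at this
        rw [show 4 * rr k = 2 * (2 * rr k) by ring]
        exact this
    _ = 2 ^ (2 * rr k) * ∑ c ∈ parts (p ^ 1) T, ∑ w : Fin k → ZMod (p ^ (k * n)), ‖ex ψ a c w‖ ^ (2 * rr k) +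
        (p : ℝ) ^ (4 * rr k) * ∑ c ∈ parts (p ^ 1) T, ∑ c' ∈ (parts (p ^ 1) T).erase c,
          ∑ w : Fin k → ZMod (p ^ (k * n)), ‖ex ψ a c w‖ ^ (2 * rr l) * ‖ex ψ a c' w‖ ^ (2 * (rr k - rr l)) := by
        rw [Finset.sum_add_distrib, ← Finset.mul_sum, ← Finset.mul_sum]
        congr 2
        · rw [Finset.sum_comm]
        · rw [Finset.sum_comm]
          refine Finset.sum_congr rfl fun c _ => ?_
          rw [Finset.sum_comm]
    _ ≤ 2 ^ (2 * rr k) * ∑ c ∈ parts (p ^ 1) T, K * Sq p k n ψ a c ^ rr k +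
        (p : ℝ) ^ (4 * rr k) * ∑ c ∈ parts (p ^ 1) T, ∑ c' ∈ parts (p ^ 1) T,
          M * (Sq p k n ψ a c ^ (rr l) * Sq p k n ψ a c' ^ (rr k - rr l)) := by
        have h1 : ∀ c, 0 ≤ Sq p k n ψ a c := fun c => Sq_nonneg p k n ψ a c
        gcongr with c hc c hc
        · obtain ⟨x, hx⟩ := parts_nonempty hc
          exact S0aux hk hK le_rfl hn hD hψ a x c (fun y hy => parts_cong hc hx hy)
        · refine (Finset.sum_le_sum (fun c' hc' => ?_)).trans
            (Finset.sum_le_sum_of_subset_of_nonneg (Finset.erase_subset c _) (fun c' _ _ => ?_))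
          · obtain ⟨hne, hc'⟩ := Finset.mem_erase.1 hc'
            obtain ⟨x, hx⟩ := parts_nonempty hc
            obtain ⟨x', hx'⟩ := parts_nonempty hc'
            refine hB ψ hψ a x' x ?_ c c' (fun y hy => parts_cong hc hx hy) (fun y hy => parts_cong hc' hx' hy)
            intro hd
            apply hne
            rw [eq_cls_of_mem hc hx, eq_cls_of_mem hc' hx']
            apply cls_eq
            simpa using hd
          · have := h1 c; have := h1 c'
            positivity
    _ ≤ 2 ^ (2 * rr k) * (K * Sq p k n ψ a T ^ rr k) +
        (p : ℝ) ^ (4 * rr k) * (M * Sq p k n ψ a T ^ rr k) := by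
        gcongr
        · rw [← Finset.mul_sum]
          exact mul_le_mul_of_nonneg_left (sum_Sq_pow hn ψ a T (by omega)) hK
        · simp_rw [← Finset.mul_sum]
          refine mul_le_mul_of_nonneg_left ?_ hM
          rw [← Finset.sum_mul]
          have h1 := sum_Sq_pow hn ψ a T hl (p := p)
          have h2 := sum_Sq_pow hn ψ a T (q := rr k - rr l) (by omega) (p := p)
          calc _ ≤ Sq p k n ψ a T ^ rr l * Sq p k n ψ a T ^ (rr k - rr l) :=
                mul_le_mul h1 h2 (Finset.sum_nonneg fun _ _ => pow_nonneg (Sq_nonneg _ _ _ _ _ _) _)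
                  (pow_nonneg hS _)
            _ = _ := by rw [← pow_add]; congr 1; omega
    _ = _ := by ring

lemma nm_pow {p : ℕ} [NeZero p] {k n : ℕ} (hk : 1 ≤ rr k) (ψ : Fin k → ℤ[X]) (a : ℤ → ℂ) (T : Finset ℤ) :
    nm p k n ψ a T ^ (rr k) = ∑ w : Fin k → ZMod (p ^ (k * n)), ‖ex ψ a T w‖ ^ (2 * rr k) := by
  unfold nm
  rw [one_div, Real.rpow_inv_natCast_pow (Finset.sum_nonneg fun w _ => by positivity) (by omega)]

lemma Dec_triv (p : ℕ) [NeZero p] (k n : ℕ) (hk : 1 ≤ rr k) : Dec p k n ((p : ℝ) ^ (n * (2 * rr k))) := by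
  intro ψ hψ a T
  show _ ≤ _ * (Sq p k n ψ a T) ^ (rr k)
  refine (Finset.sum_le_sum fun w _ => ex_crude (p := p) ψ a T n w (by omega)).trans ?_
  rw [← Finset.mul_sum, Finset.sum_comm]
  refine mul_le_mul_of_nonneg_left ?_ (by positivity)
  simp_rw [← nm_pow hk]
  exact sum_pow_le_pow_sum' _ _ (fun U _ => nm_nonneg _ _ _ _ _ _) hk

lemma Bil_triv {p : ℕ} [NeZero p] {k n l : ℕ} (hl : 1 ≤ rr l) (hlk : rr l + 1 ≤ rr k) {K : ℝ}
    (hD : Dec p k n K) (A b : ℕ) : Bil p k n l A b (2 * K) := by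
  intro ψ hψ a x0 x1 hx T T' hT hT'
  have h1 : ∑ w : Fin k → ZMod (p ^ (k * n)), ‖ex ψ a T w‖ ^ (2 * rr k) ≤ K * Sq p k n ψ a T ^ (rr k) := hD ψ hψ a T
  have h2 : ∑ w : Fin k → ZMod (p ^ (k * n)), ‖ex ψ a T' w‖ ^ (2 * rr k) ≤ K * Sq p k n ψ a T' ^ (rr k) := hD ψ hψ a T'
  have hz : ∀ S : Finset ℤ, Sq p k n ψ a S = 0 → ∑ w : Fin k → ZMod (p ^ (k * n)), ‖ex ψ a S w‖ ^ (2 * rr k) ≤ K * Sq p k n ψ a S ^ (rr k) →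
      ∀ w : Fin k → ZMod (p ^ (k * n)), ‖ex ψ a S w‖ = 0 := by
    intro S h0 h w
    rw [h0, zero_pow (by omega), mul_zero] at h
    have := (Finset.single_le_sum (f := fun w => ‖ex ψ a S w‖ ^ (2 * rr k)) (fun _ _ => by positivity)
      (Finset.mem_univ w)).trans h
    exact eq_zero_of_pow_eq_zero (le_antisymm this (by positivity))
  rcases (Sq_nonneg p k n ψ a T).eq_or_lt with h0 | h0
  · rw [← h0, zero_pow (by omega)]
    simp [hz T h0.symm h1, show rr l ≠ 0 by omega]
  rcases (Sq_nonneg p k n ψ a T').eq_or_lt with h0' | h0'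
  · rw [← h0', zero_pow (by omega)]
    simp [hz T' h0'.symm h2, show rr k - rr l ≠ 0 by omega]
  generalize Sq p k n ψ a T = X at *
  generalize Sq p k n ψ a T' = Y at *
  have amgm : ∀ u v : ℝ, 0 ≤ u → 0 ≤ v → u ^ rr l * v ^ (rr k - rr l) ≤ u ^ rr k + v ^ rr k := by
    intro u v hu hv
    have e : rr k = rr l + (rr k - rr l) := by omega
    rcases le_total u v with h | h
    · calc u ^ rr l * v ^ (rr k - rr l) ≤ v ^ rr l * v ^ (rr k - rr l) := by gcongr
        _ = v ^ rr k := by rw [← pow_add, ← e]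
        _ ≤ _ := le_add_of_nonneg_left (by positivity)
    · calc u ^ rr l * v ^ (rr k - rr l) ≤ u ^ rr l * u ^ (rr k - rr l) := by gcongr
        _ = u ^ rr k := by rw [← pow_add, ← e]
        _ ≤ _ := le_add_of_nonneg_right (by positivity)
  have key : ∀ u v : ℝ, 0 ≤ u → 0 ≤ v → u ^ (2 * rr l) * v ^ (2 * (rr k - rr l)) ≤
      X ^ rr l * Y ^ (rr k - rr l) * (u ^ (2 * rr k) / X ^ rr k + v ^ (2 * rr k) / Y ^ rr k) := by
    intro u v hu hv
    have := amgm (u ^ 2 / X) (v ^ 2 / Y) (by positivity) (by positivity)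
    simp only [div_pow, ← pow_mul] at this
    calc _ = X ^ rr l * Y ^ (rr k - rr l) * (u ^ (2 * rr l) / X ^ rr l * (v ^ (2 * (rr k - rr l)) / Y ^ (rr k - rr l))) := by
          field_simp
      _ ≤ _ := mul_le_mul_of_nonneg_left this (by positivity)
  refine (Finset.sum_le_sum fun w _ => key _ _ (norm_nonneg _) (norm_nonneg _)).trans ?_
  rw [← Finset.mul_sum, Finset.sum_add_distrib, ← Finset.sum_div, ← Finset.sum_div]
  have e1 : (∑ w : Fin k → ZMod (p ^ (k * n)), ‖ex ψ a T w‖ ^ (2 * rr k)) / X ^ rr k ≤ K := by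
    rw [div_le_iff₀ (by positivity)]; exact h1
  have e2 : (∑ w : Fin k → ZMod (p ^ (k * n)), ‖ex ψ a T' w‖ ^ (2 * rr k)) / Y ^ rr k ≤ K := by
    rw [div_le_iff₀ (by positivity)]; exact h2
  rw [mul_comm]
  refine mul_le_mul_of_nonneg_right (by linarith) (by positivity)

end HB
end

section
namespace HB
open Finset Polynomial

lemma Dec_one (p : ℕ) [Fact p.Prime] (n : ℕ) : Dec p 1 n 1 := by
  intro ψ hψ a T
  obtain ⟨u, hu, hq⟩ := hψ
  obtain ⟨q, hq⟩ := hq 0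
  have hr : rr 1 = 1 := rfl
  rw [hr]
  simp only [mul_one, Nat.cast_one, div_one, Real.rpow_one, pow_one, one_mul]
  -- the correlation
  set c : ℤ → ℤ → ℂ := fun x y => ∑ w : Fin 1 → ZMod (p ^ (1 * n)),
    (a x * ph w (fun j => (ψ j).eval x)) * (starRingEnd ℂ) (a y * ph w (fun j => (ψ j).eval y)) with hc
  have hsum : ∀ S : Finset ℤ, ((∑ w : Fin 1 → ZMod (p ^ (1 * n)), ‖ex ψ a S w‖ ^ 2 : ℝ) : ℂ) =
      ∑ x ∈ S, ∑ y ∈ S, c x y := by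
    intro S
    push_cast
    have : ∀ w : Fin 1 → ZMod (p ^ (1 * n)), ((‖ex ψ a S w‖ : ℂ) ^ 2) = ∑ x ∈ S, ∑ y ∈ S,
        (a x * ph w (fun j => (ψ j).eval x)) * (starRingEnd ℂ) (a y * ph w (fun j => (ψ j).eval y)) := by
      intro w
      rw [← Complex.mul_conj']
      unfold ex
      rw [map_sum, Finset.sum_mul_sum]
    rw [Finset.sum_congr rfl fun w _ => this w, Finset.sum_comm]
    refine Finset.sum_congr rfl fun x _ => ?_
    rw [Finset.sum_comm]
  have hzero : ∀ x y : ℤ, ¬ ((p ^ n : ℕ) : ℤ) ∣ y - x → c x y = 0 := by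
    intro x y hxy
    set t : ZMod (p ^ (1 * n)) := (((ψ 0).eval x - (ψ 0).eval y : ℤ) : ZMod (p ^ (1 * n))) with ht
    have htne : t ≠ 0 := by
      rw [ht, Ne, ZMod.intCast_zmod_eq_zero_iff_dvd, one_mul]
      intro hd
      apply hxy
      obtain ⟨s, hs⟩ : x - y ∣ q.eval x - q.eval y := sub_dvd_eval_sub x y q
      have e : (ψ 0).eval x - (ψ 0).eval y = (x - y) * (u + p * s) := by
        have e1 : ∀ z : ℤ, (ψ 0).eval z = u * z + p * q.eval z := by
          intro z; rw [hq]; simp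
        rw [e1, e1]
        have : u * x + p * q.eval x - (u * y + p * q.eval y) = u * (x - y) + p * (q.eval x - q.eval y) := by ring
        rw [this, hs]; ring
      rw [e] at hd
      have hcop : IsCoprime ((p ^ n : ℕ) : ℤ) (u + p * s) := by
        push_cast
        apply IsCoprime.pow_left
        rw [Prime.coprime_iff_not_dvd (Nat.prime_iff_prime_int.1 Fact.out)]
        intro h
        apply hu
        exact (Int.dvd_add_left (Dvd.intro _ rfl)).1 h
      have := hcop.dvd_of_dvd_mul_right hd
      rw [← dvd_neg]
      simpa using this
    have e2 : c x y = a x * (starRingEnd ℂ) (a y) * ∑ z : ZMod (p ^ (1 * n)), (ZMod.stdAddChar (z * t) : ℂ) := by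
      rw [hc]
      simp only
      rw [Finset.mul_sum]
      rw [← (Equiv.funUnique (Fin 1) (ZMod (p ^ (1 * n)))).sum_comp]
      refine Finset.sum_congr rfl fun w _ => ?_
      have e3 : (ZMod.stdAddChar (w 0 * t) : ℂ) =
          ph w (fun j => (ψ j).eval x) * (starRingEnd ℂ) (ph w (fun j => (ψ j).eval y)) := by
        unfold ph
        rw [← AddChar.map_neg_eq_conj, ← AddChar.map_add_eq_mul]
        congr 1
        simp [ht]
        ring
      simp only [Equiv.funUnique_apply]
      rw [show (default : Fin 1) = 0 from rfl, e3, map_mul]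
      ring
    rw [e2]
    have h4 := AddChar.sum_mulShift (R' := ℂ) t (ZMod.isPrimitive_stdAddChar (p ^ (1 * n)))
    rw [h4, if_neg htne]
    simp
  have : ((∑ w : Fin 1 → ZMod (p ^ (1 * n)), ‖ex ψ a T w‖ ^ 2 : ℝ) : ℂ) =
      ((∑ U ∈ parts (p ^ n) T, ∑ w : Fin 1 → ZMod (p ^ (1 * n)), ‖ex ψ a U w‖ ^ 2 : ℝ) : ℂ) := by
    rw [hsum, Complex.ofReal_sum, Finset.sum_congr rfl fun U _ => hsum U]
    rw [← sum_parts (p ^ n) T]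
    refine Finset.sum_congr rfl fun U hU => Finset.sum_congr rfl fun x hx => ?_
    symm
    apply Finset.sum_subset (parts_subset hU)
    intro y hy hyU
    apply hzero
    intro hd
    apply hyU
    rw [eq_cls_of_mem hU hx, mem_cls]
    exact ⟨hy, hd⟩
  exact (Complex.ofReal_injective this).le

end HB
end

section
namespace HB
open Finset Polynomial

lemma Dec.mono {p : ℕ} [NeZero p] {k n : ℕ} {K K' : ℝ} (h : Dec p k n K) (hK : K ≤ K') : Dec p k n K' := by
  intro ψ hψ a T
  refine (h ψ hψ a T).trans ?_
  have : 0 ≤ Sq p k n ψ a T := Sq_nonneg p k n ψ a T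
  exact mul_le_mul_of_nonneg_right hK (pow_nonneg this _)

/-- the exponents of the bilinear recursion -/
noncomputable def ss (k : ℕ) : ℕ → ℕ → ℝ
  | 0, l => if l = 0 then 1 else 0
  | R + 1, l => if l = 0 then 1 else
      ((k - l : ℕ) : ℝ) / ((k - l : ℕ) + 1) * ss k R (l - 1) + ss k R (k - l) / l

lemma ss_zero (k R : ℕ) : ss k R 0 = 1 := by
  cases R <;> simp [ss]

lemma ss_sum (k : ℕ) (hk : 2 ≤ k) (R : ℕ) :
    ∑ l ∈ Finset.Ico 1 k, ss k R l = R * (((k : ℝ) - 1) / k) := by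
  induction R with
  | zero =>
    rw [Finset.sum_eq_zero]
    · simp
    · intro l hl
      simp at hl
      simp [ss, show l ≠ 0 by omega]
  | succ R ih =>
    have e1 : ∑ l ∈ Finset.Ico 1 k, ss k (R + 1) l =
        ∑ l ∈ Finset.Ico 1 k, ((k - l : ℕ) : ℝ) / ((k - l : ℕ) + 1) * ss k R (l - 1) +
        ∑ l ∈ Finset.Ico 1 k, ss k R (k - l) / l := by
      rw [← Finset.sum_add_distrib]
      refine Finset.sum_congr rfl fun l hl => ?_
      simp at hl
      simp [ss, show l ≠ 0 by omega]
    obtain ⟨d, rfl⟩ : ∃ d, k = d + 2 := ⟨k - 2, by omega⟩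
    have e2 : ∑ l ∈ Finset.Ico 1 (d + 2), ((d + 2 - l : ℕ) : ℝ) / ((d + 2 - l : ℕ) + 1) * ss (d + 2) R (l - 1) =
        ((d : ℝ) + 1) / (d + 2) + ∑ m ∈ Finset.range d, ((d - m : ℕ) : ℝ) / ((d - m : ℕ) + 1) * ss (d + 2) R (m + 1) := by
      rw [Finset.sum_Ico_eq_sum_range, show d + 2 - 1 = d + 1 by omega, Finset.sum_range_succ']
      rw [add_comm]
      congr 1
      · simp only [Nat.add_zero, Nat.sub_self, ss_zero, show d + 2 - 1 = d + 1 by omega]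
        push_cast
        rw [mul_one]
        congr 1
        ring
      · refine Finset.sum_congr rfl fun m _ => ?_
        rw [show d + 2 - (1 + (m + 1)) = d - m by omega, show 1 + (m + 1) - 1 = m + 1 by omega]
    have e3 : ∑ l ∈ Finset.Ico 1 (d + 2), ss (d + 2) R (d + 2 - l) / l =
        ∑ m ∈ Finset.range (d + 1), ss (d + 2) R (m + 1) / ((d - m : ℕ) + 1) := by
      rw [Finset.sum_Ico_eq_sum_range, show d + 2 - 1 = d + 1 by omega, ← Finset.sum_range_reflect]
      refine Finset.sum_congr rfl fun m hm => ?_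
      simp at hm
      rw [show d + 2 - (1 + (d + 1 - 1 - m)) = m + 1 by omega, show 1 + (d + 1 - 1 - m) = d - m + 1 by omega]
      push_cast
      rfl
    have e4 : ∑ l ∈ Finset.Ico 1 (d + 2), ss (d + 2) R l = ∑ m ∈ Finset.range (d + 1), ss (d + 2) R (m + 1) := by
      rw [Finset.sum_Ico_eq_sum_range, show d + 2 - 1 = d + 1 by omega]
      exact Finset.sum_congr rfl fun m _ => by rw [add_comm 1 m]
    rw [e1, e2, e3, Finset.sum_range_succ _ d, add_assoc, ← add_assoc (∑ m ∈ Finset.range d, _),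
      ← Finset.sum_add_distrib]
    rw [e4, Finset.sum_range_succ _ d] at ih
    have e5 : ∀ m ∈ Finset.range d, ((d - m : ℕ) : ℝ) / ((d - m : ℕ) + 1) * ss (d + 2) R (m + 1) +
        ss (d + 2) R (m + 1) / ((d - m : ℕ) + 1) = ss (d + 2) R (m + 1) := by
      intro m _
      have : (((d - m : ℕ) : ℝ) + 1) ≠ 0 := by positivity
      field_simp
    rw [Finset.sum_congr rfl e5]
    simp only [Nat.sub_self, Nat.cast_zero, zero_add, div_one]
    rw [ih]
    push_cast
    ring

lemma ss_large (k : ℕ) (hk : 2 ≤ k) (R : ℕ) : ∃ l, 1 ≤ l ∧ l < k ∧ (R : ℝ) / k ≤ ss k R l := by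
  by_contra hcon
  push Not at hcon
  have h1 : ∑ l ∈ Finset.Ico 1 k, ss k R l < ∑ l ∈ Finset.Ico 1 k, (R : ℝ) / k := by
    apply Finset.sum_lt_sum_of_nonempty
    · exact ⟨1, by simp; omega⟩
    · intro l hl
      simp at hl
      exact hcon l hl.1 hl.2
  rw [ss_sum k hk, Finset.sum_const, Nat.card_Ico, nsmul_eq_mul, Nat.cast_sub (by omega)] at h1
  have : (R : ℝ) * (((k : ℝ) - 1) / k) = (k - 1) * (R / k) := by ring
  push_cast at h1
  linarith

lemma rr_lt {l k : ℕ} (h : l < k) : rr l + 1 ≤ rr k := by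
  have h1 : rr (l + 1) ≤ rr k := rr_mono h
  rw [rr_succ] at h1
  omega

lemma claim {p : ℕ} [Fact p.Prime] {k n : ℕ} (hk : 2 ≤ k) (hkp : k < p) {H C L : ℝ} (hC : 1 ≤ C) (hL : 1 ≤ L)
    (hDk : ∀ m ≤ n, Dec p k m (C * (p : ℝ) ^ (H * m)))
    (hDl : ∀ l, 1 ≤ l → l < k → ∀ m ≤ n, Dec p l m L) (R : ℕ) :
    ∀ b l, 1 ≤ b → (Nat.factorial k) ^ (R + 1) ∣ b → k ^ (R + 1) * b ≤ n → 1 ≤ l → l < k →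
      Bil p k n l ((k - l + 1) * (b / l)) b (2 * C * L ^ R * (p : ℝ) ^ (H * (n - ss k R l * b))) := by
  have hp : (0 : ℝ) < p := by exact_mod_cast (Fact.out : p.Prime).pos
  induction R with
  | zero =>
    intro b l hb hd hn hl hlk
    have := Bil_triv (rr_pos hl) (rr_lt hlk) (hDk n le_rfl) ((k - l + 1) * (b / l)) b
    refine this.mono (le_of_eq ?_)
    simp [ss, show l ≠ 0 by omega]
    ring
  | succ R ih =>
    intro b l hb hd hn hl hlk
    have hfac : ∀ j, 1 ≤ j → j ≤ k → j ∣ Nat.factorial k := fun j h1 h2 => Nat.dvd_factorial h1 h2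
    have hkb : Nat.factorial k ∣ b := (dvd_pow_self _ (by omega)).trans hd
    have hdiv : ∀ j, 1 ≤ j → j ≤ k → j * (b / j) = b := fun j h1 h2 =>
      Nat.mul_div_cancel' ((hfac j h1 h2).trans hkb)
    set A := (k - l + 1) * (b / l) with hA
    have hlA : l * A = (k - l + 1) * b := by
      rw [hA, mul_left_comm, hdiv l hl hlk.le]
    have hbl1 : 1 ≤ b / l := by
      rcases Nat.eq_zero_or_pos (b / l) with h | h
      · have := hdiv l hl hlk.le
        rw [h] at this; omega
      · exact h
    have hA1 : 1 ≤ A := Nat.mul_pos (by omega) hbl1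
    have hdA : Nat.factorial k ^ (R + 1) ∣ A := by
      apply Dvd.dvd.mul_left
      apply Nat.dvd_div_of_mul_dvd
      refine dvd_trans ?_ hd
      rw [pow_succ _ (R + 1), mul_comm]
      exact mul_dvd_mul_left _ (hfac l hl hlk.le)
    have hAb : A ≤ k * b := by
      have : b / l ≤ b := Nat.div_le_self _ _
      exact Nat.mul_le_mul (by omega) this
    have hk2 : k * (k * b) ≤ n := by
      refine le_trans ?_ hn
      rw [← mul_assoc]
      refine Nat.mul_le_mul_right _ ?_
      calc k * k = k ^ 2 := by ring
        _ ≤ _ := Nat.pow_le_pow_right (by omega) (by omega)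
    have hkbn : k * b ≤ n := le_trans (Nat.le_mul_of_pos_left _ (by omega)) hk2
    have hbn : b ≤ n := le_trans (Nat.le_mul_of_pos_left _ (by omega)) hkbn
    have hAn : A ≤ n := hAb.trans hkbn
    have hCL : 1 ≤ C * L ^ R := one_le_mul_of_one_le_of_one_le hC (one_le_pow₀ hL)
    -- first input
    have h1 : Bil p k n (l - 1) A b (2 * C * L ^ (R + 1) * (p : ℝ) ^ (H * (n - ss k R (l - 1) * b))) := by
      rcases Nat.eq_zero_or_pos (l - 1) with h0 | h0
      · rw [h0, ss_zero]
        have := S0 (by omega) (by positivity) hb hbn (hDk (n - b) (Nat.sub_le _ _)) A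
        refine this.mono ?_
        rw [Nat.cast_sub hbn, one_mul]
        refine mul_le_mul_of_nonneg_right ?_ (by positivity)
        have := one_le_pow₀ hL (n := R + 1)
        nlinarith
      · have h2 := ih b (l - 1) hb ((pow_dvd_pow _ (by omega)).trans hd)
          (le_trans (Nat.mul_le_mul_right _ (Nat.pow_le_pow_right (by omega) (by omega))) hn) h0 (by omega)
        set A' := (k - (l - 1) + 1) * (b / (l - 1)) with hA'
        have hlA' : (l - 1) * A' = (k - (l - 1) + 1) * b := by
          rw [hA', mul_left_comm, hdiv (l - 1) h0 (by omega)]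
        have hAA' : A ≤ A' := by
          rw [hA, hA']
          exact Nat.mul_le_mul (by omega) (Nat.div_le_div_left (by omega) h0)
        have hA'n : A' ≤ n := by
          refine le_trans ?_ hkbn
          exact Nat.mul_le_mul (by omega) (Nat.div_le_self _ _)
        have := S1 hkp h0 (by omega) (by positivity) (by positivity) hA1 hAA' hA'n hb
          (by refine Nat.mul_le_mul (by omega) hbn) hlA'.le (hDl (l - 1) h0 (by omega) (A' - A) (by omega)) h2
        refine this.mono (le_of_eq ?_)
        rw [pow_succ]; ring
    have h2 : Bil p k n (k - l) b A (2 * C * L ^ (R + 1) * (p : ℝ) ^ (H * (n - ss k R (k - l) * A))) := by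
      have h2 := ih A (k - l) hA1 hdA (by
        calc k ^ (R + 1) * A ≤ k ^ (R + 1) * (k * b) := Nat.mul_le_mul_left _ hAb
          _ = k ^ (R + 1 + 1) * b := by ring
          _ ≤ n := hn) (by omega) (by omega)
      have hklA : (k - l) ∣ A := (hfac (k - l) (by omega) (by omega)).trans ((dvd_pow_self _ (by omega)).trans hdA)
      set A' := (k - (k - l) + 1) * (A / (k - l)) with hA'
      have hlA' : (k - l) * A' = (k - (k - l) + 1) * A := by
        rw [hA', mul_left_comm, Nat.mul_div_cancel' hklA]
      have hbA' : b ≤ A' := by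
        have e : l * (k - l) * A' = (k - (k - l) + 1) * (k - l + 1) * b := by
          calc l * (k - l) * A' = l * ((k - l) * A') := by ring
            _ = (k - (k - l) + 1) * (l * A) := by rw [hlA']; ring
            _ = _ := by rw [hlA]; ring
        have e2 : k - (k - l) + 1 = l + 1 := by omega
        rw [e2] at e
        have hpos : 0 < l * (k - l) := Nat.mul_pos hl (by omega)
        refine Nat.le_of_mul_le_mul_left ?_ hpos
        rw [e]
        refine Nat.mul_le_mul_right _ (Nat.mul_le_mul (by omega) (by omega))
      have hA'n : A' ≤ n := by
        refine le_trans ?_ hk2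
        refine Nat.mul_le_mul (by omega) ((Nat.div_le_self _ _).trans hAb)
      have := S1 hkp (show 1 ≤ k - l by omega) (by omega) (by positivity) (by positivity) hb hbA' hA'n hA1
          (by refine Nat.mul_le_mul (by omega) hAn) hlA'.le (hDl (k - l) (by omega) (by omega) (A' - b) (by omega)) h2
      refine this.mono (le_of_eq ?_)
      rw [pow_succ]; ring
    refine S2 hl hlk.le (by positivity) (by positivity) (le_of_eq ?_) h1 h2
    generalize 2 * C * L ^ (R + 1) = D
    rw [mul_pow D _ (k - l), mul_mul_mul_comm, ← pow_succ, mul_pow D _ (k - l + 1)]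
    congr 1
    rw [← Real.rpow_natCast, ← Real.rpow_natCast, ← Real.rpow_mul hp.le, ← Real.rpow_mul hp.le, ← Real.rpow_add hp]
    congr 1
    have hA' : (A : ℝ) = ((k - l : ℕ) + 1) * b / l := by
      have : (l : ℝ) * A = ((k - l : ℕ) + 1) * b := by exact_mod_cast hlA
      have hl0 : (l : ℝ) ≠ 0 := by positivity
      field_simp
      linarith
    rw [hA']
    simp only [ss, show l ≠ 0 by omega, if_false]
    have hl0 : (l : ℝ) ≠ 0 := by positivity
    have hkl : (((k - l : ℕ) : ℝ) + 1) ≠ 0 := by positivity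
    push_cast
    field_simp
    ring

end HB
end

section
namespace HB
open Finset Polynomial

/-- power bound for the decoupling constants -/
def Good (p : ℕ) [NeZero p] (k : ℕ) (H : ℝ) : Prop :=
  ∃ C : ℝ, 1 ≤ C ∧ ∀ n : ℕ, Dec p k n (C * (p : ℝ) ^ (H * n))

lemma Good.mono {p : ℕ} [Fact p.Prime] {k : ℕ} {H H' : ℝ} (h : Good p k H) (hH : H ≤ H') : Good p k H' := by
  obtain ⟨C, hC, h⟩ := h
  refine ⟨C, hC, fun n => (h n).mono ?_⟩
  have hp : (1 : ℝ) ≤ p := by exact_mod_cast (Fact.out : p.Prime).one_le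
  gcongr

set_option maxHeartbeats 1000000 in
lemma step {p : ℕ} [Fact p.Prime] {k R : ℕ} (hk : 2 ≤ k) (hkp : k < p) {H h θ ε' : ℝ} (hh : 0 < h) (hHh : h ≤ H)
    (hR : 4 * k * rr k + 1 ≤ h * (R / k)) (hθ : θ * k ^ (R + 1) = 1) (hε' : R * ε' ≤ θ / 2)
    (hp2 : (2 : ℝ) ^ (2 * rr k + 1) ≤ (p : ℝ) ^ h)
    (hDl : ∀ l, 1 ≤ l → l < k → Good p l ε') (hε0 : 0 ≤ ε') (hD : Good p k H) : Good p k (max (H - θ / 2) h) := by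
  obtain ⟨C, hC, hD⟩ := hD
  have hp1 : (1 : ℝ) ≤ p := by exact_mod_cast (Fact.out : p.Prime).one_le
  have hp : (0 : ℝ) < p := by linarith
  set H' := max (H - θ / 2) h with hH'
  have hk0 : (0 : ℝ) < k := by positivity
  have hθ0 : 0 < θ := by
    by_contra hcon
    push Not at hcon
    have : θ * k ^ (R + 1) ≤ 0 := mul_nonpos_of_nonpos_of_nonneg hcon (by positivity)
    linarith
  -- constants for lower degree
  obtain ⟨Cl, hCl1, hCl⟩ : ∃ Cl : ℝ, 1 ≤ Cl ∧ ∀ l, 1 ≤ l → l < k → ∀ n : ℕ, Dec p l n (Cl * (p : ℝ) ^ (ε' * n)) := by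
    have : ∀ l, ∃ Cl : ℝ, 1 ≤ Cl ∧ (1 ≤ l → l < k → ∀ n : ℕ, Dec p l n (Cl * (p : ℝ) ^ (ε' * n))) := by
      intro l
      by_cases h1 : 1 ≤ l ∧ l < k
      · obtain ⟨C, hC, h⟩ := hDl l h1.1 h1.2
        exact ⟨C, hC, fun _ _ => h⟩
      · exact ⟨1, le_rfl, fun a b => absurd ⟨a, b⟩ h1⟩
    choose F hF1 hF using this
    refine ⟨∑ l ∈ Finset.range (k + 1), F l, ?_, ?_⟩
    · refine (hF1 0).trans (Finset.single_le_sum (f := F) (fun i _ => zero_le_one.trans (hF1 i)) (by simp))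
    · intro l h1 h2 n
      refine (hF l h1 h2 n).mono (mul_le_mul_of_nonneg_right ?_ (by positivity))
      exact Finset.single_le_sum (f := F) (fun i _ => zero_le_one.trans (hF1 i)) (by simp; omega)
  set Q : ℕ := Nat.factorial k ^ (R + 1) with hQ
  have hQ1 : 1 ≤ Q := Nat.one_le_pow _ _ (Nat.factorial_pos k)
  set Z : ℕ := Q * k ^ (R + 1) with hZ
  have hZ1 : 1 ≤ Z := Nat.mul_pos hQ1 (pow_pos (by omega) _)
  -- the bilinear bound
  set C2 : ℝ := (p : ℝ) ^ (4 * rr k) * (2 * C * Cl ^ R * (p : ℝ) ^ (Q : ℝ)) with hC2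
  have hC20 : 0 ≤ C2 := by positivity
  have main : ∀ n : ℕ, Z ≤ n → ∃ (l : ℕ) (M : ℝ), 1 ≤ l ∧ l < k ∧ 0 ≤ M ∧ Bil p k n l 1 1 M ∧
      (p : ℝ) ^ (4 * rr k) * M ≤ C2 * (p : ℝ) ^ (H' * n) := by
    intro n hn
    obtain ⟨l, hl, hlk, hs⟩ := ss_large k hk R
    set b := Q * (n / Z) with hb
    have hnZ : 1 ≤ n / Z := (Nat.one_le_div_iff hZ1).2 hn
    have hb1 : 1 ≤ b := Nat.mul_pos hQ1 hnZ
    have hbn : k ^ (R + 1) * b ≤ n := by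
      calc k ^ (R + 1) * b = Z * (n / Z) := by rw [hb, hZ]; ring
        _ ≤ n := Nat.mul_div_le n Z
    have hbθ : θ * n - Q ≤ b := by
      have h1 : n < Z * (n / Z) + Z := by
        have := Nat.div_add_mod n Z
        have := Nat.mod_lt n hZ1
        omega
      have h2 : (n : ℝ) < k ^ (R + 1) * b + Q * k ^ (R + 1) := by
        have : n < k ^ (R + 1) * b + Q * k ^ (R + 1) := by
          calc n < Z * (n / Z) + Z := h1
            _ = _ := by rw [hb, hZ]; ring
        exact_mod_cast this
      have h3 : θ * n ≤ θ * (k ^ (R + 1) * b + Q * k ^ (R + 1)) := mul_le_mul_of_nonneg_left h2.le hθ0.le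
      have h4 : θ * (k ^ (R + 1) * b + Q * k ^ (R + 1)) = (θ * k ^ (R + 1)) * b + (θ * k ^ (R + 1)) * Q := by ring
      rw [h4, hθ] at h3
      linarith
    set L : ℝ := Cl * (p : ℝ) ^ (ε' * n) with hL
    have hL1 : 1 ≤ L := one_le_mul_of_one_le_of_one_le hCl1 (Real.one_le_rpow hp1 (by positivity))
    have hB := claim hk hkp hC hL1 (fun m _ => hD m) (fun l h1 h2 m hm => (hCl l h1 h2 m).mono (by
      rw [hL]
      have : (m : ℝ) ≤ n := by exact_mod_cast hm
      gcongr)) R b l hb1 (Dvd.intro _ rfl) hbn hl hlk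
    set A := (k - l + 1) * (b / l) with hA
    have hkR : k ≤ k ^ (R + 1) := Nat.le_self_pow (by omega) k
    have hAkb : A ≤ k * b := Nat.mul_le_mul (by omega) (Nat.div_le_self _ _)
    have hkbn : k * b ≤ n := (Nat.mul_le_mul_right _ hkR).trans hbn
    have hbkb : b ≤ k * b := Nat.le_mul_of_pos_left _ (by omega)
    have hlb : l ∣ b := ((Nat.dvd_factorial hl hlk.le).trans (dvd_pow_self _ (by omega))).trans (Dvd.intro _ rfl)
    have hA1 : 1 ≤ A := Nat.mul_pos (by omega) (Nat.div_pos (Nat.le_of_dvd hb1 hlb) hl)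
    have hM0 : 0 ≤ 2 * C * L ^ R * (p : ℝ) ^ (H * (n - ss k R l * b)) := by positivity
    have hcr := crude (rr_pos hl) (rr_lt hlk) hA1 hb1 (hAkb.trans hkbn) (hbkb.trans hkbn) hM0 hB
    refine ⟨l, _, hl, hlk, mul_nonneg (pow_nonneg hp.le _) hM0, hcr, ?_⟩
    rw [hC2, mul_assoc ((p : ℝ) ^ (4 * rr k)) _ ((p : ℝ) ^ (H' * n))]
    refine mul_le_mul_of_nonneg_left ?_ (by positivity)
    rw [hL, mul_pow]
    have e1 : ((p : ℝ) ^ (ε' * n)) ^ R = (p : ℝ) ^ (R * ε' * n) := by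
      rw [← Real.rpow_natCast, ← Real.rpow_mul hp.le]; congr 1; ring
    have e2 : (p : ℝ) ^ ((A + b) * (2 * rr k)) = (p : ℝ) ^ (((A : ℝ) + b) * (2 * rr k)) := by
      rw [← Real.rpow_natCast]; push_cast; rfl
    rw [e1, e2]
    calc _ = 2 * C * Cl ^ R * ((p : ℝ) ^ (((A : ℝ) + b) * (2 * rr k)) * (p : ℝ) ^ (R * ε' * n) *
          (p : ℝ) ^ (H * (n - ss k R l * b))) := by ring
      _ = 2 * C * Cl ^ R * (p : ℝ) ^ (((A : ℝ) + b) * (2 * rr k) + R * ε' * n + H * (n - ss k R l * b)) := by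
          rw [Real.rpow_add hp, Real.rpow_add hp]
      _ ≤ 2 * C * Cl ^ R * (p : ℝ) ^ (Q + H' * n) := by
          refine mul_le_mul_of_nonneg_left (Real.rpow_le_rpow_of_exponent_le hp1 ?_) (by positivity)
          have f1 : ((A : ℝ) + b) ≤ 2 * k * b := by
            have : A + b ≤ 2 * k * b := by nlinarith
            exact_mod_cast this
          have f2 : ((A : ℝ) + b) * (2 * rr k) ≤ 4 * k * rr k * b := by
            calc ((A : ℝ) + b) * (2 * rr k) ≤ 2 * k * b * (2 * rr k) := by gcongr
              _ = _ := by ring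
          have f3 : (4 * k * rr k + 1) * (b : ℝ) ≤ H * (ss k R l * b) := by
            calc (4 * k * rr k + 1) * (b : ℝ) ≤ h * (R / k) * b := by gcongr
              _ ≤ H * (ss k R l) * b := by
                gcongr
                exact hh.le.trans hHh
              _ = _ := by ring
          have f4 : R * ε' * n ≤ θ / 2 * n := by gcongr
          have f5 : (H - θ / 2) * n ≤ H' * n := by
            have : H - θ / 2 ≤ H' := le_max_left _ _
            gcongr
          nlinarith
      _ = _ := by rw [Real.rpow_add hp]; ring
  -- conclusion
  set C3 : ℝ := 1 + 2 * C2 + (p : ℝ) ^ (Z * (2 * rr k)) with hC3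
  have hC31 : 1 ≤ C3 := by
    have : 0 ≤ (p : ℝ) ^ (Z * (2 * rr k)) := by positivity
    linarith
  have hZC : (p : ℝ) ^ (Z * (2 * rr k)) ≤ C3 := by linarith
  have hC2C : C2 ≤ C3 / 2 := by
    have : 0 ≤ (p : ℝ) ^ (Z * (2 * rr k)) := by positivity
    linarith
  have hH'h : h ≤ H' := le_max_right _ _
  clear_value C3 C2 Z H'
  have hC30 : 0 ≤ C3 := zero_le_one.trans hC31
  have hH'0 : 0 ≤ H' := hh.le.trans hH'h
  refine ⟨C3, hC31, fun n => ?_⟩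
  induction n with
  | zero =>
    refine (Dec_triv p k 0 (rr_pos (by omega))).mono ?_
    simpa using hC31
  | succ n ih =>
    by_cases hn : Z ≤ n + 1
    · obtain ⟨l, M, hl, hlk, hM0, hB, hM⟩ := main (n + 1) hn
      have ih' : Dec p k (n + 1 - 1) (C3 * (p : ℝ) ^ (H' * n)) := by
        rw [Nat.add_sub_cancel]; exact ih
      have := S3 (n := n + 1) (by omega) (rr_pos hl) (rr_lt hlk) (by omega) (mul_nonneg hC30 (Real.rpow_nonneg hp.le _)) hM0 ih' hB
      refine this.mono ?_
      have e1 : (p : ℝ) ^ (H' * (n + 1 : ℕ)) = (p : ℝ) ^ (H' * n) * (p : ℝ) ^ H' := by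
        rw [← Real.rpow_add hp]; congr 1; push_cast; ring
      have e2 : (2 : ℝ) ^ (2 * rr k + 1) ≤ (p : ℝ) ^ H' :=
        hp2.trans (Real.rpow_le_rpow_of_exponent_le hp1 hH'h)
      have e3 : (2 : ℝ) ^ (2 * rr k) * (C3 * (p : ℝ) ^ (H' * n)) ≤ C3 / 2 * (p : ℝ) ^ (H' * (n + 1 : ℕ)) := by
        rw [e1]
        rw [pow_succ] at e2
        have : 0 ≤ C3 * (p : ℝ) ^ (H' * n) := by positivity
        nlinarith
      have e4 : C2 * (p : ℝ) ^ (H' * (n + 1 : ℕ)) ≤ C3 / 2 * (p : ℝ) ^ (H' * (n + 1 : ℕ)) := by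
        exact mul_le_mul_of_nonneg_right hC2C (Real.rpow_nonneg hp.le _)
      linarith
    · refine (Dec_triv p k (n + 1) (rr_pos (by omega))).mono ?_
      push Not at hn
      have e1 : (p : ℝ) ^ ((n + 1) * (2 * rr k)) ≤ (p : ℝ) ^ (Z * (2 * rr k)) :=
        pow_le_pow_right₀ hp1 (Nat.mul_le_mul_right _ hn.le)
      have e2 : 1 ≤ (p : ℝ) ^ (H' * (n + 1 : ℕ)) := Real.one_le_rpow hp1 (by positivity)
      calc _ ≤ _ := e1
        _ ≤ C3 := hZC
        _ ≤ _ := le_mul_of_one_le_right (by linarith) e2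

theorem decoupling (k : ℕ) (hk : 1 ≤ k) : ∀ h : ℝ, 0 < h → ∃ p0 : ℕ, ∀ (p : ℕ) [Fact p.Prime], p0 ≤ p → Good p k h := by
  induction k using Nat.strong_induction_on with
  | _ k IH =>
  intro h hh
  rcases Nat.lt_or_ge k 2 with hk2 | hk2
  · obtain rfl : k = 1 := by omega
    refine ⟨0, fun p _ _ => ⟨1, le_rfl, fun n => (Dec_one p n).mono ?_⟩⟩
    have hp1 : (1 : ℝ) ≤ p := by exact_mod_cast (Fact.out : p.Prime).one_le
    rw [one_mul]
    exact Real.one_le_rpow hp1 (by positivity)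
  have hk0 : (0 : ℝ) < k := by positivity
  obtain ⟨R, hR⟩ : ∃ R : ℕ, 4 * k * rr k + 1 ≤ h * (R / k) := by
    obtain ⟨R, hR⟩ := exists_nat_ge ((4 * k * rr k + 1) * k / h)
    refine ⟨R, ?_⟩
    rw [div_le_iff₀ hh] at hR
    rw [mul_div_assoc', le_div_iff₀ hk0]
    linarith
  set θ : ℝ := 1 / k ^ (R + 1) with hθ
  have hθ0 : 0 < θ := by positivity
  have hθ1 : θ * k ^ (R + 1) = 1 := by rw [hθ]; field_simp
  set ε' : ℝ := θ / (2 * (R + 1)) with hε'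
  have hε0 : 0 < ε' := by positivity
  have hRε : R * ε' ≤ θ / 2 := by
    rw [hε', mul_div_assoc', div_le_div_iff₀ (by positivity) (by positivity)]
    nlinarith
  have : ∀ l, ∃ p0 : ℕ, 1 ≤ l → l < k → ∀ (p : ℕ) [Fact p.Prime], p0 ≤ p → Good p l ε' := by
    intro l
    by_cases h1 : 1 ≤ l ∧ l < k
    · obtain ⟨p0, h⟩ := IH l h1.2 h1.1 ε' hε0
      exact ⟨p0, fun _ _ => h⟩
    · exact ⟨0, fun a b => absurd ⟨a, b⟩ h1⟩
  choose P hP using this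
  obtain ⟨p1, hp1⟩ : ∃ p1 : ℕ, ∀ p : ℕ, p1 ≤ p → (2 : ℝ) ^ (2 * rr k + 1) ≤ (p : ℝ) ^ h := by
    have := ((tendsto_rpow_atTop hh).comp tendsto_natCast_atTop_atTop).eventually_ge_atTop ((2 : ℝ) ^ (2 * rr k + 1))
    exact Filter.eventually_atTop.1 this
  refine ⟨k + 1 + p1 + ∑ l ∈ Finset.range k, P l, fun p _ hp => ?_⟩
  have hDl : ∀ l, 1 ≤ l → l < k → Good p l ε' := by
    intro l h1 h2
    apply hP l h1 h2
    have : P l ≤ ∑ l ∈ Finset.range k, P l := Finset.single_le_sum (f := P) (fun _ _ => Nat.zero_le _) (by simpa using h2)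
    omega
  have hp2 := hp1 p (by omega)
  have it : ∀ j : ℕ, Good p k (max (2 * rr k - j * (θ / 2)) h) := by
    intro j
    induction j with
    | zero =>
      have : Good p k (2 * rr k) := by
        refine ⟨1, le_rfl, fun n => (Dec_triv p k n (rr_pos (by omega))).mono (le_of_eq ?_)⟩
        rw [one_mul, ← Real.rpow_natCast]
        congr 1
        push_cast
        ring
      apply this.mono
      simp
    | succ j ih =>
      have := step hk2 (by omega) hh (le_max_right _ _) hR hθ1 hRε hp2 hDl hε0.le ih
      apply this.mono
      apply max_le _ (le_max_right _ _)
      rcases le_total (2 * (rr k : ℝ) - j * (θ / 2)) h with h1 | h1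
      · rw [max_eq_right h1]
        exact le_trans (by linarith) (le_max_right _ _)
      · rw [max_eq_left h1]
        apply le_max_of_le_left
        push_cast
        linarith
  obtain ⟨j, hj⟩ := exists_nat_ge (2 * rr k / (θ / 2))
  apply (it j).mono
  apply max_le _ le_rfl
  rw [div_le_iff₀ (by positivity)] at hj
  linarith

end HB
end

section
namespace HB
open Finset Polynomial

/-- Weyl sum with moduli `M j` -/
noncomputable def WW {d : ℕ} (M : Fin d → ℕ) [∀ j, NeZero (M j)] (T : Finset ℤ) (g : ∀ j, ZMod (M j)) : ℂ :=
  ∑ x ∈ T, ∏ j, (ZMod.stdAddChar (g j * ((x ^ ((j : ℕ) + 1) : ℤ) : ZMod (M j))) : ℂ)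

lemma addChar_sum {ι R : Type*} [AddCommMonoid R] (ψ : AddChar R ℂ) (s : Finset ι) (f : ι → R) :
    ψ (∑ i ∈ s, f i) = ∏ i ∈ s, ψ (f i) := by
  classical
  induction s using Finset.induction_on with
  | empty => simp
  | insert a s ha ih => rw [Finset.sum_insert ha, Finset.prod_insert ha, AddChar.map_add_eq_mul, ih]

/-- power sum differences -/
def vd {r : ℕ} (x y : Fin r → ℤ) (j : ℕ) : ℤ := ∑ i, x i ^ (j + 1) - ∑ i, y i ^ (j + 1)

lemma WW_count {d : ℕ} (M : Fin d → ℕ) [∀ j, NeZero (M j)] (T : Finset ℤ) (r : ℕ) :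
    ∑ g : (∀ j, ZMod (M j)), ‖WW M T g‖ ^ (2 * r) =
      (∏ j, (M j : ℝ)) * ∑ x ∈ Fintype.piFinset (fun _ : Fin r => T), ∑ y ∈ Fintype.piFinset (fun _ : Fin r => T),
        (if ∀ j : Fin d, ((M j : ℕ) : ℤ) ∣ vd x y j then (1 : ℝ) else 0) := by
  apply Complex.ofReal_injective
  push_cast
  have e1 : ∀ g : (∀ j, ZMod (M j)), ((‖WW M T g‖ : ℂ) ^ (2 * r)) =
      ∑ x ∈ Fintype.piFinset (fun _ : Fin r => T), ∑ y ∈ Fintype.piFinset (fun _ : Fin r => T),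
        ∏ j, (ZMod.stdAddChar (g j * ((vd x y j : ℤ) : ZMod (M j))) : ℂ) := by
    intro g
    rw [pow_mul, ← Complex.mul_conj', mul_pow]
    have e2 : WW M T g ^ r = ∑ x ∈ Fintype.piFinset (fun _ : Fin r => T), ∏ j,
        (ZMod.stdAddChar (g j * ((∑ i, x i ^ ((j : ℕ) + 1) : ℤ) : ZMod (M j))) : ℂ) := by
      have : WW M T g ^ r = ∏ _i : Fin r, WW M T g := by simp
      rw [this]
      unfold WW
      rw [Finset.prod_univ_sum]
      refine Finset.sum_congr rfl fun x _ => ?_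
      rw [Finset.prod_comm]
      refine Finset.prod_congr rfl fun j _ => ?_
      rw [← addChar_sum, ← Finset.mul_sum]
      push_cast
      rfl
    rw [← map_pow, e2, map_sum, Finset.sum_mul_sum]
    refine Finset.sum_congr rfl fun x _ => Finset.sum_congr rfl fun y _ => ?_
    rw [map_prod, ← Finset.prod_mul_distrib]
    refine Finset.prod_congr rfl fun j _ => ?_
    rw [← AddChar.map_neg_eq_conj, ← AddChar.map_add_eq_mul]
    congr 1
    unfold vd
    push_cast
    ring
  rw [Finset.sum_congr rfl fun g _ => e1 g, Finset.sum_comm, Finset.mul_sum]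
  refine Finset.sum_congr rfl fun x _ => ?_
  rw [Finset.sum_comm, Finset.mul_sum]
  refine Finset.sum_congr rfl fun y _ => ?_
  have e3 := Finset.prod_univ_sum (fun j : Fin d => (Finset.univ : Finset (ZMod (M j))))
    (fun j z => (ZMod.stdAddChar (z * ((vd x y j : ℤ) : ZMod (M j))) : ℂ))
  rw [Fintype.piFinset_univ] at e3
  rw [← e3]
  have e4 : ∀ j : Fin d, ∑ z : ZMod (M j), (ZMod.stdAddChar (z * ((vd x y j : ℤ) : ZMod (M j))) : ℂ) =
      if ((M j : ℕ) : ℤ) ∣ vd x y j then (M j : ℂ) else 0 := by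
    intro j
    have h4 := AddChar.sum_mulShift (R' := ℂ) ((vd x y j : ℤ) : ZMod (M j)) (ZMod.isPrimitive_stdAddChar (M j))
    rw [h4]
    simp only [ZMod.intCast_zmod_eq_zero_iff_dvd, ZMod.card]
    split_ifs <;> simp
  rw [Finset.prod_congr rfl fun j _ => e4 j]
  by_cases h : ∀ j : Fin d, ((M j : ℕ) : ℤ) ∣ vd x y j
  · rw [if_pos h, Complex.ofReal_one, mul_one]
    exact Finset.prod_congr rfl fun j _ => if_pos (h j)
  · rw [if_neg h, Complex.ofReal_zero, mul_zero]
    push Not at h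
    obtain ⟨j, hj⟩ := h
    exact Finset.prod_eq_zero (Finset.mem_univ j) (if_neg hj)

lemma pow_sum_bound {r : ℕ} (hr : 1 ≤ r) {T : Finset ℤ} {u : ℕ} (hT : ∀ x ∈ T, 1 ≤ x ∧ x ≤ u) {x y : Fin r → ℤ}
    (hx : ∀ i, x i ∈ T) (hy : ∀ i, y i ∈ T) (j : ℕ) : vd x y j < (r * u : ℤ) ^ (j + 1) := by
  unfold vd
  have h1 : ∑ i, x i ^ (j + 1) ≤ ∑ i : Fin r, (u : ℤ) ^ (j + 1) := by
    refine Finset.sum_le_sum fun i _ => ?_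
    have := hT _ (hx i)
    exact pow_le_pow_left₀ (by linarith) this.2 _
  have h2 : ∑ i : Fin r, (1 : ℤ) ≤ ∑ i, y i ^ (j + 1) := by
    refine Finset.sum_le_sum fun i _ => ?_
    have := hT _ (hy i)
    exact one_le_pow₀ this.1
  simp at h1 h2
  rw [mul_pow]
  have h3 : (r : ℤ) ≤ (r : ℤ) ^ (j + 1) := by
    apply le_self_pow₀ _ (by omega)
    exact_mod_cast hr
  have h4 : (0 : ℤ) ≤ (u : ℤ) ^ (j + 1) := by positivity
  have h5 : (1 : ℤ) ≤ r := by exact_mod_cast hr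
  nlinarith

theorem mean_value (d : ℕ) (hd : 1 ≤ d) (h : ℝ) (hh : 0 < h) : ∃ p : ℕ, 2 ≤ p ∧ ∃ _ : NeZero p, ∃ C : ℝ, 1 ≤ C ∧
    ∀ (n u : ℕ) (T : Finset ℤ), (∀ x ∈ T, 1 ≤ x ∧ x ≤ u) → rr d * u < p ^ n →
      ∑ g : (∀ j : Fin d, ZMod (p ^ (((j : ℕ) + 1) * n))), ‖WW (fun j : Fin d => p ^ (((j : ℕ) + 1) * n)) T g‖ ^ (2 * rr d) ≤
        C * (p : ℝ) ^ (h * n) * (p : ℝ) ^ (n * rr d) * (u : ℝ) ^ rr d := by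
  obtain ⟨p0, hp0⟩ := decoupling d hd h hh
  obtain ⟨p, hp, hprime⟩ := Nat.exists_infinite_primes p0
  haveI : Fact p.Prime := ⟨hprime⟩
  obtain ⟨C, hC, hD⟩ := hp0 p hp
  have hr := rr_pos hd
  refine ⟨p, hprime.two_le, inferInstance, C, hC, fun n u T hT hun => ?_⟩
  have hTcard : (T.card : ℝ) ≤ u := by
    have : T ⊆ Finset.Icc (1 : ℤ) u := fun x hx => Finset.mem_Icc.2 (hT x hx)
    have := Finset.card_le_card this
    simp at this
    exact_mod_cast this
  -- the fine sum
  have fine := hD n (fun j => X ^ ((j : ℕ) + 1)) ⟨1, by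
    intro h; exact hprime.one_lt.ne' (by exact_mod_cast (Int.isUnit_iff.1 (isUnit_of_dvd_one h)).resolve_right (by
      have : (0 : ℤ) ≤ p := by positivity
      intro h; omega)), fun j => ⟨0, by simp⟩⟩ (fun _ => 1) T
  have hex : ∀ (U : Finset ℤ) (w : Fin d → ZMod (p ^ (d * n))),
      ex (fun j : Fin d => (X ^ ((j : ℕ) + 1) : ℤ[X])) (fun _ => 1) U w = WW (fun _ : Fin d => p ^ (d * n)) U w := by
    intro U w
    unfold ex WW ph
    refine Finset.sum_congr rfl fun x _ => ?_
    rw [one_mul, addChar_sum]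
    refine Finset.prod_congr rfl fun j _ => ?_
    simp
  set N : ℝ := (Fintype.card (Fin d → ZMod (p ^ (d * n))) : ℝ) with hN
  have hNM : (∏ _j : Fin d, ((p ^ (d * n) : ℕ) : ℝ)) = N := by
    rw [hN, Fintype.card_pi]
    push_cast
    simp [ZMod.card]
  have hN0 : 0 < N := by
    rw [hN]; exact_mod_cast Fintype.card_pos
  have hsing : ∀ U ∈ parts (p ^ n) T, ∑ w : Fin d → ZMod (p ^ (d * n)),
      ‖ex (fun j : Fin d => (X ^ ((j : ℕ) + 1) : ℤ[X])) (fun _ => 1) U w‖ ^ (2 * rr d) = N := by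
    intro U hU
    obtain ⟨x, hx⟩ := parts_nonempty hU
    have : U = {x} := by
      refine Finset.eq_singleton_iff_unique_mem.2 ⟨hx, fun y hy => ?_⟩
      have h1 := parts_cong hU hx hy
      have h2 := hT x (parts_subset hU hx)
      have h3 := hT y (parts_subset hU hy)
      have h4 : (u : ℤ) < ((p ^ n : ℕ) : ℤ) := by
        have : u < p ^ n := lt_of_le_of_lt (Nat.le_mul_of_pos_left u hr) hun
        exact_mod_cast this
      have := Int.eq_zero_of_abs_lt_dvd h1 (by rw [abs_lt]; constructor <;> linarith [h2.1, h2.2, h3.1, h3.2])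
      linarith
    rw [this]
    have : ∀ w : Fin d → ZMod (p ^ (d * n)),
        ‖ex (fun j : Fin d => (X ^ ((j : ℕ) + 1) : ℤ[X])) (fun _ => 1) {x} w‖ = 1 := by
      intro w
      unfold ex
      simp [norm_ph]
    simp [this, hN]
  have hs : ∑ U ∈ parts (p^n) T, (∑ w : Fin d → ZMod (p^(d*n)),
      ‖ex (fun j : Fin d => (X ^ ((j : ℕ) + 1) : ℤ[X])) (fun _ => 1) U w‖ ^ (2 * rr d)) ^ (1/(rr d:ℝ)) =
        (parts (p ^ n) T).card * N^(1/(rr d:ℝ)) := by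
    rw [Finset.sum_congr rfl (fun U hU => by rw [hsing U hU]), Finset.sum_const, nsmul_eq_mul]
  rw [hs] at fine
  rw [mul_pow, one_div, Real.rpow_inv_natCast_pow hN0.le (by omega)] at fine
  simp only [hex] at fine
  rw [WW_count, hNM] at fine
  have hcardparts : ((parts (p ^ n) T).card : ℝ) ≤ u := by
    have : (parts (p ^ n) T).card ≤ T.card := Finset.card_image_le
    exact le_trans (by exact_mod_cast this) hTcard
  have hpos : (0 : ℝ) ≤ C * (p : ℝ) ^ (h * n) := by positivity
  have fine2 : ∑ x ∈ Fintype.piFinset (fun _ : Fin (rr d) => T), ∑ y ∈ Fintype.piFinset (fun _ : Fin (rr d) => T),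
        (if ∀ j : Fin d, ((p ^ (d * n) : ℕ) : ℤ) ∣ vd x y j then (1 : ℝ) else 0) ≤
      C * (p : ℝ) ^ (h * n) * (u : ℝ) ^ rr d := by
    refine le_of_mul_le_mul_left (fine.trans ?_) hN0
    calc _ ≤ C * (p : ℝ) ^ (h * n) * ((u : ℝ) ^ rr d * N) := by gcongr
      _ = _ := by ring
  rw [WW_count]
  have hprod : (∏ j : Fin d, ((p ^ (((j : ℕ) + 1) * n) : ℕ) : ℝ)) = (p : ℝ) ^ (n * rr d) := by
    push_cast
    rw [Finset.prod_pow_eq_pow_sum]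
    congr 1
    rw [← Finset.sum_mul, mul_comm]
    congr 1
    rw [Fin.sum_univ_eq_sum_range (fun j => j + 1)]
    clear * -
    induction d with
    | zero => rfl
    | succ d ih => rw [Finset.sum_range_succ, ih, rr_succ]
  rw [hprod]
  calc _ ≤ (p : ℝ) ^ (n * rr d) * (C * (p : ℝ) ^ (h * n) * (u : ℝ) ^ rr d) := by
        refine mul_le_mul_of_nonneg_left (le_trans ?_ fine2) (by positivity)
        refine Finset.sum_le_sum fun x hx => Finset.sum_le_sum fun y hy => ?_
        rw [Fintype.mem_piFinset] at hx hy
        split_ifs with h1 h2 h2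
        · exact le_rfl
        · exfalso
          apply h2
          intro j
          have e1 := pow_sum_bound hr hT hx hy j
          have e2 := pow_sum_bound hr hT hy hx j
          have e3 : vd y x j = - vd x y j := by unfold vd; ring
          have e4 : ((rr d * u : ℤ)) ^ ((j : ℕ) + 1) ≤ ((p ^ (((j : ℕ) + 1) * n) : ℕ) : ℤ) := by
            push_cast
            rw [mul_comm _ n, pow_mul]
            apply pow_le_pow_left₀ (by positivity)
            exact_mod_cast hun.le
          have := Int.eq_zero_of_abs_lt_dvd (h1 j) (by rw [abs_lt]; constructor <;> linarith)
          rw [this]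
          exact dvd_zero _
        · exact zero_le_one
        · exact le_rfl
    _ = _ := by ring

end HB
end

section
namespace HB
open Finset

lemma holder_count {ι G : Type*} [DecidableEq ι] [Fintype G] [DecidableEq G] (P : Finset ι) (g : ι → G) (w : G → ℝ)
    (hw : ∀ z, 0 ≤ w z) (r : ℕ) (hr : 1 ≤ r) :
    (∑ n ∈ P, w (g n)) ^ (2 * r) ≤ (P.card : ℝ) ^ (2 * r - 2) *
      (((P ×ˢ P).filter (fun q => g q.1 = g q.2)).card : ℝ) * ∑ z, w z ^ (2 * r) := by
  have h1 : (∑ n ∈ P, w (g n)) ^ r ≤ (P.card : ℝ) ^ (r - 1) * ∑ n ∈ P, w (g n) ^ r := by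
    obtain ⟨t, rfl⟩ : ∃ t, r = t + 1 := ⟨r - 1, by omega⟩
    rcases P.eq_empty_or_nonempty with rfl | hP
    · simp
    have hc : (0 : ℝ) < P.card := by exact_mod_cast hP.card_pos
    have h := pow_sum_div_card_le_sum_pow (s := P) (f := fun n => w (g n)) (fun n _ => hw _) t
    rw [div_le_iff₀ (by positivity)] at h
    simp only [Nat.add_sub_cancel]
    linarith
  have h2 : (∑ n ∈ P, w (g n) ^ r) ^ 2 ≤
      (((P ×ˢ P).filter (fun q => g q.1 = g q.2)).card : ℝ) * ∑ z, w z ^ (2 * r) := by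
    have e1 : ∑ n ∈ P, w (g n) ^ r = ∑ z, ((P.filter (fun n => g n = z)).card : ℝ) * w z ^ r := by
      rw [← Finset.sum_fiberwise P g]
      refine Finset.sum_congr rfl fun z _ => ?_
      rw [← nsmul_eq_mul, ← Finset.sum_const]
      refine Finset.sum_congr rfl fun n hn => ?_
      rw [(Finset.mem_filter.1 hn).2]
    have e2 : (((P ×ˢ P).filter (fun q => g q.1 = g q.2)).card : ℝ) =
        ∑ z, ((P.filter (fun n => g n = z)).card : ℝ) ^ 2 := by
      rw [Finset.card_eq_sum_card_fiberwise (f := fun q => g q.1) (t := Finset.univ) (fun _ _ => by simp)]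
      push_cast
      refine Finset.sum_congr rfl fun z _ => ?_
      rw [sq, ← Nat.cast_mul, ← Finset.card_product]
      congr 2
      ext ⟨x, y⟩
      simp only [Finset.mem_filter, Finset.mem_product]
      constructor
      · rintro ⟨⟨⟨a, b⟩, c⟩, e⟩
        exact ⟨⟨a, e⟩, b, c ▸ e⟩
      · rintro ⟨⟨a, e⟩, b, c⟩
        exact ⟨⟨⟨a, b⟩, e.trans c.symm⟩, e⟩
    rw [e1, e2]
    refine (Finset.sum_mul_sq_le_sq_mul_sq _ _ _).trans (le_of_eq ?_)
    congr 1
    refine Finset.sum_congr rfl fun z _ => ?_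
    rw [← pow_mul, mul_comm]
  have h0 : 0 ≤ ∑ n ∈ P, w (g n) := Finset.sum_nonneg fun n _ => hw _
  calc (∑ n ∈ P, w (g n)) ^ (2 * r) = ((∑ n ∈ P, w (g n)) ^ r) ^ 2 := by rw [← pow_mul, mul_comm]
    _ ≤ ((P.card : ℝ) ^ (r - 1) * ∑ n ∈ P, w (g n) ^ r) ^ 2 := by gcongr
    _ = (P.card : ℝ) ^ (2 * r - 2) * (∑ n ∈ P, w (g n) ^ r) ^ 2 := by
        rw [mul_pow, ← pow_mul]; congr 2; omega
    _ ≤ _ := by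
        rw [mul_assoc]
        gcongr

/-- mean value with `n` chosen in terms of `H` -/
lemma mv2 (d : ℕ) (hd : 1 ≤ d) (h : ℝ) (hh : 0 < h) : ∃ p : ℕ, 2 ≤ p ∧ ∃ _ : NeZero p, ∃ C : ℝ, 1 ≤ C ∧
    ∀ H : ℕ, 1 ≤ H → ∃ n : ℕ, 1 ≤ n ∧ H < p ^ n ∧ ∀ u ≤ H,
      ∑ g : (∀ j : Fin d, ZMod (p ^ (((j : ℕ) + 1) * n))),
        ‖WW (fun j : Fin d => p ^ (((j : ℕ) + 1) * n)) (Finset.Icc (1 : ℤ) u) g‖ ^ (2 * rr d) ≤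
        C * (H : ℝ) ^ h * (H : ℝ) ^ (2 * rr d) := by
  obtain ⟨p, hp, hne, C, hC, hm⟩ := mean_value d hd h hh
  have hr := rr_pos hd
  refine ⟨p, hp, hne, C * ((p * rr d : ℕ) : ℝ) ^ h * ((p * rr d : ℕ) : ℝ) ^ rr d, ?_, fun H hH => ?_⟩
  · have h1 : (1 : ℝ) ≤ ((p * rr d : ℕ) : ℝ) := by
      exact_mod_cast Nat.mul_pos (by omega) hr
    have h2 := Real.one_le_rpow h1 hh.le
    have h3 := one_le_pow₀ (n := rr d) h1
    exact one_le_mul_of_one_le_of_one_le (one_le_mul_of_one_le_of_one_le hC h2) h3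
  · have hex : ∃ n, rr d * H < p ^ n := ⟨rr d * H, Nat.lt_pow_self (by omega)⟩
    classical
    set n := Nat.find hex with hn
    have h1 : rr d * H < p ^ n := Nat.find_spec hex
    have hrH : 1 ≤ rr d * H := Nat.mul_pos hr hH
    have hn1 : 1 ≤ n := by
      by_contra h0
      have : n = 0 := by omega
      rw [this] at h1
      simp at h1
      omega
    have h2 : p ^ n ≤ p * rr d * H := by
      have := Nat.find_min hex (m := n - 1) (by omega)
      push Not at this
      have e : p ^ n = p * p ^ (n - 1) := by rw [← pow_succ']; congr 1; omega
      rw [e, mul_assoc]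
      exact Nat.mul_le_mul_left _ this
    have h2R : (p : ℝ) ^ n ≤ ((p * rr d : ℕ) : ℝ) * H := by exact_mod_cast h2
    refine ⟨n, hn1, lt_of_le_of_lt (Nat.le_mul_of_pos_left H hr) h1, fun u hu => ?_⟩
    refine (hm n u _ (fun x hx => Finset.mem_Icc.1 hx) (lt_of_le_of_lt (Nat.mul_le_mul_left _ hu) h1)).trans ?_
    have h3 : (p : ℝ) ^ (h * n) ≤ ((p * rr d : ℕ) : ℝ) ^ h * (H : ℝ) ^ h := by
      rw [mul_comm h, Real.rpow_mul (by positivity), Real.rpow_natCast, ← Real.mul_rpow (by positivity) (by positivity)]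
      gcongr
    have h4 : (p : ℝ) ^ (n * rr d) ≤ ((p * rr d : ℕ) : ℝ) ^ rr d * (H : ℝ) ^ rr d := by
      rw [pow_mul, ← mul_pow]
      gcongr
    have hu' : (u : ℝ) ≤ H := by exact_mod_cast hu
    calc _ ≤ C * (((p * rr d : ℕ) : ℝ) ^ h * (H : ℝ) ^ h) * (((p * rr d : ℕ) : ℝ) ^ rr d * (H : ℝ) ^ rr d) * (H : ℝ) ^ rr d := by
          gcongr
      _ = _ := by rw [two_mul, pow_add]; ring

lemma card_diam (Q : Finset ℤ) (R : ℝ) (hR : 0 ≤ R) (h : ∀ x ∈ Q, ∀ y ∈ Q, ((x : ℝ) - y) ≤ R) : (Q.card : ℝ) ≤ R + 1 := by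
  rcases Q.eq_empty_or_nonempty with rfl | hQ
  · simp; linarith
  have h1 : Q ⊆ Finset.Icc (Q.min' hQ) (Q.max' hQ) := fun x hx =>
    Finset.mem_Icc.2 ⟨Q.min'_le x hx, Q.le_max' x hx⟩
  have h2 := Finset.card_le_card h1
  rw [Int.card_Icc] at h2
  have h3 := h _ (Q.max'_mem hQ) _ (Q.min'_mem hQ)
  have h4 : Q.min' hQ ≤ Q.max' hQ := Q.min'_le _ (Q.max'_mem hQ)
  have h5 : (Q.card : ℤ) ≤ Q.max' hQ + 1 - Q.min' hQ := by omega
  have h6 : (Q.card : ℝ) ≤ Q.max' hQ + 1 - Q.min' hQ := by exact_mod_cast h5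
  linarith

lemma count_near (Q : Finset ℕ) (D : ℕ → ℝ) (s S N η : ℝ) (hs : 0 < s) (hS : 0 ≤ S) (hN : 0 ≤ N) (hη : 0 ≤ η)
    (h1 : ∀ x ∈ Q, ∀ y ∈ Q, s * |(x : ℝ) - y| ≤ |D x - D y|)
    (h2 : ∀ x ∈ Q, ∀ y ∈ Q, |D x - D y| ≤ S * |(x : ℝ) - y|)
    (h3 : ∀ x ∈ Q, ∀ y ∈ Q, |(x : ℝ) - y| ≤ N)
    (h4 : ∀ x ∈ Q, ∃ z : ℤ, |D x - z| ≤ η) :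
    (Q.card : ℝ) ≤ (2 * η / s + 1) * (S * N + 2 * η + 1) := by
  classical
  choose! z hz using h4
  have a1 : ((Q.image z).card : ℝ) ≤ S * N + 2 * η + 1 := by
    apply card_diam _ _ (by positivity)
    intro x hx y hy
    obtain ⟨u, hu, rfl⟩ := Finset.mem_image.1 hx
    obtain ⟨v, hv, rfl⟩ := Finset.mem_image.1 hy
    have b1 := abs_le.1 (hz u hu)
    have b2 := abs_le.1 (hz v hv)
    have b3 := (le_abs_self _).trans ((h2 u hu v hv).trans (mul_le_mul_of_nonneg_left (h3 u hu v hv) hS))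
    linarith [b1.1, b1.2, b2.1, b2.2]
  have a2 : Q.card ≤ ⌊2 * η / s + 1⌋₊ * (Q.image z).card := by
    apply Finset.card_le_mul_card_image
    intro b _
    apply Nat.le_floor
    have : (((Q.filter (fun x => z x = b)).image (fun x : ℕ => (x : ℤ))).card : ℝ) ≤ 2 * η / s + 1 := by
      apply card_diam _ _ (by positivity)
      intro x hx y hy
      obtain ⟨u, hu1, rfl⟩ := Finset.mem_image.1 hx
      obtain ⟨v, hv1, rfl⟩ := Finset.mem_image.1 hy
      obtain ⟨hu, e'⟩ := Finset.mem_filter.1 hu1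
      obtain ⟨hv, e⟩ := Finset.mem_filter.1 hv1
      have b1 := abs_le.1 (hz u hu)
      have b2 := abs_le.1 (hz v hv)
      rw [e] at b2
      rw [e'] at b1
      have b3 := h1 u hu v hv
      rw [le_div_iff₀ hs]
      have b4 : |D u - D v| ≤ 2 * η := by rw [abs_le]; constructor <;> linarith [b1.1, b1.2, b2.1, b2.2]
      have b5 := le_abs_self ((u : ℝ) - v)
      push_cast
      nlinarith
    rwa [Finset.card_image_of_injective _ Nat.cast_injective] at this
  calc (Q.card : ℝ) ≤ (⌊2 * η / s + 1⌋₊ : ℝ) * ((Q.image z).card : ℝ) := by exact_mod_cast a2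
    _ ≤ _ := by
      gcongr
      exact Nat.floor_le (by positivity)

end HB
end

section
namespace HB
open Finset

/-- `F j` is a chain of derivatives on `[a,b]` -/
def Der (k : ℕ) (F : ℕ → ℝ → ℝ) (a b : ℝ) : Prop :=
  ∀ j < k, ∀ x ∈ Set.Icc a b, HasDerivWithinAt (F j) (F (j + 1) x) (Set.Icc a b) x

lemma mvt {G G' : ℝ → ℝ} {a b : ℝ} (h : ∀ x ∈ Set.Icc a b, HasDerivWithinAt G (G' x) (Set.Icc a b) x)
    {x y : ℝ} (hx : x ∈ Set.Icc a b) (hy : y ∈ Set.Icc a b) : ∃ c ∈ Set.Icc a b, G y - G x = G' c * (y - x) := by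
  have key : ∀ x ∈ Set.Icc a b, ∀ y ∈ Set.Icc a b, x < y → ∃ c ∈ Set.Icc a b, G y - G x = G' c * (y - x) := by
    intro x hx y hy hxy
    obtain ⟨c, hc, e⟩ := exists_hasDerivAt_eq_slope G G' hxy
      (fun z hz => ((h z ⟨hx.1.trans hz.1, hz.2.trans hy.2⟩).continuousWithinAt).mono
        (Set.Icc_subset_Icc hx.1 hy.2))
      (fun z hz => (h z ⟨hx.1.trans hz.1.le, hz.2.le.trans hy.2⟩).hasDerivAt
        (Icc_mem_nhds (lt_of_le_of_lt hx.1 hz.1) (lt_of_lt_of_le hz.2 hy.2)))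
    refine ⟨c, ⟨hx.1.trans hc.1.le, hc.2.le.trans hy.2⟩, ?_⟩
    rw [e, div_mul_cancel₀ _ (by linarith)]
  rcases lt_trichotomy x y with hxy | rfl | hxy
  · exact key x hx y hy hxy
  · exact ⟨x, hx, by simp⟩
  · obtain ⟨c, hc, e⟩ := key y hy x hx hxy
    exact ⟨c, hc, by linarith⟩

/-- Taylor remainder -/
noncomputable def EE (F : ℕ → ℝ → ℝ) (x0 : ℝ) (j i : ℕ) (t : ℝ) : ℝ :=
  F j (x0 + t) - ∑ l ∈ Finset.range i, F (j + l) x0 * (t ^ l / (l.factorial : ℝ))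

lemma EE_deriv {k : ℕ} {F : ℕ → ℝ → ℝ} {a b : ℝ} (hF : Der k F a b) {x0 : ℝ} (hx0 : x0 ∈ Set.Icc a b) {T : ℝ}
    (hT : x0 + T ≤ b) {j i : ℕ} (hj : j < k) {t : ℝ} (ht : t ∈ Set.Icc 0 T) :
    HasDerivWithinAt (EE F x0 j (i + 1)) (EE F x0 (j + 1) i t) (Set.Icc 0 T) t := by
  unfold EE
  have hm : x0 + t ∈ Set.Icc a b := ⟨by linarith [hx0.1, ht.1], by linarith [ht.2]⟩
  have h1 : HasDerivWithinAt (fun t => F j (x0 + t)) (F (j + 1) (x0 + t)) (Set.Icc 0 T) t := by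
    have hmap : Set.MapsTo (fun u : ℝ => x0 + u) (Set.Icc 0 T) (Set.Icc a b) := by
      intro u hu
      exact ⟨by linarith [hx0.1, hu.1], by linarith [hu.2]⟩
    exact (HasDerivWithinAt.comp (h := fun u : ℝ => x0 + u) t (hF j hj _ hm)
      (((hasDerivAt_id' t).const_add x0).hasDerivWithinAt) hmap).congr_deriv (mul_one _)
  have h2 : HasDerivAt (fun t : ℝ => ∑ l ∈ Finset.range (i + 1), F (j + l) x0 * (t ^ l / (l.factorial : ℝ)))
      (∑ l ∈ Finset.range i, F (j + 1 + l) x0 * (t ^ l / (l.factorial : ℝ))) t := by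
    simp_rw [Finset.sum_range_succ']
    have e : ∑ l ∈ Finset.range i, F (j + 1 + l) x0 * (t ^ l / (l.factorial : ℝ)) =
      ∑ l ∈ Finset.range i, F (j + 1 + l) x0 * (t ^ l / (l.factorial : ℝ)) + 0 := by simp
    rw [e]
    refine HasDerivAt.add (HasDerivAt.fun_sum fun l _ => ?_) ?_
    · have h3 := ((hasDerivAt_pow (l + 1) t).div_const (((l + 1).factorial : ℕ) : ℝ)).const_mul (F (j + (l + 1)) x0)
      refine h3.congr_deriv ?_
      rw [show j + 1 + l = j + (l + 1) by ring]
      congr 1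
      rw [Nat.factorial_succ]
      have : (l.factorial : ℝ) ≠ 0 := by positivity
      have : ((l : ℝ) + 1) ≠ 0 := by positivity
      push_cast
      field_simp
    · simpa using hasDerivAt_const t _
  exact h1.sub h2.hasDerivWithinAt

lemma EE_bound {k : ℕ} {F : ℕ → ℝ → ℝ} {a b B : ℝ} (hF : Der k F a b) (hB : ∀ x ∈ Set.Icc a b, |F k x| ≤ B)
    {x0 : ℝ} (hx0 : x0 ∈ Set.Icc a b) (i : ℕ) : ∀ j, j + i = k → ∀ t, 0 ≤ t → x0 + t ≤ b → |EE F x0 j i t| ≤ B * t ^ i := by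
  induction i with
  | zero =>
    intro j hj t ht htb
    simp only [add_zero] at hj
    subst hj
    simpa [EE] using hB (x0 + t) ⟨by linarith [hx0.1], htb⟩
  | succ i ih =>
    intro j hj t ht htb
    have hB0 : 0 ≤ B := (abs_nonneg _).trans (hB x0 hx0)
    have := Convex.norm_image_sub_le_of_norm_hasDerivWithin_le (s := Set.Icc 0 t) (C := B * t ^ i)
      (fun u hu => EE_deriv (i := i) hF hx0 htb (show j < k by omega) hu)
      (fun u hu => (ih (j + 1) (by omega) u hu.1 (by linarith [hu.2])).trans
        (mul_le_mul_of_nonneg_left (pow_le_pow_left₀ hu.1 hu.2 _) hB0))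
      (convex_Icc 0 t) (Set.left_mem_Icc.2 ht) (Set.right_mem_Icc.2 ht)
    have e : EE F x0 j (i + 1) 0 = 0 := by
      unfold EE
      rw [Finset.sum_range_succ']
      simp
    rw [e, sub_zero, sub_zero, Real.norm_eq_abs, Real.norm_eq_abs, abs_of_nonneg ht] at this
    rw [pow_succ, ← mul_assoc]
    exact this

lemma EE_diff {k : ℕ} {F : ℕ → ℝ → ℝ} {a b B : ℝ} (hF : Der (k + 1) F a b) (hB : ∀ x ∈ Set.Icc a b, |F (k + 1) x| ≤ B)
    {x0 : ℝ} (hx0 : x0 ∈ Set.Icc a b) {T t : ℝ} (ht : 0 ≤ t) (htT : t + 1 ≤ T) (hT : x0 + T ≤ b) :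
    |EE F x0 0 (k + 1) (t + 1) - EE F x0 0 (k + 1) t| ≤ B * T ^ k := by
  have hB0 : 0 ≤ B := (abs_nonneg _).trans (hB x0 hx0)
  have := Convex.norm_image_sub_le_of_norm_hasDerivWithin_le (s := Set.Icc 0 T) (C := B * T ^ k) (x := t) (y := t + 1)
      (fun u hu => EE_deriv (i := k) hF hx0 hT (show 0 < k + 1 by omega) hu)
      (fun u hu => (EE_bound hF hB hx0 k (0 + 1) (by omega) u hu.1 (by linarith [hu.2])).trans
        (mul_le_mul_of_nonneg_left (pow_le_pow_left₀ hu.1 hu.2 _) hB0))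
      (convex_Icc 0 T) ⟨ht, by linarith⟩ ⟨by linarith, htT⟩
  simpa using this

/-- second difference -/
lemma double_diff {k : ℕ} {F : ℕ → ℝ → ℝ} {a b lam A : ℝ} (hF : Der k F a b)
    (h1 : ∀ x ∈ Set.Icc a b, lam ≤ |F k x|) (h2 : ∀ x ∈ Set.Icc a b, |F k x| ≤ A * lam)
    {j : ℕ} (hj : j + 2 = k) {δ : ℝ} (hδ : 0 ≤ δ) {x y : ℝ} (hx : a ≤ x) (hy : a ≤ y) (hx' : x + δ ≤ b) (hy' : y + δ ≤ b) :
    lam * δ * |y - x| ≤ |(F j (y + δ) - F j y) - (F j (x + δ) - F j x)| ∧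
    |(F j (y + δ) - F j y) - (F j (x + δ) - F j x)| ≤ A * lam * δ * |y - x| := by
  have hd : ∀ z ∈ Set.Icc a (b - δ), HasDerivWithinAt (fun z => F j (z + δ) - F j z) (F (j + 1) (z + δ) - F (j + 1) z)
      (Set.Icc a (b - δ)) z := by
    intro z hz
    have hm : z + δ ∈ Set.Icc a b := ⟨by linarith [hz.1], by linarith [hz.2]⟩
    have hmap : Set.MapsTo (fun u : ℝ => u + δ) (Set.Icc a (b - δ)) (Set.Icc a b) := by
      intro u hu
      exact ⟨by linarith [hu.1], by linarith [hu.2]⟩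
    have e1 := (HasDerivWithinAt.comp (h := fun u : ℝ => u + δ) z (hF j (by omega) _ hm)
      (((hasDerivAt_id' z).add_const δ).hasDerivWithinAt) hmap).congr_deriv (mul_one _)
    have e2 := (hF j (by omega) z ⟨hz.1, by linarith [hz.2]⟩).mono (Set.Icc_subset_Icc_right (show b - δ ≤ b by linarith))
    exact e1.sub e2
  obtain ⟨c, hc, e⟩ := mvt hd ⟨hx, by linarith⟩ ⟨hy, by linarith⟩
  obtain ⟨c', hc', e'⟩ := mvt (hF (j + 1) (by omega)) (x := c) (y := c + δ) ⟨hc.1, by linarith [hc.2]⟩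
    ⟨by linarith [hc.1], by linarith [hc.2]⟩
  have e2 : (F j (y + δ) - F j y) - (F j (x + δ) - F j x) = F k c' * δ * (y - x) := by
    rw [e, e', ← hj]; ring
  rw [e2, abs_mul, abs_mul, abs_of_nonneg hδ]
  have := h1 c' hc'
  have := h2 c' hc'
  constructor <;> gcongr

end HB
end

section
namespace HB
open Finset

lemma pairs_card {G : Type*} [DecidableEq G] (P : Finset ℕ) (g : ℕ → G) (K : ℕ)
    (hK : ∀ x ∈ P, ∀ y ∈ P, g x = g y → y ≤ x + K) :
    ((P ×ˢ P).filter (fun q => g q.1 = g q.2)).card ≤ P.card +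
      2 * ∑ δ ∈ Finset.Icc 1 K, (P.filter (fun n => n + δ ∈ P ∧ g (n + δ) = g n)).card := by
  classical
  set Q : ℕ → Finset ℕ := fun δ => P.filter (fun n => n + δ ∈ P ∧ g (n + δ) = g n) with hQ
  have hsub : (P ×ˢ P).filter (fun q => g q.1 = g q.2) ⊆
      P.image (fun n => (n, n)) ∪ ((Finset.Icc 1 K).biUnion (fun δ => (Q δ).image (fun n => (n, n + δ))) ∪
        (Finset.Icc 1 K).biUnion (fun δ => (Q δ).image (fun n => (n + δ, n)))) := by
    rintro ⟨x, y⟩ hq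
    simp only [Finset.mem_filter, Finset.mem_product] at hq
    obtain ⟨⟨hx, hy⟩, e⟩ := hq
    rw [Finset.mem_union, Finset.mem_union]
    rcases lt_trichotomy x y with h | rfl | h
    · right; left
      refine Finset.mem_biUnion.2 ⟨y - x, ?_, ?_⟩
      · have := hK x hx y hy e
        simp; omega
      · refine Finset.mem_image.2 ⟨x, ?_, ?_⟩
        · have h1 : x + (y - x) = y := by omega
          simp only [hQ, Finset.mem_filter, h1]
          exact ⟨hx, hy, e.symm⟩
        · simp; omega
    · left
      exact Finset.mem_image.2 ⟨x, hx, rfl⟩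
    · right; right
      refine Finset.mem_biUnion.2 ⟨x - y, ?_, ?_⟩
      · have := hK y hy x hx e.symm
        simp; omega
      · refine Finset.mem_image.2 ⟨y, ?_, ?_⟩
        · have h1 : y + (x - y) = x := by omega
          simp only [hQ, Finset.mem_filter, h1]
          exact ⟨hy, hx, e⟩
        · simp; omega
  refine (Finset.card_le_card hsub).trans ((Finset.card_union_le _ _).trans ?_)
  refine Nat.add_le_add Finset.card_image_le ((Finset.card_union_le _ _).trans ?_)
  rw [two_mul]
  exact Nat.add_le_add (Finset.card_biUnion_le.trans (Finset.sum_le_sum fun _ _ => Finset.card_image_le))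
    (Finset.card_biUnion_le.trans (Finset.sum_le_sum fun _ _ => Finset.card_image_le))

/-- discretised Taylor coefficients -/
noncomputable def fl (F : ℕ → ℝ → ℝ) (M : ℕ) (j : ℕ) (x : ℝ) : ℤ := ⌊F j x / (j.factorial : ℝ) * M⌋

noncomputable def gv (d p n : ℕ) (F : ℕ → ℝ → ℝ) (x : ℕ) : ∀ j : Fin d, ZMod (p ^ (((j : ℕ) + 1) * n)) :=
  fun j => ((fl F (p ^ (((j : ℕ) + 1) * n)) ((j : ℕ) + 1) x : ℤ) : ZMod _)

lemma fl_close (F : ℕ → ℝ → ℝ) (M : ℕ) (hM : 0 < M) (j : ℕ) (x : ℝ) :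
    |F j x / (j.factorial : ℝ) - fl F M j x / M| ≤ 1 / M := by
  have hM' : (0 : ℝ) < M := by exact_mod_cast hM
  have h1 := Int.floor_le (F j x / (j.factorial : ℝ) * M)
  have h2 := Int.lt_floor_add_one (F j x / (j.factorial : ℝ) * M)
  have e : F j x / (j.factorial : ℝ) - fl F M j x / M = (F j x / (j.factorial : ℝ) * M - fl F M j x) / M := by
    field_simp
  rw [e, abs_div, abs_of_pos hM']
  gcongr
  unfold fl
  rw [abs_le]
  constructor <;> linarith

lemma gv_eq {d p n : ℕ} (hp : 0 < p) {F : ℕ → ℝ → ℝ} {x y : ℕ} (h : gv d p n F x = gv d p n F y) (j : ℕ) (hj : j < d) :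
    ∃ z : ℤ, |F (j + 1) x / ((j + 1).factorial : ℝ) - F (j + 1) y / ((j + 1).factorial : ℝ) - z| < 1 / (p : ℝ) ^ ((j + 1) * n) := by
  have h1 := congrFun h ⟨j, hj⟩
  unfold gv at h1
  simp only at h1
  rw [ZMod.intCast_eq_intCast_iff_dvd_sub] at h1
  obtain ⟨z, hz⟩ := h1
  refine ⟨-z, ?_⟩
  have hM : (0 : ℝ) < (p : ℝ) ^ ((j + 1) * n) := by positivity
  rw [lt_div_iff₀ hM, ← abs_of_pos hM, ← abs_mul]
  unfold fl at hz
  push_cast at hz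
  set X := F (j + 1) x / ((j + 1).factorial : ℝ) * (p : ℝ) ^ ((j + 1) * n) with hX
  set Y := F (j + 1) y / ((j + 1).factorial : ℝ) * (p : ℝ) ^ ((j + 1) * n) with hY
  have e : (F (j + 1) x / ((j + 1).factorial : ℝ) - F (j + 1) y / ((j + 1).factorial : ℝ) - ((-z : ℤ) : ℝ)) * (p : ℝ) ^ ((j + 1) * n)
      = X - Y + (p : ℝ) ^ ((j + 1) * n) * z := by
    rw [hX, hY]; push_cast; ring
  have hz' : (⌊Y⌋ : ℝ) - ⌊X⌋ = (p : ℝ) ^ ((j + 1) * n) * z := by exact_mod_cast hz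
  rw [e, ← hz']
  have a1 := Int.floor_le X
  have a2 := Int.lt_floor_add_one X
  have a3 := Int.floor_le Y
  have a4 := Int.lt_floor_add_one Y
  rw [abs_lt]
  constructor <;> linarith

lemma harm_bound (h : ℝ) (hh : 0 < h) (K H : ℕ) (hK : 1 ≤ K) (hH : 1 ≤ H) :
    ∑ δ ∈ Finset.Icc 1 (K * H), (1 : ℝ) / δ ≤ (1 + (K : ℝ) ^ h / h) * (H : ℝ) ^ h := by
  have h1 := harmonic_le_one_add_log (K * H)
  have h2 : ((harmonic (K * H) : ℚ) : ℝ) = ∑ δ ∈ Finset.Icc 1 (K * H), (1 : ℝ) / δ := by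
    rw [harmonic_eq_sum_Icc]; push_cast; simp
  rw [← h2]
  have h3 := Real.log_le_rpow_div (x := ((K * H : ℕ) : ℝ)) (by positivity) hh
  have h4 : ((K * H : ℕ) : ℝ) ^ h = (K : ℝ) ^ h * (H : ℝ) ^ h := by
    push_cast; rw [Real.mul_rpow (by positivity) (by positivity)]
  rw [h4] at h3
  have h5 : (1 : ℝ) ≤ (H : ℝ) ^ h := Real.one_le_rpow (by exact_mod_cast hH) hh.le
  calc _ ≤ _ := h1
    _ ≤ 1 + (K : ℝ) ^ h * (H : ℝ) ^ h / h := by linarith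
    _ ≤ (H : ℝ) ^ h + (K : ℝ) ^ h * (H : ℝ) ^ h / h := by linarith
    _ = _ := by ring

end HB
end

section
namespace HB
open Finset

set_option maxHeartbeats 1000000 in
lemma pairs_bound (d : ℕ) (hd : 2 ≤ d) (A : ℝ) (hA : 1 ≤ A) (h : ℝ) (hh : 0 < h) : ∃ C : ℝ, 1 ≤ C ∧
    ∀ (p n H : ℕ) (F : ℕ → ℝ → ℝ) (a b lam N : ℝ) (P : Finset ℕ), 2 ≤ p → 1 ≤ n → 1 ≤ H → H < p ^ n →
      Der (d + 1) F a b → 0 < lam → (∀ x ∈ Set.Icc a b, lam ≤ |F (d + 1) x|) →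
      (∀ x ∈ Set.Icc a b, |F (d + 1) x| ≤ A * lam) → 1 ≤ lam * (2 * H : ℝ) ^ (d + 1) → 1 ≤ N → A * lam * N ≤ 1 / 2 →
      (∀ x ∈ P, (x : ℝ) ∈ Set.Icc a b) → (∀ x ∈ P, ∀ y ∈ P, |(x : ℝ) - y| ≤ N) → (P.card : ℝ) ≤ 2 * N →
      (((P ×ˢ P).filter (fun q => gv d p n F q.1 = gv d p n F q.2)).card : ℝ) ≤ C * (N + (H : ℝ) ^ 2) * (H : ℝ) ^ h := by
  obtain ⟨K, hK⟩ : ∃ K : ℕ, K = d.factorial * 2 ^ (d + 1) := ⟨_, rfl⟩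
  have hK1 : 1 ≤ K := by rw [hK]; exact Nat.mul_pos (Nat.factorial_pos _) (by positivity)
  obtain ⟨c1, hc1⟩ : ∃ c1 : ℝ, c1 = 2 * ((d - 1).factorial : ℝ) * 2 ^ (d + 1) := ⟨_, rfl⟩
  have hc1p : 0 < c1 := by rw [hc1]; positivity
  have hKp : (1 : ℝ) ≤ K := by exact_mod_cast hK1
  have hB : 0 ≤ (K : ℝ) ^ h / h := by positivity
  refine ⟨2 + 4 * A * K + 2 * K ^ 2 + 6 * c1 * (1 + (K : ℝ) ^ h / h) + 6 * K, ?_, ?_⟩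
  · have : 0 ≤ 4 * A * K + 2 * K ^ 2 + 6 * c1 * (1 + (K : ℝ) ^ h / h) + 6 * K := by positivity
    linarith
  intro p n H F a b lam N P hp hn hH hHp hF hlam h1 h2 hlH hN hAN hP hPN hPc
  have hH1 : (1 : ℝ) ≤ H := by exact_mod_cast hH
  have hH0 : (0 : ℝ) < H := by linarith
  have hHpn : (H : ℝ) ≤ (p : ℝ) ^ n := by exact_mod_cast hHp.le
  have hp2 : (2 : ℝ) ≤ p := by exact_mod_cast hp
  have hp0 : (0 : ℝ) < p := by linarith
  -- fractional part control
  have hpow : ∀ j, (1 : ℝ) / (p : ℝ) ^ (j * n) ≤ 1 / (H : ℝ) ^ j := by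
    intro j
    rw [mul_comm, pow_mul]
    gcongr
  -- first: differences
  have hdiff : ∀ x ∈ P, ∀ y ∈ P, gv d p n F x = gv d p n F y → y ≤ x + K * H := by
    intro x hx y hy e
    obtain ⟨z, hz⟩ := gv_eq (by omega) e (d - 1) (by omega)
    rw [show d - 1 + 1 = d by omega] at hz
    obtain ⟨c, hc, ec⟩ := mvt (hF d (by omega)) (hP y hy) (hP x hx)
    have hfac : (1 : ℝ) ≤ d.factorial := by exact_mod_cast Nat.factorial_pos d
    have e1 : F d x / (d.factorial : ℝ) - F d y / (d.factorial : ℝ) = F (d + 1) c * ((x : ℝ) - y) / d.factorial := by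
      rw [← ec]; ring
    have l1 := h1 c hc
    have l2 := h2 c hc
    have hub : |F d x / (d.factorial : ℝ) - F d y / (d.factorial : ℝ)| ≤ 1 / 2 := by
      rw [e1, abs_div, abs_mul, Nat.abs_cast]
      calc _ ≤ (A * lam * N) / 1 := by
            gcongr
            exact hPN x hx y hy
        _ ≤ 1 / 2 := by rw [div_one]; exact hAN
    have hsm : 1 / (p : ℝ) ^ (d * n) ≤ 1 / 2 := by
      gcongr
      calc (2 : ℝ) ≤ p := hp2
        _ = p ^ 1 := (pow_one _).symm
        _ ≤ p ^ (d * n) := pow_le_pow_right₀ (by linarith) (Nat.mul_pos (by omega) (by omega))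
    have hz0 : z = 0 := by
      have b1 := abs_lt.1 hz
      have b2 := abs_le.1 hub
      have b3 : (z : ℝ) < 1 := by linarith [b1.1, b1.2, b2.1, b2.2]
      have b4 : (-1 : ℝ) < z := by linarith [b1.1, b1.2, b2.1, b2.2]
      have b5 : z < 1 := by exact_mod_cast b3
      have b6 : -1 < z := by exact_mod_cast b4
      omega
    rw [hz0, Int.cast_zero, sub_zero, e1, abs_div, abs_mul, Nat.abs_cast] at hz
    have h3 : lam * |(x : ℝ) - y| / d.factorial ≤ 1 / (H : ℝ) ^ d := by
      refine le_trans ?_ (hz.le.trans (hpow d))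
      gcongr
    rw [div_le_div_iff₀ (by linarith) (by positivity)] at h3
    have h4 : |(x : ℝ) - y| ≤ K * H := by
      have : |(x : ℝ) - y| * (lam * (H : ℝ) ^ d) ≤ (K * H) * (lam * (H : ℝ) ^ d) := by
        calc |(x : ℝ) - y| * (lam * (H : ℝ) ^ d) = lam * |(x : ℝ) - y| * (H : ℝ) ^ d := by ring
          _ ≤ 1 * d.factorial := h3
          _ ≤ (lam * (2 * H : ℝ) ^ (d + 1)) * d.factorial := by gcongr
          _ = _ := by rw [hK]; push_cast; rw [mul_pow]; ring
      exact le_of_mul_le_mul_right this (by positivity)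
    have h5 : (y : ℝ) ≤ x + K * H := by
      have := (abs_le.1 h4).1
      linarith
    exact_mod_cast h5
  -- second
  obtain ⟨η, hη⟩ : ∃ η : ℝ, η = 1 / (p : ℝ) ^ ((d - 1) * n) := ⟨_, rfl⟩
  have hη0 : 0 ≤ η := by rw [hη]; positivity
  have hηH : η ≤ 1 / (H : ℝ) ^ (d - 1) := hη ▸ hpow (d - 1)
  have hηH1 : η ≤ 1 / H := by
    refine hηH.trans ?_
    gcongr
    exact le_self_pow₀ hH1 (by omega)
  have hη1 : η ≤ 1 := hηH1.trans (by rw [div_le_one hH0]; exact hH1)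
  have hηl : η ≤ lam * (2 ^ (d + 1) * (H : ℝ) ^ 2) := by
    refine hηH.trans ?_
    rw [div_le_iff₀ (by positivity)]
    calc 1 ≤ _ := hlH
      _ = _ := by
        rw [mul_pow, show d + 1 = 2 + (d - 1) by omega, pow_add (H : ℝ)]; ring
  have hQ : ∀ δ ∈ Finset.Icc 1 (K * H), ((P.filter (fun m => m + δ ∈ P ∧ gv d p n F (m + δ) = gv d p n F m)).card : ℝ) ≤
      2 * A * N / H + K * H + 3 * c1 * (H : ℝ) ^ 2 * (1 / δ) + 3 := by
    intro δ hδ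
    obtain ⟨hδ1, hδ2⟩ := Finset.mem_Icc.1 hδ
    have hδ1' : (1 : ℝ) ≤ δ := by exact_mod_cast hδ1
    have hδ0 : (0 : ℝ) < δ := by linarith
    have hδ2' : (δ : ℝ) ≤ K * H := by exact_mod_cast hδ2
    obtain ⟨φ, hφ⟩ : ∃ φ : ℝ, φ = ((d - 1).factorial : ℝ) := ⟨_, rfl⟩
    have hφ1 : 1 ≤ φ := by rw [hφ]; exact_mod_cast Nat.factorial_pos _
    have hφ0 : 0 < φ := by linarith
    have hcn := count_near (P.filter (fun m => m + δ ∈ P ∧ gv d p n F (m + δ) = gv d p n F m))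
      (fun x => F (d - 1) ((x : ℝ) + δ) / φ - F (d - 1) x / φ) (lam * δ / φ) (A * lam * δ / φ) N η
      (by positivity) (by positivity) (by linarith) hη0 ?_ ?_ ?_ ?_
    · refine hcn.trans ?_
      have e : (2 * η / (lam * δ / φ) + 1) * (A * lam * δ / φ * N + 2 * η + 1) =
          2 * A * N * η + (A * lam * N) * δ * (1 / φ) + (2 * η / (lam * δ / φ) + 1) * (2 * η + 1) := by
        field_simp
        ring
      rw [e]
      have f1 : 2 * A * N * η ≤ 2 * A * N / H := by
        rw [div_eq_mul_one_div (2 * A * N) (H : ℝ)]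
        gcongr
      have f2 : (A * lam * N) * δ * (1 / φ) ≤ K * H := by
        calc (A * lam * N) * δ * (1 / φ) ≤ 1 * (K * H) * 1 := by
              gcongr
              · linarith
              · rw [div_le_one hφ0]; exact hφ1
          _ = K * H := by ring
      have f3 : 2 * η / (lam * δ / φ) ≤ c1 * (H : ℝ) ^ 2 * (1 / δ) := by
        rw [div_le_iff₀ (by positivity), hc1, ← hφ]
        have : 2 * φ * 2 ^ (d + 1) * (H : ℝ) ^ 2 * (1 / δ) * (lam * δ / φ) = 2 * (lam * (2 ^ (d + 1) * (H : ℝ) ^ 2)) := by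
          field_simp
        rw [this]; linarith
      have f4 : (2 * η / (lam * δ / φ) + 1) * (2 * η + 1) ≤ (c1 * (H : ℝ) ^ 2 * (1 / δ) + 1) * 3 := by
        gcongr
        linarith
      linarith
    · intro x hx y hy
      simp only [Finset.mem_filter] at hx hy
      have hx' := hP _ hx.2.1
      have hy' := hP _ hy.2.1
      push_cast at hx' hy'
      have := (double_diff hF h1 h2 (j := d - 1) (by omega) hδ0.le (hP y hy.1).1 (hP x hx.1).1 hy'.2 hx'.2).1
      have e : (F (d - 1) ((x : ℝ) + δ) / φ - F (d - 1) x / φ - (F (d - 1) ((y : ℝ) + δ) / φ - F (d - 1) y / φ)) =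
        ((F (d - 1) ((x : ℝ) + δ) - F (d - 1) x) - (F (d - 1) ((y : ℝ) + δ) - F (d - 1) y)) / φ := by ring
      rw [e, abs_div, abs_of_pos hφ0, div_mul_eq_mul_div]
      gcongr
    · intro x hx y hy
      simp only [Finset.mem_filter] at hx hy
      have hx' := hP _ hx.2.1
      have hy' := hP _ hy.2.1
      push_cast at hx' hy'
      have := (double_diff hF h1 h2 (j := d - 1) (by omega) hδ0.le (hP y hy.1).1 (hP x hx.1).1 hy'.2 hx'.2).2
      have e : (F (d - 1) ((x : ℝ) + δ) / φ - F (d - 1) x / φ - (F (d - 1) ((y : ℝ) + δ) / φ - F (d - 1) y / φ)) =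
        ((F (d - 1) ((x : ℝ) + δ) - F (d - 1) x) - (F (d - 1) ((y : ℝ) + δ) - F (d - 1) y)) / φ := by ring
      rw [e, abs_div, abs_of_pos hφ0, div_mul_eq_mul_div]
      gcongr
    · intro x hx y hy
      exact hPN x (Finset.mem_filter.1 hx).1 y (Finset.mem_filter.1 hy).1
    · intro x hx
      obtain ⟨z, hz⟩ := gv_eq (by omega) (Finset.mem_filter.1 hx).2.2 (d - 2) (by omega)
      rw [show d - 2 + 1 = d - 1 by omega, ← hφ, ← hη] at hz
      push_cast at hz
      exact ⟨z, hz.le⟩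
  have hpc := pairs_card P (gv d p n F) (K * H) hdiff
  have hpc' : (((P ×ˢ P).filter (fun q => gv d p n F q.1 = gv d p n F q.2)).card : ℝ) ≤ P.card +
      2 * ∑ δ ∈ Finset.Icc 1 (K * H), ((P.filter (fun m => m + δ ∈ P ∧ gv d p n F (m + δ) = gv d p n F m)).card : ℝ) := by
    exact_mod_cast hpc
  have hsum := Finset.sum_le_sum hQ
  rw [Finset.sum_add_distrib, Finset.sum_add_distrib, Finset.sum_add_distrib] at hsum
  simp only [Finset.sum_const, Nat.card_Icc, Nat.add_sub_cancel, nsmul_eq_mul] at hsum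
  push_cast at hsum
  have hharm := harm_bound h hh K H hK1 hH
  have hHh : (1 : ℝ) ≤ (H : ℝ) ^ h := Real.one_le_rpow hH1 hh.le
  have g1 : (K : ℝ) * H * (2 * A * N / H) = 2 * A * K * N := by field_simp
  have g2 : 3 * c1 * (H : ℝ) ^ 2 * ∑ δ ∈ Finset.Icc 1 (K * H), (1 : ℝ) / δ ≤
      3 * c1 * (H : ℝ) ^ 2 * ((1 + (K : ℝ) ^ h / h) * (H : ℝ) ^ h) := by gcongr
  have g3 : (H : ℝ) ≤ (H : ℝ) ^ 2 := by nlinarith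
  rw [g1] at hsum
  rw [Finset.mul_sum] at g2
  calc _ ≤ _ := hpc'
    _ ≤ 2 * N + 2 * (2 * A * K * N + K ^ 2 * (H : ℝ) ^ 2 + 3 * c1 * (H : ℝ) ^ 2 * ((1 + (K : ℝ) ^ h / h) * (H : ℝ) ^ h) + 3 * K * (H : ℝ) ^ 2) := by
        have : (K : ℝ) * H * (K * H) = K ^ 2 * (H : ℝ) ^ 2 := by ring
        have : (K : ℝ) * (K * H * H) = K ^ 2 * (H : ℝ) ^ 2 := by ring
        have : (K : ℝ) * H * 3 ≤ 3 * K * (H : ℝ) ^ 2 := by nlinarith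
        linarith
    _ = (2 + 4 * A * K) * N * 1 + (2 * K ^ 2 + 6 * K) * (H : ℝ) ^ 2 * 1 + 6 * c1 * (1 + (K : ℝ) ^ h / h) * (H : ℝ) ^ 2 * (H : ℝ) ^ h := by ring
    _ ≤ (2 + 4 * A * K) * N * (H : ℝ) ^ h + (2 * K ^ 2 + 6 * K) * (H : ℝ) ^ 2 * (H : ℝ) ^ h + 6 * c1 * (1 + (K : ℝ) ^ h / h) * (H : ℝ) ^ 2 * (H : ℝ) ^ h := by gcongr
    _ ≤ _ := by
        have : 0 ≤ (H : ℝ) ^ h * ((2 + 4 * A * K) * (H : ℝ) ^ 2 + (2 * K ^ 2 + 6 * c1 * (1 + (K : ℝ) ^ h / h) + 6 * K) * N) := by positivity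
        refine le_of_sub_nonneg (this.trans_eq ?_)
        ring

end HB
end

section
namespace HB
open Finset

noncomputable def ee (x : ℝ) : ℂ := Complex.exp (2 * Real.pi * Complex.I * x)

lemma ee_eq (x : ℝ) : ee x = Complex.exp (Complex.I * ((2 * Real.pi * x : ℝ) : ℂ)) := by
  unfold ee; congr 1; push_cast; ring

lemma norm_ee (x : ℝ) : ‖ee x‖ = 1 := by
  rw [ee_eq, mul_comm, Complex.norm_exp_ofReal_mul_I]

lemma ee_add (x y : ℝ) : ee (x + y) = ee x * ee y := by
  unfold ee; rw [← Complex.exp_add]; congr 1; push_cast; ring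

lemma ee_sum {ι : Type*} (s : Finset ι) (f : ι → ℝ) : ee (∑ i ∈ s, f i) = ∏ i ∈ s, ee (f i) := by
  classical
  induction s using Finset.induction_on with
  | empty => simp [ee]
  | insert a s ha ih => rw [Finset.sum_insert ha, Finset.prod_insert ha, ee_add, ih]

lemma ee_diff (x y : ℝ) : ‖ee x - ee y‖ ≤ 2 * Real.pi * |x - y| := by
  have h : ee x - ee y = ee y * (ee (x - y) - 1) := by
    rw [mul_sub, ← ee_add, mul_one]; congr 2; ring
  rw [h, norm_mul, norm_ee, one_mul, ee_eq]
  refine (Real.norm_exp_I_mul_ofReal_sub_one_le).trans (le_of_eq ?_)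
  rw [Real.norm_eq_abs, abs_mul, abs_of_pos (by positivity)]

lemma pow_diff (t : ℝ) (ht : 0 ≤ t) (n : ℕ) : (t + 1) ^ (n + 1) - t ^ (n + 1) ≤ (n + 1) * (t + 1) ^ n := by
  induction n with
  | zero => simp
  | succ n ih =>
    have h1 : t ^ (n + 1) ≤ (t + 1) ^ (n + 1) := by gcongr; linarith
    have h2 : (t + 1) ^ (n + 1 + 1) - t ^ (n + 1 + 1) = (t + 1) * ((t + 1) ^ (n + 1) - t ^ (n + 1)) + t ^ (n + 1) := by ring
    rw [h2]
    have h3 := mul_le_mul_of_nonneg_left ih (show 0 ≤ t + 1 by linarith)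
    push_cast
    have h4 : (t + 1) * ((n + 1) * (t + 1) ^ n) = (n + 1) * (t + 1) ^ (n + 1) := by ring
    linarith

lemma WW_range {d : ℕ} (M : Fin d → ℕ) [∀ j, NeZero (M j)] (g : ∀ j, ZMod (M j)) (u : ℕ) :
    WW M (Finset.Icc (1 : ℤ) u) g = ∑ i ∈ Finset.range u,
      ∏ j, (ZMod.stdAddChar (g j * ((((i : ℤ) + 1) ^ ((j : ℕ) + 1) : ℤ) : ZMod (M j))) : ℂ) := by
  unfold WW
  induction u with
  | zero => simp
  | succ u ih =>
    have : Finset.Icc (1 : ℤ) ((u + 1 : ℕ) : ℤ) = insert ((u : ℤ) + 1) (Finset.Icc (1 : ℤ) u) := by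
      ext x; simp only [Finset.mem_Icc, Finset.mem_insert]; push_cast; omega
    rw [this, Finset.sum_insert (by simp), ih, Finset.sum_range_succ, add_comm]

/-- the discretised polynomial phase -/
noncomputable def pp (d p n : ℕ) (F : ℕ → ℝ → ℝ) (x : ℕ) (t : ℝ) : ℝ :=
  ∑ j ∈ Finset.range d, (fl F (p ^ ((j + 1) * n)) (j + 1) x : ℝ) / ((p ^ ((j + 1) * n) : ℕ) : ℝ) * t ^ (j + 1)

lemma WW_pp (d p n : ℕ) [NeZero p] (F : ℕ → ℝ → ℝ) (x u : ℕ) :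
    WW (fun j : Fin d => p ^ (((j : ℕ) + 1) * n)) (Finset.Icc (1 : ℤ) u) (gv d p n F x) =
      ∑ i ∈ Finset.range u, ee (pp d p n F x ((i : ℝ) + 1)) := by
  rw [WW_range]
  refine Finset.sum_congr rfl fun i _ => ?_
  unfold pp
  rw [ee_sum, ← Fin.prod_univ_eq_prod_range (fun j => ee ((fl F (p ^ ((j + 1) * n)) (j + 1) x : ℝ) / ((p ^ ((j + 1) * n) : ℕ) : ℝ) * ((i : ℝ) + 1) ^ (j + 1)))]
  refine Finset.prod_congr rfl fun j _ => ?_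
  unfold gv
  rw [← Int.cast_mul, ZMod.stdAddChar_coe]
  unfold ee
  congr 1
  push_cast
  ring

lemma phase_diff {d p n H : ℕ} {F : ℕ → ℝ → ℝ} {a b lam A : ℝ} (hp : 2 ≤ p) (hH : 1 ≤ H) (hHp : H < p ^ n)
    (hF : Der (d + 1) F a b) (hlam : 0 < lam) (hA : 1 ≤ A)
    (h2 : ∀ x ∈ Set.Icc a b, |F (d + 1) x| ≤ A * lam) (hlH : lam * (H : ℝ) ^ (d + 1) ≤ 1)
    {x : ℕ} (hx : (x : ℝ) ∈ Set.Icc a b) (hxH : (x : ℝ) + H ≤ b) {t : ℝ} (ht : 0 ≤ t) (htH : t + 1 ≤ H) :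
    |(F 0 (x + (t + 1)) - pp d p n F x (t + 1)) - (F 0 (x + t) - pp d p n F x t)| ≤ (A + d ^ 2) / H := by
  have hH1 : (1 : ℝ) ≤ H := by exact_mod_cast hH
  have hH0 : (0 : ℝ) < H := by linarith
  have hHpn : (H : ℝ) ≤ (p : ℝ) ^ n := by exact_mod_cast hHp.le
  have hE := EE_diff hF h2 hx ht htH hxH
  have hE2 : A * lam * (H : ℝ) ^ d ≤ A / H := by
    rw [le_div_iff₀ hH0]
    calc A * lam * (H : ℝ) ^ d * H = A * (lam * (H : ℝ) ^ (d + 1)) := by ring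
      _ ≤ A * 1 := by gcongr
      _ = A := mul_one A
  have hdec : ∀ s : ℝ, F 0 (x + s) - pp d p n F x s = EE F x 0 (d + 1) s + F 0 x +
      ∑ j ∈ Finset.range d, (F (j + 1) x / ((j + 1).factorial : ℝ) - (fl F (p ^ ((j + 1) * n)) (j + 1) x : ℝ) / ((p ^ ((j + 1) * n) : ℕ) : ℝ)) * s ^ (j + 1) := by
    intro s
    unfold EE pp
    rw [Finset.sum_range_succ']
    simp only [sub_mul, Finset.sum_sub_distrib]
    have : ∑ j ∈ Finset.range d, F (0 + (j + 1)) x * (s ^ (j + 1) / ((j + 1).factorial : ℝ)) =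
        ∑ j ∈ Finset.range d, F (j + 1) x / ((j + 1).factorial : ℝ) * s ^ (j + 1) := by
      refine Finset.sum_congr rfl fun j _ => ?_
      rw [zero_add]; ring
    rw [this]
    simp
    ring
  rw [hdec, hdec]
  have hS : |∑ j ∈ Finset.range d, (F (j + 1) x / ((j + 1).factorial : ℝ) - (fl F (p ^ ((j + 1) * n)) (j + 1) x : ℝ) / ((p ^ ((j + 1) * n) : ℕ) : ℝ)) * ((t + 1) ^ (j + 1) - t ^ (j + 1))| ≤ d ^ 2 / H := by
    refine (Finset.abs_sum_le_sum_abs _ _).trans ?_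
    have : ∀ j ∈ Finset.range d, |(F (j + 1) x / ((j + 1).factorial : ℝ) - (fl F (p ^ ((j + 1) * n)) (j + 1) x : ℝ) / ((p ^ ((j + 1) * n) : ℕ) : ℝ)) * ((t + 1) ^ (j + 1) - t ^ (j + 1))| ≤ d / H := by
      intro j hj
      have hj' : (j : ℝ) + 1 ≤ d := by exact_mod_cast Finset.mem_range.1 hj
      have h3 := fl_close F (p ^ ((j + 1) * n)) (by positivity) (j + 1) x
      have h4 : 1 / ((p ^ ((j + 1) * n) : ℕ) : ℝ) ≤ 1 / (H : ℝ) ^ (j + 1) := by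
        push_cast
        rw [mul_comm, pow_mul]
        gcongr
      have h5 := pow_diff t ht j
      have h6 : 0 ≤ (t + 1) ^ (j + 1) - t ^ (j + 1) := by
        have : t ^ (j + 1) ≤ (t + 1) ^ (j + 1) := by gcongr; linarith
        linarith
      have h7 : ((j : ℝ) + 1) * (t + 1) ^ j ≤ d * (H : ℝ) ^ j := by gcongr
      rw [abs_mul, abs_of_nonneg h6]
      calc _ ≤ 1 / (H : ℝ) ^ (j + 1) * (d * (H : ℝ) ^ j) := by
            gcongr
            · exact h3.trans h4
            · exact h5.trans h7
        _ = d / H := by field_simp; ring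
    refine (Finset.sum_le_sum this).trans (le_of_eq ?_)
    simp
    ring
  have e : (EE F x 0 (d + 1) (t + 1) + F 0 x + ∑ j ∈ Finset.range d, (F (j + 1) x / ((j + 1).factorial : ℝ) - (fl F (p ^ ((j + 1) * n)) (j + 1) x : ℝ) / ((p ^ ((j + 1) * n) : ℕ) : ℝ)) * (t + 1) ^ (j + 1)) -
      (EE F x 0 (d + 1) t + F 0 x + ∑ j ∈ Finset.range d, (F (j + 1) x / ((j + 1).factorial : ℝ) - (fl F (p ^ ((j + 1) * n)) (j + 1) x : ℝ) / ((p ^ ((j + 1) * n) : ℕ) : ℝ)) * t ^ (j + 1)) =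
      (EE F x 0 (d + 1) (t + 1) - EE F x 0 (d + 1) t) + ∑ j ∈ Finset.range d, (F (j + 1) x / ((j + 1).factorial : ℝ) - (fl F (p ^ ((j + 1) * n)) (j + 1) x : ℝ) / ((p ^ ((j + 1) * n) : ℕ) : ℝ)) * ((t + 1) ^ (j + 1) - t ^ (j + 1)) := by
    simp only [mul_sub, Finset.sum_sub_distrib]
    ring
  rw [e, add_div]
  exact (abs_add_le _ _).trans (add_le_add (hE.trans hE2) hS)

lemma local_sum {d p n H : ℕ} [NeZero p] {F : ℕ → ℝ → ℝ} {a b lam A : ℝ} (hp : 2 ≤ p) (hH : 1 ≤ H) (hHp : H < p ^ n)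
    (hF : Der (d + 1) F a b) (hlam : 0 < lam) (hA : 1 ≤ A)
    (h2 : ∀ x ∈ Set.Icc a b, |F (d + 1) x| ≤ A * lam) (hlH : lam * (H : ℝ) ^ (d + 1) ≤ 1)
    {x : ℕ} (hx : (x : ℝ) ∈ Set.Icc a b) (hxH : (x : ℝ) + H ≤ b) :
    ‖∑ i ∈ Finset.range H, ee (F 0 (x + ((i : ℝ) + 1)))‖ ≤
      ‖WW (fun j : Fin d => p ^ (((j : ℕ) + 1) * n)) (Finset.Icc (1 : ℤ) H) (gv d p n F x)‖ +
      ∑ i ∈ Finset.range (H - 1), 2 * Real.pi * ((A + d ^ 2) / H) *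
        ‖WW (fun j : Fin d => p ^ (((j : ℕ) + 1) * n)) (Finset.Icc (1 : ℤ) ((i + 1 : ℕ) : ℤ)) (gv d p n F x)‖ := by
  set R : ℝ → ℝ := fun t => F 0 (x + t) - pp d p n F x t with hR
  have e1 : ∑ i ∈ Finset.range H, ee (F 0 (x + ((i : ℝ) + 1))) =
      ∑ i ∈ Finset.range H, ee (R ((i : ℝ) + 1)) • ee (pp d p n F x ((i : ℝ) + 1)) := by
    refine Finset.sum_congr rfl fun i _ => ?_
    rw [smul_eq_mul, ← ee_add]
    congr 1
    simp only [hR]; ring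
  rw [e1, Finset.sum_range_by_parts (fun i : ℕ => ee (R ((i : ℝ) + 1))) (fun i : ℕ => ee (pp d p n F x ((i : ℝ) + 1)))]
  refine (norm_sub_le _ _).trans (add_le_add ?_ ?_)
  · rw [norm_smul, norm_ee, one_mul, ← WW_pp]
  · refine (norm_sum_le _ _).trans (Finset.sum_le_sum fun i hi => ?_)
    rw [norm_smul, ← WW_pp]
    gcongr
    refine (ee_diff _ _).trans ?_
    gcongr
    have hi' : i + 2 ≤ H := by have := Finset.mem_range.1 hi; omega
    have hi'' : (i : ℝ) + 2 ≤ H := by exact_mod_cast hi'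
    push_cast
    exact phase_diff hp hH hHp hF hlam hA h2 hlH hx hxH (t := (i : ℝ) + 1) (by positivity) (by linarith)

end HB
end

section
namespace HB
open Finset

set_option maxHeartbeats 1000000 in
lemma piece (d : ℕ) (hd : 2 ≤ d) (A : ℝ) (hA : 1 ≤ A) (h : ℝ) (hh : 0 < h) : ∃ C : ℝ, 1 ≤ C ∧
    ∀ (H : ℕ) (F : ℕ → ℝ → ℝ) (a b lam N : ℝ) (P : Finset ℕ), 1 ≤ H →
      Der (d + 1) F a b → 0 < lam → (∀ x ∈ Set.Icc a b, lam ≤ |F (d + 1) x|) →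
      (∀ x ∈ Set.Icc a b, |F (d + 1) x| ≤ A * lam) → 1 ≤ lam * (2 * H : ℝ) ^ (d + 1) → lam * (H : ℝ) ^ (d + 1) ≤ 1 →
      1 ≤ N → A * lam * N ≤ 1 / 2 →
      (∀ x ∈ P, (x : ℝ) ∈ Set.Icc a b) → (∀ x ∈ P, (x : ℝ) + H ≤ b) → (∀ x ∈ P, ∀ y ∈ P, |(x : ℝ) - y| ≤ N) →
      ∑ x ∈ P, ‖∑ i ∈ Finset.range H, ee (F 0 (x + ((i : ℝ) + 1)))‖ ≤
        C * (H * N) * ((H : ℝ) ^ h * (H : ℝ) ^ h * (1 / N + (H / N) ^ 2)) ^ (((2 * rr d : ℕ) : ℝ)⁻¹) := by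
  obtain ⟨p, hp, hne, C2, hC2, hmv⟩ := mv2 d (by omega) h hh
  obtain ⟨C1, hC1, hpairs⟩ := pairs_bound d hd A hA h hh
  have hr := rr_pos (show 1 ≤ d by omega)
  obtain ⟨r2, hr2⟩ : ∃ r2, r2 = 2 * rr d := ⟨_, rfl⟩
  have hr20 : r2 ≠ 0 := by omega
  obtain ⟨K, hK⟩ : ∃ K : ℝ, K = 2 ^ r2 * C1 * C2 := ⟨_, rfl⟩
  have hK1 : 1 ≤ K := by
    rw [hK]
    exact one_le_mul_of_one_le_of_one_le (one_le_mul_of_one_le_of_one_le (one_le_pow₀ (by norm_num)) hC1) hC2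
  have hKr : 1 ≤ K ^ ((r2 : ℝ)⁻¹) := Real.one_le_rpow hK1 (by positivity)
  have hpi := Real.pi_pos
  refine ⟨(1 + 2 * Real.pi * (A + d ^ 2)) * K ^ ((r2 : ℝ)⁻¹), ?_, ?_⟩
  · refine one_le_mul_of_one_le_of_one_le ?_ hKr
    have : 0 ≤ 2 * Real.pi * (A + d ^ 2) := by positivity
    linarith
  intro H F a b lam N P hH hF hlam h1 h2 hl1 hl2 hN hAN hPab hPb hPN
  obtain ⟨n, hn, hHp, hmv⟩ := hmv H hH
  have hH1 : (1 : ℝ) ≤ H := by exact_mod_cast hH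
  have hN0 : 0 < N := by linarith
  have hPc : (P.card : ℝ) ≤ 2 * N := by
    have : ((P.image (fun x : ℕ => (x : ℤ))).card : ℝ) ≤ N + 1 := by
      apply card_diam _ _ hN0.le
      intro x hx y hy
      obtain ⟨u, hu, rfl⟩ := Finset.mem_image.1 hx
      obtain ⟨v, hv, rfl⟩ := Finset.mem_image.1 hy
      push_cast
      exact (le_abs_self _).trans (hPN u hu v hv)
    rw [Finset.card_image_of_injective _ Nat.cast_injective] at this
    linarith
  have hpr := hpairs p n H F a b lam N P hp hn hH hHp hF hlam h1 h2 hl1 hN hAN hPab hPN hPc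
  rw [← hr2]
  obtain ⟨Y, hY⟩ : ∃ Y, Y = (H : ℝ) ^ h * (H : ℝ) ^ h * (1 / N + (H / N) ^ 2) := ⟨_, rfl⟩
  have hY0 : 0 ≤ Y := by rw [hY]; positivity
  rw [← hY]
  obtain ⟨T, hT⟩ : ∃ T, T = K ^ ((r2 : ℝ)⁻¹) * (H * N) * Y ^ ((r2 : ℝ)⁻¹) := ⟨_, rfl⟩
  have hT0 : 0 ≤ T := by rw [hT]; positivity
  have hTp : T ^ r2 = K * (H * N) ^ r2 * Y := by
    rw [hT, mul_pow, mul_pow, Real.rpow_inv_natCast_pow (by linarith) hr20, Real.rpow_inv_natCast_pow hY0 hr20]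
  have hQ : ∀ u ≤ H, ∑ x ∈ P, ‖WW (fun j : Fin d => p ^ (((j : ℕ) + 1) * n)) (Finset.Icc (1 : ℤ) u) (gv d p n F x)‖ ≤ T := by
    intro u hu
    refine le_of_pow_le_pow_left₀ hr20 hT0 ?_
    have e1 := holder_count P (gv d p n F) (fun g => ‖WW (fun j : Fin d => p ^ (((j : ℕ) + 1) * n)) (Finset.Icc (1 : ℤ) u) g‖)
      (fun _ => norm_nonneg _) (rr d) hr
    rw [← hr2] at e1
    refine e1.trans ?_
    have e2 := hmv u hu
    rw [← hr2] at e2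
    calc _ ≤ (2 * N) ^ (r2 - 2) * (C1 * (N + (H : ℝ) ^ 2) * (H : ℝ) ^ h) * (C2 * (H : ℝ) ^ h * (H : ℝ) ^ r2) := by
          gcongr
      _ ≤ (2 ^ r2 * N ^ (r2 - 2)) * (C1 * (N + (H : ℝ) ^ 2) * (H : ℝ) ^ h) * (C2 * (H : ℝ) ^ h * (H : ℝ) ^ r2) := by
          rw [mul_pow]
          gcongr
          · norm_num
          · omega
      _ = T ^ r2 := by
          rw [hTp, hK, hY, mul_pow]
          have : N ^ r2 = N ^ (r2 - 2) * N ^ 2 := by rw [← pow_add]; congr 1; omega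
          rw [this]
          field_simp
  calc _ ≤ ∑ x ∈ P, (‖WW (fun j : Fin d => p ^ (((j : ℕ) + 1) * n)) (Finset.Icc (1 : ℤ) H) (gv d p n F x)‖ +
      ∑ i ∈ Finset.range (H - 1), 2 * Real.pi * ((A + d ^ 2) / H) *
        ‖WW (fun j : Fin d => p ^ (((j : ℕ) + 1) * n)) (Finset.Icc (1 : ℤ) ((i + 1 : ℕ) : ℤ)) (gv d p n F x)‖) :=
        Finset.sum_le_sum fun x hx => local_sum hp hH hHp hF hlam hA h2 hl2 (hPab x hx) (hPb x hx)
    _ ≤ T + ∑ i ∈ Finset.range (H - 1), 2 * Real.pi * ((A + d ^ 2) / H) * T := by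
        rw [Finset.sum_add_distrib, Finset.sum_comm]
        refine add_le_add (hQ H le_rfl) (Finset.sum_le_sum fun i hi => ?_)
        rw [← Finset.mul_sum]
        gcongr
        exact hQ (i + 1) (by have := Finset.mem_range.1 hi; omega)
    _ ≤ T + H * (2 * Real.pi * ((A + d ^ 2) / H) * T) := by
        rw [Finset.sum_const, Finset.card_range, nsmul_eq_mul]
        gcongr
        omega
    _ = (1 + 2 * Real.pi * (A + d ^ 2)) * T := by
        have : (H : ℝ) ≠ 0 := by linarith
        field_simp
    _ = _ := by rw [hT]; ring

set_option maxHeartbeats 1000000 in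
lemma pieces (d : ℕ) (hd : 2 ≤ d) (A : ℝ) (hA : 1 ≤ A) (h : ℝ) (hh : 0 < h) : ∃ C : ℝ, 1 ≤ C ∧
    ∀ (H : ℕ) (F : ℕ → ℝ → ℝ) (a b lam : ℝ) (P : Finset ℕ), 1 ≤ H → 1 ≤ a → b ≤ 2 * a → (H : ℝ) ≤ a →
      Der (d + 1) F a b → 0 < lam → A * lam ≤ 1 / 2 → (∀ x ∈ Set.Icc a b, lam ≤ |F (d + 1) x|) →
      (∀ x ∈ Set.Icc a b, |F (d + 1) x| ≤ A * lam) → 1 ≤ lam * (2 * H : ℝ) ^ (d + 1) → lam * (H : ℝ) ^ (d + 1) ≤ 1 →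
      (∀ x ∈ P, (x : ℝ) ∈ Set.Icc a b) → (∀ x ∈ P, (x : ℝ) + H ≤ b) →
      ∑ x ∈ P, ‖∑ i ∈ Finset.range H, ee (F 0 (x + ((i : ℝ) + 1)))‖ ≤
        C * (H * a) * (a ^ h * a ^ h * (lam + 1 / a + (H / a) ^ 2)) ^ (((2 * rr d : ℕ) : ℝ)⁻¹) := by
  obtain ⟨C, hC, hpc⟩ := piece d hd A hA h hh
  obtain ⟨K, hK⟩ : ∃ K : ℝ, K = 2 * A + 4 * A ^ 2 + 1 := ⟨_, rfl⟩
  have hK1 : 1 ≤ K := by rw [hK]; nlinarith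
  obtain ⟨s, hs⟩ : ∃ s : ℝ, s = ((2 * rr d : ℕ) : ℝ)⁻¹ := ⟨_, rfl⟩
  have hs0 : 0 ≤ s := by rw [hs]; positivity
  refine ⟨2 * C * K ^ s, ?_, ?_⟩
  · have := one_le_mul_of_one_le_of_one_le hC (Real.one_le_rpow hK1 hs0)
    linarith
  intro H F a b lam P hH ha hb hHa hF hlam hAl h1 h2 hl1 hl2 hPab hPb
  have hH1 : (1 : ℝ) ≤ H := by exact_mod_cast hH
  have ha0 : 0 < a := by linarith
  obtain ⟨N, hN⟩ : ∃ N, N = min a (1 / (2 * (A * lam))) := ⟨_, rfl⟩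
  have hAl0 : 0 < A * lam := by positivity
  have hNa : N ≤ a := hN ▸ min_le_left _ _
  have hNl : N ≤ 1 / (2 * (A * lam)) := hN ▸ min_le_right _ _
  have hN1 : 1 ≤ N := by
    rw [hN, le_min_iff]
    refine ⟨ha, ?_⟩
    rw [le_div_iff₀ (by positivity)]
    linarith
  have hN0 : 0 < N := by linarith
  have hAN : A * lam * N ≤ 1 / 2 := by
    rw [le_div_iff₀ (by positivity)] at hNl
    linarith
  -- 1/N bounds
  have hY : 1 / N + (H / N) ^ 2 ≤ K * (lam + 1 / a + (H / a) ^ 2) := by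
    have hKA : 2 * A + 4 * A ^ 2 ≤ K := by rw [hK]; linarith
    have p1 : 0 ≤ 1 / a := by positivity
    have p2 : 0 ≤ ((H : ℝ) / a) ^ 2 := by positivity
    rcases min_choice a (1 / (2 * (A * lam))) with e | e
    · rw [← hN] at e
      rw [e]
      nlinarith
    · rw [← hN] at e
      have e1 : 1 / N = 2 * (A * lam) := by rw [e, one_div_one_div]
      have e2 : (H : ℝ) / N = H * (2 * (A * lam)) := by rw [← e1]; ring
      have e3 : lam * (H : ℝ) ^ 2 ≤ 1 := by
        refine le_trans ?_ hl2
        have := pow_le_pow_right₀ hH1 (show 2 ≤ d + 1 by omega)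
        gcongr
      rw [e1, e2]
      calc 2 * (A * lam) + (H * (2 * (A * lam))) ^ 2 = 2 * A * lam + 4 * A ^ 2 * lam * (lam * (H : ℝ) ^ 2) := by ring
        _ ≤ 2 * A * lam + 4 * A ^ 2 * lam * 1 := by gcongr
        _ = (2 * A + 4 * A ^ 2) * lam := by ring
        _ ≤ K * lam := by gcongr
        _ ≤ _ := by nlinarith
  -- splitting
  have hmaps : ∀ x ∈ P, ⌊((x : ℝ) - a) / N⌋₊ ∈ Finset.range (⌊a / N⌋₊ + 1) := by
    intro x hx
    rw [Finset.mem_range, Nat.lt_succ_iff]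
    apply Nat.floor_le_floor
    gcongr
    linarith [(hPab x hx).2]
  rw [← Finset.sum_fiberwise_of_maps_to hmaps]
  have hterm : ∀ i ∈ Finset.range (⌊a / N⌋₊ + 1), ∑ x ∈ P.filter (fun x : ℕ => ⌊((x : ℝ) - a) / N⌋₊ = i),
      ‖∑ i ∈ Finset.range H, ee (F 0 (x + ((i : ℝ) + 1)))‖ ≤
      C * (H * N) * ((H : ℝ) ^ h * (H : ℝ) ^ h * (1 / N + (H / N) ^ 2)) ^ s := by
    intro i _
    rw [hs]
    refine hpc H F a b lam N _ hH hF hlam h1 h2 hl1 hl2 hN1 hAN (fun x hx => hPab x (Finset.mem_filter.1 hx).1)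
      (fun x hx => hPb x (Finset.mem_filter.1 hx).1) ?_
    have key : ∀ x ∈ P.filter (fun x : ℕ => ⌊((x : ℝ) - a) / N⌋₊ = i), i * N ≤ (x : ℝ) - a ∧ (x : ℝ) - a ≤ i * N + N := by
      intro x hx
      obtain ⟨hx, e⟩ := Finset.mem_filter.1 hx
      have q0 : 0 ≤ ((x : ℝ) - a) / N := div_nonneg (by linarith [(hPab x hx).1]) hN0.le
      have q1 := Nat.floor_le q0
      have q2 := Nat.lt_floor_add_one (((x : ℝ) - a) / N)
      rw [e] at q1 q2
      rw [le_div_iff₀ hN0] at q1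
      rw [div_lt_iff₀ hN0] at q2
      exact ⟨q1, by linarith⟩
    intro x hx y hy
    have := key x hx
    have := key y hy
    rw [abs_le]
    constructor <;> linarith
  refine (Finset.sum_le_sum hterm).trans ?_
  rw [Finset.sum_const, Finset.card_range, nsmul_eq_mul, ← hs]
  have hcnt : ((⌊a / N⌋₊ + 1 : ℕ) : ℝ) ≤ 2 * (a / N) := by
    have q1 := Nat.floor_le (show 0 ≤ a / N by positivity)
    have q2 : 1 ≤ a / N := by rw [le_div_iff₀ hN0]; linarith
    push_cast
    linarith
  calc _ ≤ (2 * (a / N)) * (C * (H * N) * (a ^ h * a ^ h * (K * (lam + 1 / a + (H / a) ^ 2))) ^ s) := by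
        gcongr
    _ = (2 * (a / N)) * (C * (H * N) * (K ^ s * (a ^ h * a ^ h * (lam + 1 / a + (H / a) ^ 2)) ^ s)) := by
        have hx : a ^ h * a ^ h * (K * (lam + 1 / a + ((H : ℝ) / a) ^ 2))
            = K * (a ^ h * a ^ h * (lam + 1 / a + ((H : ℝ) / a) ^ 2)) := by ring
        rw [hx, Real.mul_rpow (by linarith) (by positivity)]
    _ = _ := by field_simp

end HB
end

namespace HB
open Finset

lemma shift_avg (g : ℕ → ℂ) (hg : ∀ n, ‖g n‖ ≤ 1) (A B H : ℕ) :
    H * ‖∑ n ∈ Finset.Ioc A B, g n‖ ≤ H * H + ∑ x ∈ Finset.Ioc A (B - H), ‖∑ i ∈ Finset.range H, g (x + (i + 1))‖ := by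
  have hone : ∀ i ∈ Finset.range H, ‖∑ n ∈ Finset.Ioc A B, g n‖ ≤ H + 0 ∨ True := fun _ _ => Or.inr trivial
  have hbd : ∀ s : Finset ℕ, ‖∑ n ∈ s, g n‖ ≤ s.card := by
    intro s
    refine (norm_sum_le _ _).trans ((Finset.sum_le_sum fun n _ => hg n).trans ?_)
    simp
  by_cases hc : B < A + H
  · have h1 := hbd (Finset.Ioc A B)
    rw [Nat.card_Ioc] at h1
    have h2 : ((B - A : ℕ) : ℝ) ≤ H := by exact_mod_cast (by omega : B - A ≤ H)
    have h3 : 0 ≤ ∑ x ∈ Finset.Ioc A (B - H), ‖∑ i ∈ Finset.range H, g (x + (i + 1))‖ :=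
      Finset.sum_nonneg fun _ _ => norm_nonneg _
    have h4 : (H : ℝ) * ‖∑ n ∈ Finset.Ioc A B, g n‖ ≤ H * H := by
      gcongr
      exact h1.trans h2
    linarith
  · push Not at hc
    have hi : ∀ i ∈ Finset.range H, ‖∑ n ∈ Finset.Ioc A B, g n - ∑ x ∈ Finset.Ioc A (B - H), g (x + (i + 1))‖ ≤ H := by
      intro i hi
      have hiH := Finset.mem_range.1 hi
      have e1 : ∑ x ∈ Finset.Ioc A (B - H), g (x + (i + 1)) = ∑ x ∈ (Finset.Ioc A (B - H)).image (fun x => x + (i + 1)), g x := by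
        rw [Finset.sum_image]
        intro x _ y _ h
        simpa using h
      have hsub : (Finset.Ioc A (B - H)).image (fun x => x + (i + 1)) ⊆ Finset.Ioc A B := by
        intro x hx
        obtain ⟨y, hy, rfl⟩ := Finset.mem_image.1 hx
        rw [Finset.mem_Ioc] at hy ⊢
        omega
      rw [e1, ← Finset.sum_sdiff hsub, add_sub_cancel_right]
      refine (hbd _).trans ?_
      rw [Finset.card_sdiff_of_subset hsub, Finset.card_image_of_injective _ (fun x y h => by simpa using h), Nat.card_Ioc, Nat.card_Ioc]
      exact_mod_cast (by omega : B - A - (B - H - A) ≤ H)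
    have e2 : (H : ℂ) * ∑ n ∈ Finset.Ioc A B, g n =
        ∑ i ∈ Finset.range H, (∑ n ∈ Finset.Ioc A B, g n - ∑ x ∈ Finset.Ioc A (B - H), g (x + (i + 1))) +
        ∑ x ∈ Finset.Ioc A (B - H), ∑ i ∈ Finset.range H, g (x + (i + 1)) := by
      rw [Finset.sum_sub_distrib, Finset.sum_comm (s := Finset.Ioc A (B - H)), sub_add_cancel]
      simp
    have e3 : (H : ℝ) * ‖∑ n ∈ Finset.Ioc A B, g n‖ = ‖(H : ℂ) * ∑ n ∈ Finset.Ioc A B, g n‖ := by simp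
    rw [e3, e2]
    refine (norm_add_le _ _).trans (add_le_add ?_ (norm_sum_le _ _))
    refine (norm_sum_le _ _).trans ((Finset.sum_le_sum hi).trans ?_)
    simp

lemma der_of (k : ℕ) (f : ℝ → ℝ) (a b : ℝ) (hab : a < b) (hf : ContDiffOn ℝ k f (Set.Icc a b)) :
    Der k (fun j => iteratedDerivWithin j f (Set.Icc a b)) a b := by
  intro j hj x hx
  have h1 := hf.differentiableOn_iteratedDerivWithin (m := j) (by exact_mod_cast hj) (uniqueDiffOn_Icc hab)
  have h2 := (h1 x hx).hasDerivWithinAt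
  simp only [iteratedDerivWithin_succ]
  exact h2

lemma rpow3 (x y z s : ℝ) (hx : 0 ≤ x) (hy : 0 ≤ y) (hz : 0 ≤ z) (hs : 0 ≤ s) (hs1 : s ≤ 1) :
    (x + y + z) ^ s ≤ x ^ s + y ^ s + z ^ s :=
  (Real.rpow_add_le_add_rpow (by positivity) hz hs hs1).trans
    (add_le_add (Real.rpow_add_le_add_rpow hx hy hs hs1) le_rfl)

end HB

theorem heath_brown_kth_derivative (k : ℕ) (hk : 3 ≤ k) (A : ℝ) (hA : 1 ≤ A)
    (ε : ℝ) (hε : 0 < ε) :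
    ∃ C > (0 : ℝ), ∀ (a b : ℝ) (f : ℝ → ℝ) (lam : ℝ),
      1 ≤ a → a < b → b ≤ 2 * a → 0 < lam →
      ContDiffOn ℝ k f (Set.Icc a b) →
      (∀ x ∈ Set.Icc a b,
        lam ≤ |iteratedDerivWithin k f (Set.Icc a b) x| ∧
        |iteratedDerivWithin k f (Set.Icc a b) x| ≤ A * lam) →
      ‖∑ n ∈ Finset.Ioc ⌊a⌋₊ ⌊b⌋₊, eexp (f n)‖ ≤
        C * a ^ (1 + ε) *
          (lam ^ ((1 : ℝ) / ((k : ℝ) * ((k : ℝ) - 1))) +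
            a ^ (-(1 : ℝ) / ((k : ℝ) * ((k : ℝ) - 1))) +
            a ^ (-(2 : ℝ) / ((k : ℝ) * ((k : ℝ) - 1))) *
              lam ^ (-(2 : ℝ) / ((k : ℝ) ^ 2 * ((k : ℝ) - 1)))) := by
  obtain ⟨d, rfl⟩ : ∃ d, k = d + 1 := ⟨k - 1, by omega⟩
  have hd : 2 ≤ d := by omega
  have hd' : (2 : ℝ) ≤ d := by exact_mod_cast hd
  obtain ⟨C0, hC0, hmain⟩ := HB.pieces d hd A hA (ε / 2) (by positivity)
  obtain ⟨s, hs⟩ : ∃ s : ℝ, s = (((d : ℝ) + 1) * d)⁻¹ := ⟨_, rfl⟩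
  have hs0 : 0 < s := by rw [hs]; positivity
  have hs6 : s ≤ 1 / 6 := by
    rw [hs, inv_eq_one_div]
    apply one_div_le_one_div_of_le <;> nlinarith
  have hsr : (((2 * HB.rr d : ℕ) : ℝ)⁻¹) = s := by
    rw [hs, HB.two_rr]; push_cast; ring
  have hA0 : 0 < A := by linarith
  obtain ⟨C, hC⟩ : ∃ C : ℝ, C = 2 * (2 * A) ^ s + 2 + C0 := ⟨_, rfl⟩
  have hCa : 0 ≤ 2 * (2 * A) ^ s := by positivity
  have hC1 : 2 * (2 * A) ^ s ≤ C := by rw [hC]; linarith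
  have hC2 : 2 + C0 ≤ C := by rw [hC]; linarith
  have hCpos : 0 < C := by linarith
  refine ⟨C, hCpos, ?_⟩
  intro a b f lam ha hab hb hlam hf hbd
  have ha0 : 0 < a := by linarith
  have hk1 : (((d + 1 : ℕ) : ℝ)) - 1 = d := by push_cast; ring
  obtain ⟨L, hL⟩ : ∃ L : ℝ, L = lam ^ (-(((d + 1 : ℕ) : ℝ)⁻¹)) := ⟨_, rfl⟩
  have hL0 : 0 < L := by rw [hL]; positivity
  have hLk : lam * L ^ (d + 1) = 1 := by
    rw [hL, Real.rpow_neg hlam.le, inv_pow, Real.rpow_inv_natCast_pow hlam.le (by omega)]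
    exact mul_inv_cancel₀ hlam.ne'
  have e1 : (1 : ℝ) / (((d + 1 : ℕ) : ℝ) * (((d + 1 : ℕ) : ℝ) - 1)) = s := by
    rw [hk1, hs]; push_cast; rw [one_div]
  have e2 : a ^ (-(1 : ℝ) / (((d + 1 : ℕ) : ℝ) * (((d + 1 : ℕ) : ℝ) - 1))) = (1 / a) ^ s := by
    rw [neg_div, e1, Real.rpow_neg ha0.le, one_div, Real.inv_rpow ha0.le]
  have e3 : a ^ (-(2 : ℝ) / (((d + 1 : ℕ) : ℝ) * (((d + 1 : ℕ) : ℝ) - 1))) *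
      lam ^ (-(2 : ℝ) / (((d + 1 : ℕ) : ℝ) ^ 2 * (((d + 1 : ℕ) : ℝ) - 1))) = (L / a) ^ (2 * s) := by
    rw [Real.div_rpow hL0.le ha0.le, hL, ← Real.rpow_mul hlam.le,
      div_eq_mul_inv (lam ^ _) (a ^ _), ← Real.rpow_neg ha0.le, mul_comm]
    congr 2
    · rw [hk1, hs]; push_cast; field_simp
    · rw [hk1, hs]; push_cast; field_simp
  rw [e1, e2, e3]
  have t1 : 0 ≤ lam ^ s := by positivity
  have t2 : 0 ≤ (1 / a) ^ s := by positivity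
  have t3 : 0 ≤ (L / a) ^ (2 * s) := by positivity
  obtain ⟨Z, hZ⟩ : ∃ Z, Z = lam ^ s + (1 / a) ^ s + (L / a) ^ (2 * s) := ⟨_, rfl⟩
  rw [← hZ]
  have haε : a ^ (1 + ε) = a * a ^ ε := by rw [Real.rpow_add ha0, Real.rpow_one]
  have hae1 : 1 ≤ a ^ ε := Real.one_le_rpow ha hε.le
  have hge : ∀ n : ℕ, ‖eexp (f n)‖ ≤ 1 := fun n => (HB.norm_ee (f n)).le
  have htriv : ‖∑ n ∈ Finset.Ioc ⌊a⌋₊ ⌊b⌋₊, eexp (f n)‖ ≤ 2 * a := by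
    have h1 : ‖∑ n ∈ Finset.Ioc ⌊a⌋₊ ⌊b⌋₊, eexp (f n)‖ ≤ ((Finset.Ioc ⌊a⌋₊ ⌊b⌋₊).card : ℝ) := by
      refine (norm_sum_le _ _).trans ((Finset.sum_le_sum fun n _ => hge n).trans ?_)
      simp
    rw [Nat.card_Ioc, Nat.cast_sub (Nat.floor_le_floor hab.le)] at h1
    have h2 := Nat.floor_le (show 0 ≤ b by linarith)
    have h3 := Nat.lt_floor_add_one a
    linarith
  by_cases hc1 : 1 / 2 < A * lam
  · have h1 : 1 ≤ (2 * A) ^ s * lam ^ s := by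
      rw [← Real.mul_rpow (by positivity) hlam.le]
      apply Real.one_le_rpow _ hs0.le
      linarith
    calc _ ≤ 2 * a := htriv
      _ ≤ 2 * a * ((2 * A) ^ s * lam ^ s) := le_mul_of_one_le_right (by positivity) h1
      _ = 2 * (2 * A) ^ s * (a * 1) * lam ^ s := by ring
      _ ≤ C * a ^ (1 + ε) * Z := by
        rw [haε]
        gcongr
        rw [hZ]; linarith
  push Not at hc1
  by_cases hc2 : a < L
  · have h1 : 1 ≤ (L / a) ^ (2 * s) := by
      apply Real.one_le_rpow _ (by positivity)
      rw [le_div_iff₀ ha0]; linarith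
    calc _ ≤ 2 * a := htriv
      _ = 2 * (a * 1) * 1 := by ring
      _ ≤ C * a ^ (1 + ε) * Z := by
        rw [haε]
        gcongr
        · linarith
        · rw [hZ]; linarith
  push Not at hc2
  -- the main case
  have hlam1 : lam ≤ 1 := by nlinarith
  have hL1 : 1 ≤ L := by
    by_contra hlt
    push Not at hlt
    have : L ^ (d + 1) < 1 := pow_lt_one₀ hL0.le hlt (by omega)
    nlinarith
  obtain ⟨H, hH⟩ : ∃ H : ℕ, H = ⌊L⌋₊ := ⟨_, rfl⟩
  have hH1 : 1 ≤ H := by rw [hH]; exact Nat.le_floor (by exact_mod_cast hL1)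
  have hH1' : (1 : ℝ) ≤ H := by exact_mod_cast hH1
  have hHL : (H : ℝ) ≤ L := by rw [hH]; exact Nat.floor_le hL0.le
  have hLH : L ≤ 2 * H := by
    have := Nat.lt_floor_add_one L
    rw [← hH] at this
    linarith
  have hH0 : (0 : ℝ) < H := by linarith
  have hl1 : 1 ≤ lam * (2 * H : ℝ) ^ (d + 1) := by
    rw [← hLk]; gcongr
  have hl2 : lam * (H : ℝ) ^ (d + 1) ≤ 1 := by
    rw [← hLk]; gcongr
  have hP : ∀ x ∈ Finset.Ioc ⌊a⌋₊ (⌊b⌋₊ - H), a ≤ (x : ℝ) ∧ (x : ℝ) + H ≤ b := by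
    intro x hx
    obtain ⟨q1, q2⟩ := Finset.mem_Ioc.1 hx
    refine ⟨((Nat.floor_lt ha0.le).1 q1).le, ?_⟩
    have q3 : x + H ≤ ⌊b⌋₊ := by omega
    have q4 := Nat.floor_le (show 0 ≤ b by linarith)
    have q5 : (x : ℝ) + H ≤ ⌊b⌋₊ := by exact_mod_cast q3
    linarith
  have hm := hmain H (fun j => iteratedDerivWithin j f (Set.Icc a b)) a b lam (Finset.Ioc ⌊a⌋₊ (⌊b⌋₊ - H)) hH1 ha hb
    (hHL.trans hc2) (HB.der_of _ f a b hab hf) hlam hc1 (fun x hx => (hbd x hx).1) (fun x hx => (hbd x hx).2) hl1 hl2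
    (fun x hx => ⟨(hP x hx).1, by linarith [(hP x hx).2]⟩) (fun x hx => (hP x hx).2)
  have hsh := HB.shift_avg (fun n => eexp (f n)) hge ⌊a⌋₊ ⌊b⌋₊ H
  have heq : ∑ x ∈ Finset.Ioc ⌊a⌋₊ (⌊b⌋₊ - H), ‖∑ i ∈ Finset.range H, eexp (f ((x + (i + 1) : ℕ) : ℝ))‖ =
      ∑ x ∈ Finset.Ioc ⌊a⌋₊ (⌊b⌋₊ - H), ‖∑ i ∈ Finset.range H,
        HB.ee (iteratedDerivWithin 0 f (Set.Icc a b) (x + ((i : ℝ) + 1)))‖ := by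
    refine Finset.sum_congr rfl fun x _ => ?_
    congr 1
    refine Finset.sum_congr rfl fun i _ => ?_
    rw [iteratedDerivWithin_zero]
    push_cast
    rfl
  rw [hsr] at hm
  replace hm := heq.le.trans hm
  have hZb : (a ^ (ε / 2) * a ^ (ε / 2) * (lam + 1 / a + (H / a) ^ 2)) ^ s ≤ a ^ ε * Z := by
    have q1 : a ^ (ε / 2) * a ^ (ε / 2) = a ^ ε := by rw [← Real.rpow_add ha0]; congr 1; ring
    rw [q1, Real.mul_rpow (by positivity) (by positivity)]
    have q2 : (a ^ ε) ^ s ≤ a ^ ε := by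
      calc (a ^ ε) ^ s ≤ (a ^ ε) ^ (1 : ℝ) := Real.rpow_le_rpow_of_exponent_le hae1 (by linarith)
        _ = a ^ ε := Real.rpow_one _
    have q3 : (lam + 1 / a + ((H : ℝ) / a) ^ 2) ^ s ≤ Z := by
      have q4 := HB.rpow3 lam (1 / a) ((L / a) ^ 2) s hlam.le (by positivity) (by positivity) hs0.le (by linarith)
      have q5 : ((L / a) ^ 2) ^ s = (L / a) ^ (2 * s) := by
        rw [Real.rpow_mul (by positivity)]; norm_num
      rw [q5, ← hZ] at q4
      refine le_trans ?_ q4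
      gcongr
    gcongr
  have hHZ : (H : ℝ) ≤ a * a ^ ε * Z := by
    have q0 : 0 < L / a := by positivity
    have q1 : L / a ≤ 1 := by rw [div_le_one ha0]; exact hc2
    have q2 : L / a ≤ (L / a) ^ (2 * s) := by
      calc L / a = (L / a) ^ (1 : ℝ) := (Real.rpow_one _).symm
        _ ≤ _ := Real.rpow_le_rpow_of_exponent_ge q0 q1 (by linarith)
    calc (H : ℝ) ≤ L := hHL
      _ = a * 1 * (L / a) := by field_simp
      _ ≤ a * a ^ ε * Z := by
        gcongr
        rw [hZ]; linarith
  have hfin : (H : ℝ) * ‖∑ n ∈ Finset.Ioc ⌊a⌋₊ ⌊b⌋₊, eexp (f n)‖ ≤ H * (C * a ^ (1 + ε) * Z) := by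
    have hZ0 : 0 ≤ Z := by rw [hZ]; positivity
    calc _ ≤ _ := hsh
      _ ≤ H * H + C0 * (H * a) * (a ^ ε * Z) := by
        refine add_le_add le_rfl (hm.trans ?_)
        gcongr
      _ ≤ H * (a * a ^ ε * Z) + C0 * (H * a) * (a ^ ε * Z) := by gcongr
      _ = H * ((1 + C0) * (a * a ^ ε) * Z) := by ring
      _ ≤ _ := by
        rw [haε]
        gcongr
        linarith
  exact le_of_mul_le_mul_left hfin hH0
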